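/- arXiv:2507.20303 — 2 statements merged into one kernel-verified Lean document; each statement's English description precedes it below -/
import Mathlib

section
/- Let Λ = ω₁ℤ + ω₂ℤ with ω₁ > 0 real, Im ω₂ > 0, and ω₁·Im ω₂ = π/2. For N ≥ 1 let Λ_N be the superlattice generated by ω₁' = (⌊√N⌋ω₁ + ω₂)/N and ω₂' = (−(N−⌊√N⌋²)ω₁ + ⌊√N⌋ω₂)/N, so that Λ ⊆ Λ_N with [Λ_N : Λ] = N, and let Λ'_N = √N·Λ_N, a lattice of covolume π/2. Let ζ₁, …, ζ_N ∈ ℂ be a complete set of representatives of the cosets of Λ in Λ_N. Then for all z ∈ ℂ∖Λ_N one has Σ_{j=1}^{N} U_{ℂ/Λ}(z, ζ_j) = log|σ_*^{Λ'_N}(√N·z)| − N|z|² − A_{Λ'_N}, where σ_*^{Λ'_N} and A_{Λ'_N} are the modified sigma function and the normalizing constant associated with the lattice Λ'_N. -/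
open MeasureTheory

/-- The lattice `Λ = ω₁ℤ + ω₂ℤ` as a subset of `ℂ`. -/
def latticeSet (ω₁ ω₂ : ℂ) : Set ℂ :=
  {w : ℂ | ∃ m n : ℤ, w = (m : ℂ) * ω₁ + (n : ℂ) * ω₂}

/-- The Weierstrass sigma function of the lattice `ω₁ℤ + ω₂ℤ`. -/
noncomputable def wSigma (ω₁ ω₂ : ℂ) (z : ℂ) : ℂ :=
  z * ∏' p : {p : ℤ × ℤ // p ≠ 0},
      (1 - z / ((p.1.1 : ℂ) * ω₁ + (p.1.2 : ℂ) * ω₂)) *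
        Complex.exp (z / ((p.1.1 : ℂ) * ω₁ + (p.1.2 : ℂ) * ω₂) +
          z ^ 2 / (2 * ((p.1.1 : ℂ) * ω₁ + (p.1.2 : ℂ) * ω₂) ^ 2))

/-- The Weierstrass zeta function `ζ = σ'/σ`. -/
noncomputable def wZeta (ω₁ ω₂ : ℂ) (z : ℂ) : ℂ :=
  deriv (wSigma ω₁ ω₂) z / wSigma ω₁ ω₂ z

/-- The quasi-period `λ₁ = 2ζ(ω₁/2)`. -/
noncomputable def lambda1 (ω₁ ω₂ : ℂ) : ℂ := 2 * wZeta ω₁ ω₂ (ω₁ / 2)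

/-- The constant `b = 1 − λ₁/(2ω₁)`. -/
noncomputable def bconst (ω₁ ω₂ : ℂ) : ℂ := 1 - lambda1 ω₁ ω₂ / (2 * ω₁)

/-- The modified Weierstrass sigma function `σ_*(z) = e^{b z²} σ(z)`. -/
noncomputable def sigmaStar (ω₁ ω₂ : ℂ) (z : ℂ) : ℂ :=
  Complex.exp (bconst ω₁ ω₂ * z ^ 2) * wSigma ω₁ ω₂ z

/-- A fundamental domain of the lattice `ω₁ℤ + ω₂ℤ`. -/
def fundDomain (ω₁ ω₂ : ℂ) : Set ℂ :=
  (fun p : ℝ × ℝ => (p.1 : ℂ) * ω₁ + (p.2 : ℂ) * ω₂) ''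
    (Set.Ico (0 : ℝ) 1 ×ˢ Set.Ico (0 : ℝ) 1)

/-- The normalizing constant `A_Λ`. -/
noncomputable def Aconst (ω₁ ω₂ : ℂ) : ℝ :=
  2 / Real.pi * ∫ z in fundDomain ω₁ ω₂, (Real.log ‖sigmaStar ω₁ ω₂ z‖ - ‖z‖ ^ 2)

/-- The unipolar Green function of the torus `ℂ/Λ`. -/
noncomputable def Utorus (ω₁ ω₂ : ℂ) (z w : ℂ) : ℝ :=
  Real.log ‖sigmaStar ω₁ ω₂ (z - w)‖ - ‖z - w‖ ^ 2 - Aconst ω₁ ω₂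

/-- The monic first degree pseudopolynomial on the torus with root `α`. -/
noncomputable def pseudoPoly (ω₁ ω₂ : ℂ) (α z : ℂ) : ℂ :=
  Complex.exp (2 * Complex.I * ((((starRingEnd ℂ) α) * z).im : ℂ)) *
    (Complex.exp (-((‖z - α‖ ^ 2 : ℝ) : ℂ)) * sigmaStar ω₁ ω₂ (z - α))


section
open MeasureTheory Filter Topology

namespace SG

noncomputable def fac (l z : ℂ) : ℂ := (1 - z / l) * Complex.exp (z / l + z ^ 2 / (2 * l ^ 2))

lemma E_bound (x : ℂ) (R : ℝ) (hx : ‖x‖ ≤ R) :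
    ‖(1 - x) * Complex.exp (x + x ^ 2 / 2) - 1‖ ≤ Real.exp (R + R ^ 2 / 2) * ‖x‖ ^ 3 := by
  have hd : ∀ y : ℂ, HasDerivAt (fun y : ℂ => (1 - y) * Complex.exp (y + y ^ 2 / 2))
      (-(y ^ 2) * Complex.exp (y + y ^ 2 / 2)) y := by
    intro y
    have h1 : HasDerivAt (fun y : ℂ => 1 - y) (-1) y := by
      simpa using (hasDerivAt_id y).const_sub 1
    have h2 : HasDerivAt (fun y : ℂ => y + y ^ 2 / 2) (1 + y) y := by
      convert! (hasDerivAt_id y).add (((hasDerivAt_id y).pow 2).div_const 2) using 1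
      simp
    convert! h1.mul h2.cexp using 1
    ring
  have := (convex_closedBall (0:ℂ) ‖x‖).norm_image_sub_le_of_norm_hasDerivWithin_le
    (f := fun y : ℂ => (1 - y) * Complex.exp (y + y ^ 2 / 2))
    (f' := fun y => (-(y ^ 2) * Complex.exp (y + y ^ 2 / 2)))
    (C := Real.exp (R + R ^ 2 / 2) * ‖x‖ ^ 2) (x := 0) (y := x)
    (fun y _ => (hd y).hasDerivWithinAt) ?_ (by simp) (by simp)
  · simpa [pow_succ, mul_assoc] using this
  · intro y hy
    have hy : ‖y‖ ≤ ‖x‖ := by simpa using hy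
    have hyR := hy.trans hx
    have h0 := norm_nonneg y
    rw [norm_mul, norm_neg, norm_pow, mul_comm]
    have h3 : ‖y + y ^ 2 / 2‖ ≤ R + R ^ 2 / 2 := by
      refine (norm_add_le _ _).trans ?_
      rw [norm_div, norm_pow]
      norm_num
      gcongr
    have h4 : ‖Complex.exp (y + y ^ 2 / 2)‖ ≤ Real.exp (R + R ^ 2 / 2) :=
      (Complex.norm_exp_le_exp_norm _).trans (Real.exp_le_exp.2 h3)
    gcongr

lemma fac_bound (l z : ℂ) (R : ℝ) (hx : ‖z / l‖ ≤ R) :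
    ‖fac l z - 1‖ ≤ Real.exp (R + R ^ 2 / 2) * ‖z / l‖ ^ 3 := by
  convert E_bound (z / l) R hx using 3
  unfold fac
  congr 3
  by_cases hl : l = 0
  · simp [hl]
  · field_simp

variable (L : PeriodPair)

noncomputable def PP (z : ℂ) : ℂ := ∏' l : L.lattice, fac l z

lemma fac_differentiable (l : ℂ) : Differentiable ℂ (fac l) := by
  unfold fac; fun_prop

lemma summable_inv3 : Summable (fun l : L.lattice => ‖(l : ℂ)⁻¹‖ ^ 3) := by
  have := (L.hasSum_sumInvPow 0 (r := 3) (by norm_num)).summable.norm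
  simpa using this

lemma ev_bound (r : ℝ) (hr : 0 ≤ r) : ∀ᶠ l : L.lattice in cofinite, ∀ z ∈ Metric.ball (0:ℂ) r,
    ‖fac l z - 1‖ ≤ Real.exp (r + r ^ 2 / 2) * r ^ 3 * ‖(l : ℂ)⁻¹‖ ^ 3 := by
  have h := (summable_inv3 L).tendsto_cofinite_zero
  filter_upwards [h.eventually (gt_mem_nhds one_pos)] with l hl z hz
  have hl1 : ‖(l:ℂ)⁻¹‖ ≤ 1 := by
    by_contra hc
    push Not at hc
    have := one_lt_pow₀ hc (n := 3) (by norm_num)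
    linarith
  have hz : ‖z‖ ≤ r := by simpa using (Metric.mem_ball.1 hz).le
  have h1 : ‖z / l‖ = ‖z‖ * ‖(l:ℂ)⁻¹‖ := by rw [div_eq_mul_inv, norm_mul]
  refine (fac_bound l z r ?_).trans ?_
  · rw [h1]; nlinarith [norm_nonneg z, norm_nonneg ((l:ℂ)⁻¹)]
  · rw [h1, mul_pow, mul_assoc]
    gcongr

lemma hasProd_ball (r : ℝ) (hr : 0 ≤ r) :
    HasProdLocallyUniformlyOn (fun (l : L.lattice) z => fac l z) (PP L) (Metric.ball 0 r) := by
  have := Summable.hasProdLocallyUniformlyOn_one_add (K := Metric.ball (0:ℂ) r)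
    (f := fun (l : L.lattice) z => fac l z - 1) Metric.isOpen_ball
    ((summable_inv3 L).mul_left (Real.exp (r + r ^ 2 / 2) * r ^ 3)) (ev_bound L r hr)
    (fun i => by have := fac_differentiable i; exact (this.continuous.sub continuous_const).continuousOn)
  simp only [add_sub_cancel] at this
  exact this

lemma hasProd_univ :
    HasProdLocallyUniformlyOn (fun (l : L.lattice) z => fac l z) (PP L) Set.univ := by
  rw [hasProdLocallyUniformlyOn_iff_tendstoLocallyUniformlyOn]
  intro v hv x _
  have := (hasProdLocallyUniformlyOn_iff_tendstoLocallyUniformlyOn.1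
    (hasProd_ball L (‖x‖ + 1) (by positivity))) v hv x (by simp)
  rwa [Metric.isOpen_ball.nhdsWithin_eq (by simp), ← nhdsWithin_univ] at this

lemma PP_differentiable : Differentiable ℂ (PP L) := by
  rw [← differentiableOn_univ]
  refine (hasProdLocallyUniformlyOn_iff_tendstoLocallyUniformlyOn.1 (hasProd_univ L)).differentiableOn
    (Eventually.of_forall fun s => ?_) isOpen_univ
  have : ∀ i : L.lattice, Differentiable ℂ (fac i) := fun i => fac_differentiable i
  fun_prop

lemma PP_zero : PP L 0 = 1 := by simp [PP, fac]

lemma fac_ne_zero {l z : ℂ} (h : l = 0 ∨ z ≠ l) : fac l z ≠ 0 := by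
  unfold fac
  refine mul_ne_zero ?_ (Complex.exp_ne_zero _)
  rcases h with rfl | h
  · simp
  · by_cases hl : l = 0
    · simp [hl]
    · intro h0
      apply h
      field_simp at h0
      linear_combination -h0

lemma PP_ne_zero {z : ℂ} (h : z ∉ L.lattice ∨ z = 0) : PP L z ≠ 0 := by
  have := tprod_one_add_ne_zero_of_summable (f := fun l : L.lattice => fac l z - 1) ?_ ?_
  · simpa [PP] using this
  · intro l
    simp only [add_sub_cancel]
    apply fac_ne_zero
    rcases h with h | rfl
    · right; rintro rfl; exact h l.2
    · exact (eq_or_ne _ _).imp id Ne.symm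
  · refine Summable.of_norm_bounded_eventually ((summable_inv3 L).mul_left
      (Real.exp ((‖z‖+1) + (‖z‖+1) ^ 2 / 2) * (‖z‖+1) ^ 3)) ?_
    filter_upwards [ev_bound L (‖z‖+1) (by positivity)] with l hl
    simpa using hl z (by simp)

lemma PP_eq_zero (l : L.lattice) (hl : (l:ℂ) ≠ 0) : PP L l = 0 := by
  have hm := (hasProd_univ L).hasProd (Set.mem_univ (l:ℂ))
  refine hm.unique (hasProd_zero_of_exists_eq_zero ⟨l, ?_⟩)
  simp [fac, hl]

/-- sigma -/
noncomputable def sg (z : ℂ) : ℂ := z * PP L z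

lemma wSigma_eq : wSigma L.ω₁ L.ω₂ = sg L := by
  funext z
  unfold wSigma sg PP
  congr 1
  rw [← L.latticeEquivProd.symm.toEquiv.tprod_eq (fun l : L.lattice => fac l z)]
  have : ∀ p : ℤ × ℤ, fac ((L.latticeEquivProd.symm.toEquiv p : L.lattice) : ℂ) z =
      fac (p.1 * L.ω₁ + p.2 * L.ω₂) z := by
    intro p
    rw [← L.latticeEquiv_symm_apply]; rfl
  simp_rw [this]
  rw [← tprod_subtype_eq_of_mulSupport_subset (s := {p : ℤ × ℤ | p ≠ 0})]
  · rfl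
  · intro p hp h0
    apply hp
    subst h0
    simp [fac]

lemma sg_differentiable : Differentiable ℂ (sg L) := by
  have := PP_differentiable L
  unfold sg; fun_prop

lemma sg_eq_zero_iff (z : ℂ) : sg L z = 0 ↔ z ∈ L.lattice := by
  constructor
  · intro h
    by_contra hc
    rcases mul_eq_zero.1 h with h | h
    · exact hc (h ▸ L.lattice.zero_mem)
    · exact PP_ne_zero L (Or.inl hc) h
  · intro h
    by_cases h0 : z = 0
    · simp [h0, sg]
    · simp [sg, PP_eq_zero L ⟨z, h⟩ h0]

lemma deriv_sg_zero : deriv (sg L) 0 = 1 := by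
  have h : HasDerivAt (sg L) (1 * PP L 0 + 0 * deriv (PP L) 0) 0 :=
    (hasDerivAt_id (0:ℂ)).mul ((PP_differentiable L) 0).hasDerivAt
  rw [h.deriv, PP_zero]; simp

lemma sg_neg (z : ℂ) : sg L (-z) = - sg L z := by
  unfold sg PP
  rw [← (Equiv.neg L.lattice).tprod_eq]
  simp [fac]

end SG
end

section
open MeasureTheory Filter Topology
namespace SG
variable (L : PeriodPair)

noncomputable def gt (l z : ℂ) : ℂ := 1 / (z - l) + 1 / l + z / l ^ 2

lemma logDeriv_fac {l z : ℂ} (hl : l ≠ 0) (hz : z ≠ l) : logDeriv (fac l) z = gt l z := by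
  have h1 : HasDerivAt (fun z : ℂ => 1 - z / l) (-(1 / l)) z := by
    simpa using ((hasDerivAt_id z).div_const l).const_sub 1
  have h2 : HasDerivAt (fun z : ℂ => z / l + z ^ 2 / (2 * l ^ 2)) (1 / l + z / l ^ 2) z := by
    convert! ((hasDerivAt_id z).div_const l).add (((hasDerivAt_id z).pow 2).div_const (2 * l ^ 2))
      using 1
    simp
    field_simp
  have h : HasDerivAt (fac l) _ z := h1.mul h2.cexp
  rw [logDeriv_apply, h.deriv]
  unfold fac gt
  have h3 : z - l ≠ 0 := sub_ne_zero.2 hz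
  have h4 : l - z ≠ 0 := sub_ne_zero.2 hz.symm
  have h5 := Complex.exp_ne_zero (z / l + z ^ 2 / (2 * l ^ 2))
  have h6 : 1 - z / l ≠ 0 := by
    have : 1 - z / l = (l - z) / l := by field_simp
    rw [this]; positivity
  generalize Complex.exp (z / l + z ^ 2 / (2 * l ^ 2)) = e at *
  rw [div_eq_iff (mul_ne_zero h6 h5)]
  field_simp
  ring

lemma hasDerivAt_gt {l z : ℂ} (hz : z ≠ l) :
    HasDerivAt (gt l) (-(1 / (z - l) ^ 2 - 1 / l ^ 2)) z := by
  have h3 : z - l ≠ 0 := sub_ne_zero.2 hz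
  have h1 : HasDerivAt (fun z : ℂ => (z - l)⁻¹) (-1 / (z - l) ^ 2) z :=
    ((hasDerivAt_id z).sub_const l).inv h3
  have h2 : HasDerivAt (fun z : ℂ => z / l ^ 2) (1 / l ^ 2) z := (hasDerivAt_id z).div_const _
  have := (h1.add_const (1 / l)).add h2
  convert! this using 1
  · funext z; simp [gt]
  · ring

lemma logDeriv_sg {z : ℂ} (hz : z ∉ L.lattice) :
    logDeriv (sg L) z = 1 / z + logDeriv (PP L) z := by
  have h0 : z ≠ 0 := by rintro rfl; exact hz L.lattice.zero_mem
  have := logDeriv_mul (f := fun z : ℂ => z) (g := PP L) z h0 (PP_ne_zero L (Or.inl hz))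
    differentiableAt_id (PP_differentiable L z)
  rw [show sg L = fun z => z * PP L z from rfl, this]
  simp

lemma ne_of_notMem {z : ℂ} (hz : z ∉ L.lattice) (l : L.lattice) : z ≠ l := by
  rintro rfl; exact hz l.2

lemma tendsto_gt {z : ℂ} (hz : z ∉ L.lattice) :
    Tendsto (fun n : Finset L.lattice => ∑ l ∈ n, gt l z) atTop (𝓝 (logDeriv (sg L) z)) := by
  have h   := Complex.logDeriv_tendsto isOpen_univ (Set.mem_univ z) 
    (hasProdLocallyUniformlyOn_iff_tendstoLocallyUniformlyOn.1 (hasProd_univ L))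
    (Eventually.of_forall fun s => by
      have : ∀ i : L.lattice, Differentiable ℂ (fac i) := fun i => fac_differentiable i
      fun_prop) (PP_ne_zero L (Or.inl hz))
  rw [logDeriv_sg L hz]
  refine (h.const_add (1 / z)).congr' ?_
  filter_upwards [eventually_ge_atTop {0}] with n hn
  have h0 : (0 : L.lattice) ∈ n := by simpa using hn
  rw [logDeriv_prod]
  · rw [← Finset.add_sum_erase _ _ h0, ← Finset.add_sum_erase _ (fun l : L.lattice => gt l z) h0]
    have e1 : gt ((0 : L.lattice) : ℂ) z = 1 / z := by simp [gt]
    have e2 : logDeriv (fun x => fac ((0 : L.lattice) : ℂ) x) z = 0 := by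
      have : (fun x => fac ((0 : L.lattice) : ℂ) x) = fun _ => 1 := by funext x; simp [fac]
      rw [this]; simp
    rw [e1, e2, zero_add]
    congr 1
    refine Finset.sum_congr rfl fun l hl => ?_
    have hl0 : (l : ℂ) ≠ 0 := by simpa using (Finset.mem_erase.1 hl).1
    exact logDeriv_fac hl0 (ne_of_notMem L hz l)
  · intro l _; exact fac_ne_zero (Or.inr (ne_of_notMem L hz l))
  · intro l _; exact fac_differentiable l z

lemma hasDerivAt_zeta {z : ℂ} (hz : z ∉ L.lattice) :
    HasDerivAt (logDeriv (sg L)) (-(L.weierstrassP z)) z := by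
  have hs : IsOpen ((L.lattice : Set ℂ)ᶜ) := L.isClosed_lattice.isOpen_compl
  have hP := (hasSumLocallyUniformlyOn_iff_tendstoLocallyUniformlyOn.1
    (L.hasSumLocallyUniformly_weierstrassP.hasSumLocallyUniformlyOn (s := (L.lattice : Set ℂ)ᶜ)))
  refine hasDerivAt_of_tendstoLocallyUniformlyOn (f := fun (n : Finset L.lattice) z => ∑ l ∈ n, gt l z)
    (g' := fun z => -(L.weierstrassP z)) (l := atTop) hs hP.neg
    (Eventually.of_forall fun n x hx => ?_) (fun x hx => tendsto_gt L hx) hz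
  have := HasDerivAt.fun_sum (u := n) (fun (l : L.lattice) _ => hasDerivAt_gt (ne_of_notMem L hx l))
  convert! this using 1
  simp

lemma lattice_countable : (L.lattice : Set ℂ).Countable := by
  have : Countable L.lattice := L.latticeEquivProd.toEquiv.countable_iff.2 inferInstance
  exact Set.countable_coe_iff.1 this

lemma conn : IsPreconnected ((L.lattice : Set ℂ)ᶜ) :=
  ((lattice_countable L).isPathConnected_compl_of_one_lt_rank (by simp)).isConnected.isPreconnected

lemma dense_compl : Dense ((L.lattice : Set ℂ)ᶜ) := (lattice_countable L).dense_compl ℝ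

/-- quasi-periodicity -/
lemma sg_add (w : ℂ) (hw : w ∈ L.lattice) (hw2 : w / 2 ∉ L.lattice) (z : ℂ) :
    sg L (z + w) = - Complex.exp (2 * logDeriv (sg L) (w / 2) * (z + w / 2)) * sg L z := by
  have hs : IsOpen ((L.lattice : Set ℂ)ᶜ) := L.isClosed_lattice.isOpen_compl
  have hadd : ∀ {z}, z ∉ L.lattice → z + w ∉ L.lattice := by
    intro z hz h; exact hz (by simpa using L.lattice.sub_mem h hw)
  have hodd : ∀ z, logDeriv (sg L) (-z) = - logDeriv (sg L) z := by
    intro z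
    have h1 : deriv (sg L) (-z) = deriv (sg L) z := by
      have h := deriv_comp_neg (sg L) z
      have h2 : (fun x => sg L (-x)) = fun x => - sg L x := funext (sg_neg L)
      rw [h2, deriv.fun_neg] at h
      simpa using h.symm
    rw [logDeriv_apply, logDeriv_apply, h1, sg_neg, div_neg]
  have hdz : ∀ {z}, z ∉ L.lattice → HasDerivAt (fun z => logDeriv (sg L) (z + w))
      (-(L.weierstrassP (z + w))) z := fun {z} hz => (hasDerivAt_zeta L (hadd hz)).comp_add_const z w
  have hper : ∀ z, L.weierstrassP (z + w) = L.weierstrassP z := 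
    fun z => L.weierstrassP_add_coe z ⟨w, hw⟩
  have hneg : -(w / 2) ∉ L.lattice := by simpa using hw2
  set η := 2 * logDeriv (sg L) (w / 2) with hη
  have key : ∀ z ∉ L.lattice, logDeriv (sg L) (z + w) - logDeriv (sg L) z = η := by
    intro z hz
    have := hs.is_const_of_deriv_eq_zero (f := fun z => logDeriv (sg L) (z + w) - logDeriv (sg L) z)
      (conn L) 
      (fun x hx => ((hdz hx).fun_sub (hasDerivAt_zeta L hx)).differentiableAt.differentiableWithinAt)
      (fun x hx => by
        simp only [Pi.zero_apply]
        have := ((hdz hx).fun_sub (hasDerivAt_zeta L hx)).deriv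
        rw [hper] at this
        simpa using this) hz hneg
    rw [this, hodd]
    have : -(w / 2) + w = w / 2 := by ring
    rw [this]; ring
  -- the ratio
  have key2 : ∀ z ∉ L.lattice, sg L (z + w) / sg L z * Complex.exp (-(η * (z + w / 2))) = -1 := by
    intro z hz
    have hD : ∀ x ∉ L.lattice, HasDerivAt
        (fun z => sg L (z + w) / sg L z * Complex.exp (-(η * (z + w / 2)))) 0 x := by
      intro x hx
      have d1 : HasDerivAt (fun z => sg L (z + w)) (deriv (sg L) (x + w)) x :=
        (sg_differentiable L (x + w)).hasDerivAt.comp_add_const x w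
      have d2 := (sg_differentiable L x).hasDerivAt
      have n1 : sg L x ≠ 0 := fun h => hx ((sg_eq_zero_iff L x).1 h)
      have n2 : sg L (x + w) ≠ 0 := fun h => hadd hx ((sg_eq_zero_iff L _).1 h)
      have d3 : HasDerivAt (fun z : ℂ => -(η * (z + w / 2))) (-η) x := by
        simpa using (((hasDerivAt_id x).add_const (w / 2)).const_mul η).fun_neg
      have k := key x hx
      rw [logDeriv_apply, logDeriv_apply] at k
      convert! (d1.div d2 n1).mul d3.cexp using 1
      simp only [Pi.div_apply]
      rw [← k]
      field_simp
      ring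
    have := hs.is_const_of_deriv_eq_zero
      (f := fun z => sg L (z + w) / sg L z * Complex.exp (-(η * (z + w / 2))))
      (conn L) (fun x hx => (hD x hx).differentiableAt.differentiableWithinAt)
      (fun x hx => (hD x hx).deriv) hz hneg
    rw [this]
    have e : -(w / 2) + w = w / 2 := by ring
    have n1 : sg L (w / 2) ≠ 0 := fun h => hw2 ((sg_eq_zero_iff L _).1 h)
    rw [e, sg_neg]
    simp [div_neg, n1]
  by_cases hz : z ∈ L.lattice
  · rw [(sg_eq_zero_iff L z).2 hz, (sg_eq_zero_iff L _).2 (L.lattice.add_mem hz hw)]; simp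
  · have n1 : sg L z ≠ 0 := fun h => hz ((sg_eq_zero_iff L z).1 h)
    have := key2 z hz
    rw [Complex.exp_neg] at this
    have h5 := Complex.exp_ne_zero (η * (z + w / 2))
    field_simp at this
    rw [this]; ring

end SG
end

section
open MeasureTheory Filter Topology
namespace SG

lemma exists_quot (f g : ℂ → ℂ) (hf : Differentiable ℂ f) (hg : Differentiable ℂ g)
    (h : ∀ w, g w = 0 → f w = 0 ∧ deriv g w ≠ 0) :
    ∃ q : ℂ → ℂ, Differentiable ℂ q ∧ ∀ z, f z = q z * g z := by
  classical
  refine ⟨fun z => if g z = 0 then deriv f z / deriv g z else f z / g z, ?_, ?_⟩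
  · intro w
    by_cases hw : g w = 0
    · obtain ⟨hfw, hgw⟩ := h w hw
      have df : Differentiable ℂ (dslope f w) := by
        rw [← differentiableOn_univ, Complex.differentiableOn_dslope univ_mem]
        exact hf.differentiableOn
      have dg : Differentiable ℂ (dslope g w) := by
        rw [← differentiableOn_univ, Complex.differentiableOn_dslope univ_mem]
        exact hg.differentiableOn
      have hne : ∀ᶠ z in 𝓝 w, dslope g w z ≠ 0 :=
        dg.continuous.continuousAt.eventually_ne (by simpa using hgw)
      have : (fun z => if g z = 0 then deriv f z / deriv g z else f z / g z) =ᶠ[𝓝 w]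
          fun z => dslope f w z / dslope g w z := by
        filter_upwards [hne] with z hz
        by_cases hzw : z = w
        · subst hzw; simp [hw]
        · have hs : z - w ≠ 0 := sub_ne_zero.2 hzw
          have e1 : f z = (z - w) * dslope f w z := by
            have := sub_smul_dslope f w z
            rw [hfw, sub_zero] at this; simpa using this.symm
          have e2 : g z = (z - w) * dslope g w z := by
            have := sub_smul_dslope g w z
            rw [hw, sub_zero] at this; simpa using this.symm
          have e3 : g z ≠ 0 := by rw [e2]; exact mul_ne_zero hs hz
          rw [if_neg e3, e1, e2, mul_div_mul_left _ _ hs]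
      exact ((df w).div (dg w) (by simpa using hgw)).congr_of_eventuallyEq this
    · have : (fun z => if g z = 0 then deriv f z / deriv g z else f z / g z) =ᶠ[𝓝 w]
          fun z => f z / g z := by
        filter_upwards [hg.continuous.continuousAt.eventually_ne hw] with z hz
        simp [hz]
      exact ((hf w).div (hg w) hw).congr_of_eventuallyEq this
  · intro z
    by_cases hz : g z = 0
    · simp [hz, (h z hz).1]
    · simp [hz]

lemma quot_periodic (f g q : ℂ → ℂ) (a b : ℂ → ℝ) (hq : Continuous q)
    (ha : Continuous a) (hb : Continuous b) (hfq : ∀ z, f z = q z * g z) (ω : ℂ)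
    (hd : Dense {z | g z ≠ 0})
    (hpf : ∀ z, ‖f (z + ω)‖ * Real.exp (-a (z + ω)) = ‖f z‖ * Real.exp (-a z))
    (hpg : ∀ z, ‖g (z + ω)‖ * Real.exp (-b (z + ω)) = ‖g z‖ * Real.exp (-b z)) (z : ℂ) :
    ‖q (z + ω)‖ * Real.exp (-(a (z + ω) - b (z + ω))) = ‖q z‖ * Real.exp (-(a z - b z)) := by
  have := Continuous.ext_on (f := fun z => ‖q (z + ω)‖ * Real.exp (-(a (z + ω) - b (z + ω))))
    (g := fun z => ‖q z‖ * Real.exp (-(a z - b z))) hd (by fun_prop) (by fun_prop) ?_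
  · exact congrFun this z
  · intro z hz
    have hz : g z ≠ 0 := hz
    have h1 := hpf z
    have h2 := hpg z
    rw [hfq, hfq, norm_mul, norm_mul] at h1
    have e1 : ∀ x, Real.exp (-(a x - b x)) = Real.exp (- a x) / Real.exp (- b x) := by
      intro x; rw [← Real.exp_sub]; congr 1; ring
    simp only [e1]
    have p1 := Real.exp_pos (- b z)
    have p2 := Real.exp_pos (- b (z + ω))
    have p3 : 0 < ‖g z‖ := norm_pos_iff.2 hz
    have h3 : ‖g (z + ω)‖ = ‖g z‖ * Real.exp (-b z) / Real.exp (-b (z + ω)) := by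
      field_simp; linarith
    rw [h3] at h1
    field_simp at h1 ⊢
    linarith

variable (L : PeriodPair)

lemma per_zsmul {α : Type*} (Φ : ℂ → α) (ω : ℂ) (h : ∀ z, Φ (z + ω) = Φ z) (m : ℤ) (z : ℂ) :
    Φ (z + m * ω) = Φ z := by
  have : Function.Periodic Φ ω := h
  exact this.int_mul m z

lemma bounded_of_periodic (Φ : ℂ → ℝ) (hc : Continuous Φ)
    (h1 : ∀ z, Φ (z + L.ω₁) = Φ z) (h2 : ∀ z, Φ (z + L.ω₂) = Φ z) : ∃ C, ∀ z, Φ z ≤ C := by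
  have hK : IsCompact ((fun p : ℝ × ℝ => (p.1 : ℂ) * L.ω₁ + (p.2 : ℂ) * L.ω₂) ''
    (Set.Icc (0 : ℝ) 1 ×ˢ Set.Icc (0 : ℝ) 1)) :=
    (isCompact_Icc.prod isCompact_Icc).image (by fun_prop)
  obtain ⟨C, hC⟩ := hK.bddAbove_image hc.continuousOn
  refine ⟨C, fun z => ?_⟩
  have hz := L.basis.sum_repr z
  simp only [Fin.sum_univ_two, PeriodPair.basis_zero, PeriodPair.basis_one, Complex.real_smul] at hz
  set x := L.basis.repr z 0
  set y := L.basis.repr z 1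
  have e : z = ((Int.fract x : ℝ) * L.ω₁ + (Int.fract y : ℝ) * L.ω₂) + (⌊x⌋ : ℤ) * L.ω₁
      + (⌊y⌋ : ℤ) * L.ω₂ := by
    rw [← hz]
    conv_lhs => rw [← Int.fract_add_floor x, ← Int.fract_add_floor y]
    push_cast; ring
  rw [e, per_zsmul Φ _ h2, per_zsmul Φ _ h1]
  apply hC
  refine ⟨_, ⟨(Int.fract x, Int.fract y), ⟨⟨Int.fract_nonneg _, (Int.fract_lt_one _).le⟩, 
    ⟨Int.fract_nonneg _, (Int.fract_lt_one _).le⟩⟩, rfl⟩, rfl⟩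

/-- a bounded (degree ≤ 0) entire function is constant -/
lemma const_of_periodic (q : ℂ → ℂ) (hq : Differentiable ℂ q) (k : ℝ) (hk : k ≤ 0)
    (h1 : ∀ z, ‖q (z + L.ω₁)‖ * Real.exp (-(k * ‖z + L.ω₁‖ ^ 2)) = ‖q z‖ * Real.exp (-(k * ‖z‖ ^ 2)))
    (h2 : ∀ z, ‖q (z + L.ω₂)‖ * Real.exp (-(k * ‖z + L.ω₂‖ ^ 2)) = ‖q z‖ * Real.exp (-(k * ‖z‖ ^ 2)))
    (z w : ℂ) : q z = q w := by
  obtain ⟨C, hC⟩ := bounded_of_periodic L (fun z => ‖q z‖ * Real.exp (-(k * ‖z‖ ^ 2)))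
    (by have := hq.continuous; fun_prop) h1 h2
  refine hq.apply_eq_apply_of_bounded ?_ z w
  rw [isBounded_iff_forall_norm_le]
  refine ⟨C, ?_⟩
  rintro _ ⟨x, rfl⟩
  refine le_trans ?_ (hC x)
  refine le_mul_of_one_le_right (norm_nonneg _) (Real.one_le_exp ?_)
  nlinarith [sq_nonneg ‖x‖]

lemma theta_ne_zero (τ : ℂ) (hτ : 0 < τ.im) : ∃ z, jacobiTheta₂ z τ ≠ 0 := by
  by_contra hc
  push Not at hc
  have hs : Summable (fun n : ℤ => ‖jacobiTheta₂_term n 0 τ‖) :=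
    ((summable_jacobiTheta₂_term_iff 0 τ).2 hτ).norm
  have hn : ∀ (n : ℤ) (x : ℝ), ‖jacobiTheta₂_term n x τ‖ = ‖jacobiTheta₂_term n 0 τ‖ := by
    intro n x; rw [norm_jacobiTheta₂_term, norm_jacobiTheta₂_term]; simp
  have H := intervalIntegral.hasSum_integral_of_dominated_convergence (ι := ℤ) (a := 0) (b := 1)
    (μ := volume)
    (F := fun n (x : ℝ) => jacobiTheta₂_term n x τ) (f := fun x : ℝ => jacobiTheta₂ x τ)
    (fun n _ => ‖jacobiTheta₂_term n 0 τ‖)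
    (fun n => by unfold jacobiTheta₂_term; exact (by fun_prop : Continuous _).aestronglyMeasurable)
    (fun n => Eventually.of_forall fun x _ => (hn n x).le)
    (Eventually.of_forall fun x _ => hs) (by simp)
    (Eventually.of_forall fun x _ => hasSum_jacobiTheta₂_term x hτ)
  simp only [hc, intervalIntegral.integral_zero] at H
  have hterm : ∀ n : ℤ, ∫ x in (0:ℝ)..1, jacobiTheta₂_term n x τ = if n = 0 then 1 else 0 := by
    intro n
    split_ifs with h
    · subst h; simp [jacobiTheta₂_term]
    · have e : ∀ x : ℝ, jacobiTheta₂_term n x τ =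
          Complex.exp (Real.pi * Complex.I * n ^ 2 * τ) * Complex.exp ((2 * Real.pi * Complex.I * n) * x) := by
        intro x; unfold jacobiTheta₂_term; rw [← Complex.exp_add]; congr 1; ring
      simp only [e]
      have hn0 : (2 * Real.pi * Complex.I * n : ℂ) ≠ 0 := by
        have : (n : ℂ) ≠ 0 := by exact_mod_cast h
        have := Complex.two_pi_I_ne_zero
        positivity
      rw [intervalIntegral.integral_const_mul, integral_exp_mul_complex hn0]
      have : Complex.exp (2 * Real.pi * Complex.I * n * (1:ℝ)) = 1 := by
        rw [Complex.exp_eq_one_iff]; exact ⟨n, by push_cast; ring⟩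
      rw [this]; simp
  simp only [hterm] at H
  have H2 : HasSum (fun n : ℤ => if n = 0 then (1:ℂ) else 0) 1 := hasSum_ite_eq 0 1
  exact zero_ne_one (H.unique H2)

lemma theta_half (τ : ℂ) : jacobiTheta₂ (1 / 2 + τ / 2) τ = 0 := by
  have h := jacobiTheta₂_add_left' (1 / 2 - τ / 2) τ
  have e1 : (1 / 2 - τ / 2) + τ = 1 / 2 + τ / 2 := by ring
  have e2 : jacobiTheta₂ (1 / 2 - τ / 2) τ = jacobiTheta₂ (1 / 2 + τ / 2) τ := by
    rw [← jacobiTheta₂_neg_left, ← jacobiTheta₂_add_left]; congr 1; ring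
  rw [e1, e2] at h
  have e3 : Complex.exp (-Real.pi * Complex.I * (τ + 2 * (1 / 2 - τ / 2))) = -1 := by
    rw [← Complex.exp_neg_pi_mul_I]; congr 1; ring
  rw [e3] at h
  have : (2:ℂ) * jacobiTheta₂ (1 / 2 + τ / 2) τ = 0 := by linear_combination h
  simpa using this

end SG
end

section
open MeasureTheory Filter Topology
namespace SG
variable (L : PeriodPair)

lemma norm_add_sq (z w : ℂ) : ‖z + w‖ ^ 2 = ‖z‖ ^ 2 + ((starRingEnd ℂ) w * (2 * z + w)).re := by
  simp only [Complex.sq_norm, Complex.normSq_apply, Complex.mul_re, Complex.conj_re, Complex.conj_im,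
    Complex.add_re, Complex.add_im, Complex.re_ofNat, Complex.im_ofNat, Complex.mul_im]
  ring

noncomputable def gk (b : ℂ) (z : ℂ) : ℂ := Complex.exp (b * z ^ 2) * sg L z

lemma gk_periodic (b : ℂ) (k : ℝ) (w : ℂ) (hw : w ∈ L.lattice) (hw2 : w / 2 ∉ L.lattice)
    (h : 2 * b * w + 2 * logDeriv (sg L) (w / 2) = 2 * k * (starRingEnd ℂ) w) (z : ℂ) :
    ‖gk L b (z + w)‖ * Real.exp (-(k * ‖z + w‖ ^ 2)) = ‖gk L b z‖ * Real.exp (-(k * ‖z‖ ^ 2)) := by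
  have e : gk L b (z + w) = - (Complex.exp (k * ((starRingEnd ℂ) w * (2 * z + w))) * gk L b z) := by
    unfold gk
    rw [sg_add L w hw hw2]
    have : Complex.exp (b * (z + w) ^ 2) * Complex.exp (2 * logDeriv (sg L) (w / 2) * (z + w / 2))
       = Complex.exp (k * ((starRingEnd ℂ) w * (2 * z + w))) * Complex.exp (b * z ^ 2) := by
      rw [← Complex.exp_add, ← Complex.exp_add]
      congr 1
      linear_combination (z + w / 2) * h
    linear_combination (-sg L z) * this
  rw [e, norm_neg, norm_mul, Complex.norm_exp, Complex.re_ofReal_mul, norm_add_sq]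
  rw [mul_comm (Real.exp _), mul_assoc, ← Real.exp_add]
  congr 2
  ring

def tr : AddSubgroup ℂ where
  carrier := {w | ∃ a b : ℂ, ∀ z, sg L (z + w) = Complex.exp (a * z + b) * sg L z}
  zero_mem' := ⟨0, 0, by simp⟩
  add_mem' := by
    rintro v w ⟨a, b, h⟩ ⟨a', b', h'⟩
    refine ⟨a + a', a' * v + b + b', fun z => ?_⟩
    rw [← add_assoc, h', h, ← mul_assoc, ← Complex.exp_add]
    congr 2; ring
  neg_mem' := by
    rintro w ⟨a, b, h⟩
    refine ⟨-a, a * w - b, fun z => ?_⟩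
    have := h (z + -w)
    rw [neg_add_cancel_right] at this
    rw [this, ← mul_assoc, ← Complex.exp_add]
    have e : -a * z + (a * w - b) + (a * (z + -w) + b) = 0 := by ring
    rw [e]; simp

lemma mem_tr (w : ℂ) (hw : w ∈ L.lattice) (hw2 : w / 2 ∉ L.lattice) : w ∈ tr L := by
  refine ⟨2 * logDeriv (sg L) (w / 2), 2 * logDeriv (sg L) (w / 2) * (w / 2) + Real.pi * Complex.I,
    fun z => ?_⟩
  rw [sg_add L w hw hw2, ← add_assoc, ← mul_add, Complex.exp_add, Complex.exp_pi_mul_I]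
  ring

lemma lattice_le_tr (w : ℂ) (hw : w ∈ L.lattice) : w ∈ tr L := by
  have : L.lattice ≤ (tr L).toIntSubmodule := by
    unfold PeriodPair.lattice
    rw [Submodule.span_le]
    rintro x (rfl | rfl)
    · exact mem_tr L _ L.ω₁_mem_lattice L.ω₁_div_two_notMem_lattice
    · exact mem_tr L _ L.ω₂_mem_lattice L.ω₂_div_two_notMem_lattice
  exact this hw

lemma deriv_sg_ne (w : ℂ) (hw : w ∈ L.lattice) : deriv (sg L) w ≠ 0 := by
  obtain ⟨a, b, h⟩ := lattice_le_tr L w hw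
  have h1 : HasDerivAt (fun z => sg L (z + w)) (deriv (sg L) (0 + w)) 0 :=
    (sg_differentiable L (0 + w)).hasDerivAt.comp_add_const 0 w
  have h3 : HasDerivAt (fun z : ℂ => a * z + b) a 0 := by
    simpa using ((hasDerivAt_id (0:ℂ)).const_mul a).add_const b
  have h2 := h3.cexp.fun_mul (sg_differentiable L 0).hasDerivAt
  rw [funext h] at h1
  have := h1.unique h2
  rw [zero_add, deriv_sg_zero] at this
  rw [this]
  simp [sg]

lemma gk_differentiable (b : ℂ) : Differentiable ℂ (gk L b) := by
  have := sg_differentiable L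
  unfold gk; fun_prop

lemma gk_eq_zero_iff (b z : ℂ) : gk L b z = 0 ↔ z ∈ L.lattice := by
  rw [← sg_eq_zero_iff]; simp [gk]

lemma deriv_gk_ne (b w : ℂ) (hw : w ∈ L.lattice) : deriv (gk L b) w ≠ 0 := by
  have h3 : DifferentiableAt ℂ (fun z : ℂ => Complex.exp (b * z ^ 2)) w := by fun_prop
  have h2 := h3.hasDerivAt.fun_mul (sg_differentiable L w).hasDerivAt
  have : deriv (gk L b) w = _ := h2.deriv
  rw [this, (sg_eq_zero_iff L w).2 hw]
  simp [deriv_sg_ne L w hw]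

lemma gk_dense (b : ℂ) : Dense {z | gk L b z ≠ 0} := by
  refine (dense_compl L).mono fun z hz => ?_
  exact fun h => hz ((gk_eq_zero_iff L b z).1 h)

structure Good : Prop where
  h1 : L.ω₁.im = 0
  h1' : 0 < L.ω₁.re
  h2 : 0 < L.ω₂.im
  harea : L.ω₁.re * L.ω₂.im = Real.pi / 2

variable {L}

lemma Good.conj1 (h : Good L) : (starRingEnd ℂ) L.ω₁ = L.ω₁ := Complex.conj_eq_iff_im.2 h.h1

lemma Good.ne0 (h : Good L) : L.ω₁ ≠ 0 := by
  intro h0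
  have := h.h1'
  rw [h0] at this; simp at this

lemma Good.pi (h : Good L) : (Real.pi : ℂ) = 2 * L.ω₁ * L.ω₂.im := by
  have e : L.ω₁ = (L.ω₁.re : ℂ) := by apply Complex.ext <;> simp [h.h1]
  have : Real.pi = 2 * L.ω₁.re * L.ω₂.im := by linarith [h.harea]
  rw [e, this]; push_cast; rfl

lemma conj_eq (w : ℂ) : (starRingEnd ℂ) w = w - 2 * w.im * Complex.I := by
  apply Complex.ext <;> simp; ring

noncomputable def TH (L : PeriodPair) (z : ℂ) : ℂ :=
  Complex.exp (z ^ 2 + 2 * L.ω₂.im * Complex.I * z) *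
    jacobiTheta₂ (z / L.ω₁ + (1 / 2 + L.ω₂ / L.ω₁ / 2)) (L.ω₂ / L.ω₁)

lemma Good.tau (h : Good L) : 0 < (L.ω₂ / L.ω₁).im := by
  have e : L.ω₁ = (L.ω₁.re : ℂ) := by apply Complex.ext <;> simp [h.h1]
  rw [e, Complex.div_ofReal_im]
  exact div_pos h.h2 h.h1'

lemma Good.TH_diff (h : Good L) : Differentiable ℂ (TH L) := by
  have : Differentiable ℂ (fun z => jacobiTheta₂ z (L.ω₂ / L.ω₁)) :=
    fun z => differentiableAt_jacobiTheta₂_fst z h.tau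
  have h2 : Differentiable ℂ (fun z => jacobiTheta₂ (z / L.ω₁ + (1 / 2 + L.ω₂ / L.ω₁ / 2)) (L.ω₂ / L.ω₁)) :=
    this.comp (by fun_prop : Differentiable ℂ (fun z => z / L.ω₁ + (1 / 2 + L.ω₂ / L.ω₁ / 2)))
  unfold TH; fun_prop

lemma TH_zero : TH L 0 = 0 := by simp only [TH, zero_div, zero_add]; rw [theta_half]; simp

lemma per_of (f : ℂ → ℂ) (w z E : ℂ) (he : f (z + w) = Complex.exp E * f z)
    (hE : E.re = ((starRingEnd ℂ) w * (2 * z + w)).re) :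
    ‖f (z + w)‖ * Real.exp (-‖z + w‖ ^ 2) = ‖f z‖ * Real.exp (-‖z‖ ^ 2) := by
  rw [he, norm_mul, Complex.norm_exp, norm_add_sq, hE, mul_comm (Real.exp _), mul_assoc,
    ← Real.exp_add]
  congr 2; ring

lemma Good.TH_per1 (h : Good L) (z : ℂ) : ‖TH L (z + L.ω₁)‖ * Real.exp (-‖z + L.ω₁‖ ^ 2) =
    ‖TH L z‖ * Real.exp (-‖z‖ ^ 2) := by
  refine per_of _ _ _ ((starRingEnd ℂ) L.ω₁ * (2 * z + L.ω₁) + 2 * L.ω₂.im * Complex.I * L.ω₁) ?_ ?_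
  · unfold TH
    have e : (z + L.ω₁) / L.ω₁ + (1 / 2 + L.ω₂ / L.ω₁ / 2) =
      (z / L.ω₁ + (1 / 2 + L.ω₂ / L.ω₁ / 2)) + 1 := by
      have := h.ne0
      field_simp; ring
    rw [e, jacobiTheta₂_add_left, h.conj1, ← mul_assoc, ← Complex.exp_add]
    congr 2; ring
  · simp [h.h1]

lemma Good.TH_per2 (h : Good L) (z : ℂ) : ‖TH L (z + L.ω₂)‖ * Real.exp (-‖z + L.ω₂‖ ^ 2) =
    ‖TH L z‖ * Real.exp (-‖z‖ ^ 2) := by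
  refine per_of _ _ _ ((starRingEnd ℂ) L.ω₂ * (2 * z + L.ω₂) - Real.pi * Complex.I) ?_ ?_
  · unfold TH
    have e : (z + L.ω₂) / L.ω₁ + (1 / 2 + L.ω₂ / L.ω₁ / 2) =
      (z / L.ω₁ + (1 / 2 + L.ω₂ / L.ω₁ / 2)) + L.ω₂ / L.ω₁ := by
      ring
    rw [e, jacobiTheta₂_add_left', ← mul_assoc, ← mul_assoc, ← Complex.exp_add, ← Complex.exp_add]
    congr 2
    rw [conj_eq, h.pi]
    have := h.ne0
    field_simp
    ring
  · simp

/-- the Legendre relation -/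
lemma Good.legendre_int (h : Good L) : ∃ k : ℤ,
    2 * logDeriv (sg L) (L.ω₁ / 2) * L.ω₂ - 2 * logDeriv (sg L) (L.ω₂ / 2) * L.ω₁
      = k * (2 * Real.pi * Complex.I) := by
  rw [← Complex.exp_eq_one_iff]
  set a := 2 * logDeriv (sg L) (L.ω₁ / 2) with ha
  set b := 2 * logDeriv (sg L) (L.ω₂ / 2) with hb
  have s1 := sg_add L _ L.ω₁_mem_lattice L.ω₁_div_two_notMem_lattice
  have s2 := sg_add L _ L.ω₂_mem_lattice L.ω₂_div_two_notMem_lattice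
  rw [← ha] at s1
  rw [← hb] at s2
  set z := L.ω₁ / 2
  have hz : sg L z ≠ 0 := fun hh => L.ω₁_div_two_notMem_lattice ((sg_eq_zero_iff L _).1 hh)
  have e1 := s2 (z + L.ω₁)
  have e2 := s1 (z + L.ω₂)
  rw [s1] at e1
  rw [s2, show z + L.ω₂ + L.ω₁ = z + L.ω₁ + L.ω₂ by ring, e1] at e2
  have e3 : Complex.exp (b * (z + L.ω₁ + L.ω₂ / 2)) * Complex.exp (a * (z + L.ω₁ / 2)) =
    Complex.exp (a * (z + L.ω₂ + L.ω₁ / 2)) * Complex.exp (b * (z + L.ω₂ / 2)) := by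
    apply mul_right_cancel₀ hz
    linear_combination e2
  rw [← Complex.exp_add, ← Complex.exp_add] at e3
  have e4 : a * L.ω₂ - b * L.ω₁ = (a * (z + L.ω₂ + L.ω₁ / 2) + b * (z + L.ω₂ / 2)) -
    (b * (z + L.ω₁ + L.ω₂ / 2) + a * (z + L.ω₁ / 2)) := by ring
  rw [e4, Complex.exp_sub, e3, div_self (Complex.exp_ne_zero _)]

lemma Good.gk_per (h : Good L) (k : ℤ)
    (hk : 2 * logDeriv (sg L) (L.ω₁ / 2) * L.ω₂ - 2 * logDeriv (sg L) (L.ω₂ / 2) * L.ω₁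
      = k * (2 * Real.pi * Complex.I)) (b : ℂ)
    (hb : b = k - 2 * logDeriv (sg L) (L.ω₁ / 2) / (2 * L.ω₁)) :
    (∀ z, ‖gk L b (z + L.ω₁)‖ * Real.exp (-((k:ℝ) * ‖z + L.ω₁‖ ^ 2)) =
      ‖gk L b z‖ * Real.exp (-((k:ℝ) * ‖z‖ ^ 2))) ∧
    (∀ z, ‖gk L b (z + L.ω₂)‖ * Real.exp (-((k:ℝ) * ‖z + L.ω₂‖ ^ 2)) =
      ‖gk L b z‖ * Real.exp (-((k:ℝ) * ‖z‖ ^ 2))) := by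
  have h0 := h.ne0
  constructor
  · intro z
    apply gk_periodic L b k _ L.ω₁_mem_lattice L.ω₁_div_two_notMem_lattice
    rw [h.conj1, hb]
    push_cast
    field_simp
    ring
  · intro z
    apply gk_periodic L b k _ L.ω₂_mem_lattice L.ω₂_div_two_notMem_lattice
    rw [conj_eq, hb]
    rw [h.pi] at hk
    push_cast
    apply mul_right_cancel₀ h0
    field_simp
    linear_combination -hk / 2

lemma zero_of_per (f : ℂ → ℂ) (h0 : f 0 = 0) (a : ℂ → ℝ)
    (h1 : ∀ z, ‖f (z + L.ω₁)‖ * Real.exp (-a (z + L.ω₁)) = ‖f z‖ * Real.exp (-a z))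
    (h2 : ∀ z, ‖f (z + L.ω₂)‖ * Real.exp (-a (z + L.ω₂)) = ‖f z‖ * Real.exp (-a z))
    (w : ℂ) (hw : w ∈ L.lattice) : f w = 0 := by
  obtain ⟨m, n, rfl⟩ := PeriodPair.mem_lattice.1 hw
  have e1 := per_zsmul (fun z => ‖f z‖ * Real.exp (-a z)) _ h1 m 0
  have e2 := per_zsmul (fun z => ‖f z‖ * Real.exp (-a z)) _ h2 n (m * L.ω₁)
  simp only [zero_add] at e1
  simp only [e1, h0] at e2
  simpa using e2

lemma Good.k_eq_one (h : Good L) (k : ℤ)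
    (hk : 2 * logDeriv (sg L) (L.ω₁ / 2) * L.ω₂ - 2 * logDeriv (sg L) (L.ω₂ / 2) * L.ω₁
      = k * (2 * Real.pi * Complex.I)) : k = 1 := by
  obtain ⟨p1, p2⟩ := h.gk_per k hk _ rfl
  set b : ℂ := k - 2 * logDeriv (sg L) (L.ω₁ / 2) / (2 * L.ω₁) with hb
  rcases lt_trichotomy k 1 with hlt | heq | hgt
  · exfalso
    have hk0 : (k : ℝ) ≤ 0 := by exact_mod_cast (by omega : k ≤ 0)
    have := const_of_periodic L (gk L b) (gk_differentiable L b) k hk0 p1 p2 (L.ω₁ / 2) 0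
    rw [(gk_eq_zero_iff L b 0).2 L.lattice.zero_mem, gk_eq_zero_iff] at this
    exact L.ω₁_div_two_notMem_lattice this
  · exact heq
  · exfalso
    have hk0 : (1 - k : ℝ) < 0 := by
      have : (1:ℝ) < k := by exact_mod_cast hgt
      linarith
    obtain ⟨q, hq, hqe⟩ := exists_quot (TH L) (gk L b) h.TH_diff (gk_differentiable L b) (by
      intro w hw
      have hw := (gk_eq_zero_iff L b w).1 hw
      exact ⟨zero_of_per (L := L) (TH L) TH_zero (fun z => ‖z‖ ^ 2) h.TH_per1 h.TH_per2 w hw,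
        deriv_gk_ne L b w hw⟩)
    have q1 := quot_periodic (TH L) (gk L b) q (fun z => ‖z‖ ^ 2) (fun z => k * ‖z‖ ^ 2) hq.continuous
      (by fun_prop) (by fun_prop) hqe L.ω₁ (gk_dense L b) h.TH_per1 p1
    have q2 := quot_periodic (TH L) (gk L b) q (fun z => ‖z‖ ^ 2) (fun z => k * ‖z‖ ^ 2) hq.continuous
      (by fun_prop) (by fun_prop) hqe L.ω₂ (gk_dense L b) h.TH_per2 p2
    have e : ∀ z : ℂ, ‖z‖ ^ 2 - k * ‖z‖ ^ 2 = (1 - k) * ‖z‖ ^ 2 := fun z => by ring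
    simp only [e] at q1 q2
    have hc := const_of_periodic L q hq (1 - k) hk0.le q1 q2
    have hq0 : q 0 = 0 := by
      by_contra hne
      have := q1 0
      rw [hc (0 + L.ω₁) 0] at this
      have := mul_left_cancel₀ (norm_ne_zero_iff.2 hne) this
      rw [Real.exp_eq_exp] at this
      have h3 : 0 < ‖L.ω₁‖ ^ 2 := by have := norm_pos_iff.2 h.ne0; positivity
      simp at this
      rcases this with h4 | h4
      · linarith
      · exact h.ne0 h4
    obtain ⟨z, hz⟩ := theta_ne_zero _ h.tau
    apply hz
    have := hqe ((z - (1 / 2 + L.ω₂ / L.ω₁ / 2)) * L.ω₁)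
    rw [hc _ 0, hq0, zero_mul] at this
    unfold TH at this
    rw [mul_div_cancel_right₀ _ h.ne0, sub_add_cancel] at this
    simpa using this

lemma sigmaStar_eq : sigmaStar L.ω₁ L.ω₂ = gk L (bconst L.ω₁ L.ω₂) := by
  funext z
  rw [sigmaStar, gk, wSigma_eq]

lemma bconst_eq : bconst L.ω₁ L.ω₂ = 1 - 2 * logDeriv (sg L) (L.ω₁ / 2) / (2 * L.ω₁) := by
  rw [bconst, lambda1, wZeta, wSigma_eq]; rfl

noncomputable def Psi (L : PeriodPair) (z : ℂ) : ℝ := ‖sigmaStar L.ω₁ L.ω₂ z‖ * Real.exp (-‖z‖ ^ 2)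

lemma Good.Psi_per (h : Good L) (w : ℂ) (hw : w ∈ L.lattice) (z : ℂ) : Psi L (z + w) = Psi L z := by
  obtain ⟨k, hk⟩ := h.legendre_int
  obtain rfl := h.k_eq_one k hk
  obtain ⟨p1, p2⟩ := h.gk_per 1 hk (bconst L.ω₁ L.ω₂) (by rw [bconst_eq]; simp)
  obtain ⟨m, n, rfl⟩ := PeriodPair.mem_lattice.1 hw
  have e1 := per_zsmul (Psi L) L.ω₁ (by simpa [Psi, sigmaStar_eq] using p1) m z
  have e2 := per_zsmul (Psi L) L.ω₂ (by simpa [Psi, sigmaStar_eq] using p2) n (z + m * L.ω₁)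
  rw [← add_assoc, e2, e1]

end SG
end

section
open MeasureTheory Filter Topology
namespace SG
variable {L : PeriodPair}

lemma ss_zero (z : ℂ) : sigmaStar L.ω₁ L.ω₂ z = 0 ↔ z ∈ L.lattice := by
  rw [sigmaStar_eq, gk_eq_zero_iff]

lemma ss_diff : Differentiable ℂ (sigmaStar L.ω₁ L.ω₂) := by
  rw [sigmaStar_eq]; exact gk_differentiable L _

lemma ss_deriv (w : ℂ) (hw : w ∈ L.lattice) : deriv (sigmaStar L.ω₁ L.ω₂) w ≠ 0 := by
  rw [sigmaStar_eq]; exact deriv_gk_ne L _ w hw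

lemma Psi_zero (z : ℂ) : Psi L z = 0 ↔ z ∈ L.lattice := by
  rw [← ss_zero]; simp [Psi]

lemma Psi_nonneg (z : ℂ) : 0 ≤ Psi L z := by unfold Psi; positivity

lemma Psi_pos (z : ℂ) (hz : z ∉ L.lattice) : 0 < Psi L z :=
  lt_of_le_of_ne (Psi_nonneg z) fun h => hz ((Psi_zero z).1 h.symm)

structure Cov (L W : PeriodPair) (N : ℕ) (c : ℂ) (ζ : Fin N → ℂ) : Prop where
  gL : Good L
  gW : Good W
  N1 : 1 ≤ N
  hc : ‖c‖ ^ 2 = N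
  hsub : ∀ w ∈ L.lattice, c * w ∈ W.lattice
  hmem : ∀ j, c * ζ j ∈ W.lattice
  hrep : ∀ x, c * x ∈ W.lattice → ∃! j, x - ζ j ∈ L.lattice

variable {W : PeriodPair} {N : ℕ} {c : ℂ} {ζ : Fin N → ℂ}

lemma Cov.c0 (h : Cov L W N c ζ) : c ≠ 0 := by
  rintro rfl
  have := h.hc
  have h1 := h.N1
  have : (N:ℝ) = 0 := by rw [← this]; simp
  have : N = 0 := by exact_mod_cast this
  omega

lemma Cov.notMem (h : Cov L W N c ζ) (z : ℂ) (hz : c * z ∉ W.lattice) (j : Fin N) :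
    z - ζ j ∉ L.lattice := by
  intro hj
  apply hz
  have := W.lattice.add_mem (h.hsub _ hj) (h.hmem j)
  rwa [← mul_add, sub_add_cancel] at this

lemma Cov.prod_eq (h : Cov L W N c ζ) :
    ∃ K : ℝ, 0 < K ∧ ∀ z, ∏ j, Psi L (z - ζ j) = K * Psi W (c * z) := by
  have hc0 := h.c0
  have dL : Differentiable ℂ (sigmaStar L.ω₁ L.ω₂) := ss_diff
  have dW : Differentiable ℂ (sigmaStar W.ω₁ W.ω₂) := ss_diff
  set f : ℂ → ℂ := fun z => ∏ j, sigmaStar L.ω₁ L.ω₂ (z - ζ j) with hf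
  set g : ℂ → ℂ := fun z => sigmaStar W.ω₁ W.ω₂ (c * z) with hg
  set a : ℂ → ℝ := fun z => ∑ j, ‖z - ζ j‖ ^ 2 with ha
  set b : ℂ → ℝ := fun z => ‖c * z‖ ^ 2 with hb
  have df : Differentiable ℂ f := by
    have : ∀ j, Differentiable ℂ (fun z => sigmaStar L.ω₁ L.ω₂ (z - ζ j)) := fun j =>
      dL.comp (by fun_prop : Differentiable ℂ (fun z => z - ζ j))
    rw [hf]; fun_prop
  have dg : Differentiable ℂ g := dW.comp (by fun_prop : Differentiable ℂ (fun z => c * z))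
  have ePf : ∀ z, ‖f z‖ * Real.exp (-a z) = ∏ j, Psi L (z - ζ j) := by
    intro z
    simp only [hf, ha, Psi, Finset.prod_mul_distrib, norm_prod, ← Real.exp_sum, Finset.sum_neg_distrib]
  have ePg : ∀ z, ‖g z‖ * Real.exp (-b z) = Psi W (c * z) := by
    intro z; simp only [hg, hb, Psi]
  obtain ⟨q, hq, hqe⟩ := exists_quot f g df dg (by
    intro w hw
    have hw' : c * w ∈ W.lattice := (ss_zero _).1 hw
    constructor
    · obtain ⟨j, hj, _⟩ := h.hrep w hw'
      exact Finset.prod_eq_zero (Finset.mem_univ j) ((ss_zero _).2 hj)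
    · have : deriv g w = c * deriv (sigmaStar W.ω₁ W.ω₂) (c * w) := by
        simpa using deriv_comp_mul_left c (sigmaStar W.ω₁ W.ω₂) w
      rw [this]
      exact mul_ne_zero hc0 (ss_deriv _ hw'))
  have hdense : Dense {z | g z ≠ 0} := by
    have hcount : ((fun z => c * z) ⁻¹' (W.lattice : Set ℂ)).Countable :=
      (lattice_countable W).preimage (mul_right_injective₀ hc0)
    refine (hcount.dense_compl ℝ).mono ?_
    intro z hz
    exact fun h0 => hz ((ss_zero (L := W) (c * z)).1 h0)
  have per : ∀ w ∈ L.lattice, ∀ z, ‖q (z + w)‖ * Real.exp (-(a (z + w) - b (z + w))) = 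
      ‖q z‖ * Real.exp (-(a z - b z)) := by
    intro w hw
    refine quot_periodic f g q a b hq.continuous (by fun_prop) (by fun_prop) hqe w hdense ?_ ?_
    · intro z
      rw [ePf, ePf]
      refine Finset.prod_congr rfl fun j _ => ?_
      rw [add_sub_right_comm, h.gL.Psi_per w hw]
    · intro z
      rw [ePg, ePg, mul_add, h.gW.Psi_per _ (h.hsub w hw)]
  have hab : ∀ z, -(a z - b z) = (∑ j, 2 * (starRingEnd ℂ) (ζ j) * z).re - ∑ j, ‖ζ j‖ ^ 2 := by
    intro z
    have : b z = ∑ j : Fin N, ‖z‖ ^ 2 := by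
      simp only [hb, norm_mul, mul_pow, h.hc]; simp
    rw [this, ha, Complex.re_sum, ← Finset.sum_sub_distrib, ← Finset.sum_sub_distrib,
      ← Finset.sum_neg_distrib]
    refine Finset.sum_congr rfl fun j _ => ?_
    simp only [Complex.sq_norm, Complex.normSq_apply, Complex.mul_re, Complex.conj_re, Complex.conj_im,
      Complex.sub_re, Complex.sub_im, Complex.re_ofNat, Complex.im_ofNat, Complex.mul_im]
    ring
  set s := ∑ j, ‖ζ j‖ ^ 2 with hs
  set H : ℂ → ℂ := fun z => q z * Complex.exp (∑ j, 2 * (starRingEnd ℂ) (ζ j) * z) with hH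
  have eH : ∀ z, ‖H z‖ = ‖q z‖ * Real.exp (-(a z - b z)) * Real.exp s := by
    intro z
    rw [hab, mul_assoc, ← Real.exp_add, sub_add_cancel, hH]
    simp only [norm_mul, Complex.norm_exp]
  have dH : Differentiable ℂ H := by rw [hH]; fun_prop
  have cH := const_of_periodic L H dH 0 le_rfl
    (fun z => by simp only [zero_mul, eH, per _ L.ω₁_mem_lattice])
    (fun z => by simp only [zero_mul, eH, per _ L.ω₂_mem_lattice])
  have hK : ∀ z, ‖q z‖ * Real.exp (-(a z - b z)) = ‖q 0‖ * Real.exp (-(a 0 - b 0)) := by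
    intro z
    have h1 := eH z
    rw [cH z 0, eH 0] at h1
    exact (mul_right_cancel₀ (Real.exp_ne_zero _) h1).symm
  set K := ‖q 0‖ * Real.exp (-(a 0 - b 0)) with hKdef
  have main : ∀ z, ∏ j, Psi L (z - ζ j) = K * Psi W (c * z) := by
    intro z
    rw [← ePf, ← ePg, hqe, ← hK z, norm_mul]
    have : Real.exp (-a z) = Real.exp (-(a z - b z)) * Real.exp (-b z) := by
      rw [← Real.exp_add]; congr 1; ring
    rw [this]; ring
  refine ⟨K, ?_, main⟩
  have hK0 : 0 ≤ K := by positivity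
  refine lt_of_le_of_ne hK0 fun h0 => ?_
  have e : c * (W.ω₁ / 2 / c) = W.ω₁ / 2 := by field_simp
  have := main (W.ω₁ / 2 / c)
  rw [← h0, zero_mul, Finset.prod_eq_zero_iff] at this
  obtain ⟨j, _, hj⟩ := this
  refine h.notMem _ ?_ j ((Psi_zero _).1 hj)
  rw [e]; exact W.ω₁_div_two_notMem_lattice

lemma Cov.log_eq (h : Cov L W N c ζ) :
    ∃ C : ℝ, ∀ z, c * z ∉ W.lattice →
      ∑ j, Real.log (Psi L (z - ζ j)) = C + Real.log (Psi W (c * z)) := by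
  obtain ⟨K, hK, H⟩ := h.prod_eq
  refine ⟨Real.log K, fun z hz => ?_⟩
  rw [← Real.log_prod, H, Real.log_mul hK.ne' (Psi_pos _ hz).ne']
  intro j _
  exact (Psi_pos _ (h.notMem z hz j)).ne'

lemma log_Psi (z : ℂ) (hz : z ∉ L.lattice) : 
    Real.log (Psi L z) = Real.log ‖sigmaStar L.ω₁ L.ω₂ z‖ - ‖z‖ ^ 2 := by
  have : ‖sigmaStar L.ω₁ L.ω₂ z‖ ≠ 0 := by
    rw [norm_ne_zero_iff]; exact fun h => hz ((ss_zero z).1 h)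
  rw [Psi, Real.log_mul this (Real.exp_ne_zero _), Real.log_exp]; ring

end SG
end

section
open MeasureTheory Filter Topology
namespace SG
variable {L : PeriodPair}

lemma fundDomain_eq : fundDomain L.ω₁ L.ω₂ = ZSpan.fundamentalDomain L.basis := by
  ext z
  rw [ZSpan.mem_fundamentalDomain, fundDomain, Set.mem_image]
  constructor
  · rintro ⟨⟨x, y⟩, ⟨hx, hy⟩, rfl⟩
    have e : (x : ℂ) * L.ω₁ + (y : ℂ) * L.ω₂ = x • L.basis 0 + y • L.basis 1 := by simp
    have r0 : L.basis.repr (x • L.basis 0 + y • L.basis 1) 0 = x := by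
      rw [map_add, map_smul, map_smul, L.basis.repr_self, L.basis.repr_self]; simp
    have r1 : L.basis.repr (x • L.basis 0 + y • L.basis 1) 1 = y := by
      rw [map_add, map_smul, map_smul, L.basis.repr_self, L.basis.repr_self]; simp
    intro i
    dsimp only
    rw [e]
    fin_cases i
    · exact r0.symm ▸ hx
    · exact r1.symm ▸ hy
  · intro h
    refine ⟨(L.basis.repr z 0, L.basis.repr z 1), ⟨h 0, h 1⟩, ?_⟩
    have := L.basis.sum_repr z
    simp only [Fin.sum_univ_two, L.basis_zero, L.basis_one, Complex.real_smul] at this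
    exact this

lemma ex_unique (x : ℂ) : ∃! w : L.lattice, (w : ℂ) + x ∈ fundDomain L.ω₁ L.ω₂ := by
  rw [fundDomain_eq, L.lattice_eq_span_range_basis]
  exact ZSpan.exist_unique_vadd_mem_fundamentalDomain L.basis x

lemma fd_meas : MeasurableSet (fundDomain L.ω₁ L.ω₂) := by
  rw [fundDomain_eq]; exact ZSpan.fundamentalDomain_measurableSet _

lemma fd_bdd : Bornology.IsBounded (fundDomain L.ω₁ L.ω₂) := by
  rw [fundDomain_eq]; exact ZSpan.fundamentalDomain_isBounded _

lemma fd_of (s : Set ℂ) (hs : MeasurableSet s) (h : ∀ x : ℂ, ∃! w : L.lattice, (w : ℂ) + x ∈ s) :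
    IsAddFundamentalDomain L.lattice.toAddSubgroup s volume :=
  IsAddFundamentalDomain.mk' hs.nullMeasurableSet h

lemma fd_int {s t : Set ℂ} (hs : IsAddFundamentalDomain L.lattice.toAddSubgroup s volume)
    (ht : IsAddFundamentalDomain L.lattice.toAddSubgroup t volume) (f : ℂ → ℝ)
    (hf : ∀ w ∈ L.lattice, ∀ z, f (z + w) = f z) : ∫ z in s, f z = ∫ z in t, f z := by
  have : Countable L.lattice.toAddSubgroup := (lattice_countable L).to_subtype
  refine hs.setIntegral_eq ht fun g x => ?_
  rw [← hf g g.2 x, add_comm]; rfl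

lemma fd_intOn {s t : Set ℂ} (hs : IsAddFundamentalDomain L.lattice.toAddSubgroup s volume)
    (ht : IsAddFundamentalDomain L.lattice.toAddSubgroup t volume) (f : ℂ → ℝ)
    (hf : ∀ w ∈ L.lattice, ∀ z, f (z + w) = f z) (h : IntegrableOn f s) : IntegrableOn f t := by
  have : Countable L.lattice.toAddSubgroup := (lattice_countable L).to_subtype
  refine (hs.integrableOn_iff ht fun g x => ?_).1 h
  rw [← hf g g.2 x, add_comm]; rfl

lemma Good.vol (h : Good L) : volume.real (fundDomain L.ω₁ L.ω₂) = Real.pi / 2 := by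
  rw [fundDomain_eq, ZSpan.measureReal_fundamentalDomain L.basis volume Complex.basisOneI]
  have : volume.real (ZSpan.fundamentalDomain Complex.basisOneI) = 1 := by
    rw [measureReal_def, measure_congr (ZSpan.fundamentalDomain_ae_parallelepiped _ _)]
    have := Complex.orthonormalBasisOneI.volume_parallelepiped
    rw [← Complex.toBasis_orthonormalBasisOneI, OrthonormalBasis.coe_toBasis, this]; rfl
  rw [this, Module.Basis.det_apply, Matrix.det_fin_two]
  simp only [Module.Basis.toMatrix_apply, L.basis_zero, L.basis_one, Complex.coe_basisOneI_repr]
  simp [h.h1, h.harea]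
  positivity

lemma log_loc (f : ℂ → ℂ) (hf : Differentiable ℂ f) (h0 : ∀ z, ¬ ∀ᶠ w in 𝓝 z, f w = 0) :
    LocallyIntegrable (fun z : ℂ => Real.log ‖f z‖) := by
  intro z₀
  obtain ⟨n, g, hg, hg0, hfg⟩ :=
    (hf.analyticAt z₀).exists_eventuallyEq_pow_smul_nonzero_iff.2 (h0 z₀)
  have hcont : ContinuousAt (fun z => |Real.log ‖g z‖|) z₀ :=
    (hg.continuousAt.norm.log (norm_ne_zero_iff.2 hg0)).abs
  set K := |Real.log ‖g z₀‖| + 1 with hK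
  have hev : ∀ᶠ z in 𝓝 z₀, |Real.log ‖g z‖| < K := hcont.eventually_lt_const (by linarith)
  have hev2 : ∀ᶠ z in 𝓝 z₀, g z ≠ 0 := hg.continuousAt.eventually_ne hg0
  obtain ⟨r, hr, H⟩ := Metric.eventually_nhds_iff_ball.1 (hfg.and (hev.and hev2))
  set ρ := min r 1 with hρ
  have hρ0 : 0 < ρ := lt_min hr one_pos
  refine ⟨Metric.ball z₀ ρ, Metric.ball_mem_nhds _ hρ0, ?_⟩
  have mp := measurePreserving_add_left (volume : Measure ℂ) z₀
  have e : (fun x => z₀ + x) ⁻¹' (Metric.ball z₀ ρ) = Metric.ball 0 ρ := by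
    ext x; simp
  rw [← mp.integrableOn_comp_preimage (measurableEmbedding_addLeft z₀), e]
  refine integrableOn_ball_of_norm_le_rpow (C := n + K) (α := 1) (by simp) (by simp) ?_ ?_
  · have h1 : ∀ᵐ x ∂(volume.restrict (Metric.ball (0:ℂ) ρ)), x ≠ 0 :=
      ae_restrict_of_ae (Measure.ae_ne volume 0)
    filter_upwards [h1, ae_restrict_mem Metric.isOpen_ball.measurableSet] with x hx hxb
    have hxn : 0 < ‖x‖ := norm_pos_iff.2 hx
    have hx1 : ‖x‖ < ρ := by simpa using hxb
    have hx2 : ‖x‖ ≤ 1 := hx1.le.trans (min_le_right _ _)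
    obtain ⟨a1, a2, a3⟩ := H (z₀ + x) (by simpa using hx1.trans_le (min_le_left _ _))
    have lb : |Real.log ‖x‖| ≤ ‖x‖⁻¹ := by
      have := Real.abs_log_mul_self_lt ‖x‖ hxn hx2
      rw [abs_mul, abs_of_pos hxn] at this
      rw [← one_div, le_div_iff₀ hxn]; exact this.le
    have hi : 1 ≤ ‖x‖⁻¹ := (one_le_inv₀ hxn).2 hx2
    simp only [Function.comp_apply, a1, add_sub_cancel_left, smul_eq_mul, norm_mul, norm_pow]
    rw [Real.log_mul (pow_pos hxn n).ne' (norm_ne_zero_iff.2 a3), Real.log_pow, Real.rpow_neg_one,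
      Real.norm_eq_abs, add_mul]
    refine (abs_add_le _ _).trans (add_le_add ?_ ?_)
    · rw [abs_mul, Nat.abs_cast]; gcongr
    · have : 0 ≤ K := by positivity
      nlinarith
  · have : Measurable (fun z : ℂ => Real.log ‖f z‖) :=
      Real.measurable_log.comp hf.continuous.norm.measurable
    exact (this.comp (measurable_const_add z₀)).aestronglyMeasurable

lemma ae_notMem : ∀ᵐ z : ℂ, z ∉ L.lattice := by
  have := (lattice_countable L).measure_zero (volume : Measure ℂ)
  exact measure_eq_zero_iff_ae_notMem.1 this

lemma logPsi_loc : LocallyIntegrable (fun z : ℂ => Real.log (Psi L z)) := by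
  have h1 := log_loc (sigmaStar L.ω₁ L.ω₂) ss_diff (by
    intro z h
    have hd : Dense {z | gk L (bconst L.ω₁ L.ω₂) z ≠ 0} := gk_dense L _
    rw [← sigmaStar_eq] at hd
    obtain ⟨w, hw, hw'⟩ := (hd.inter_nhds_nonempty h)
    exact hw hw')
  have h2 : LocallyIntegrable (fun z : ℂ => ‖z‖ ^ 2) :=
    Continuous.locallyIntegrable (by fun_prop)
  refine (h1.sub h2).congr ?_
  filter_upwards [ae_notMem (L := L)] with z hz
  simp [log_Psi z hz]

lemma A_eq : Aconst L.ω₁ L.ω₂ = 2 / Real.pi * ∫ z in fundDomain L.ω₁ L.ω₂, Real.log (Psi L z) := by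
  rw [Aconst]; congr 1
  refine integral_congr_ae ?_
  filter_upwards [ae_restrict_of_ae (ae_notMem (L := L))] with z hz
  rw [log_Psi z hz]

lemma int_scale (c : ℂ) (hc : c ≠ 0) (F : ℂ → ℝ) : ∫ z, F (c * z) = (‖c‖ ^ 2)⁻¹ * ∫ z, F z := by
  have hn : ‖c‖ ≠ 0 := norm_ne_zero_iff.2 hc
  let u : Circle := ⟨c / ‖c‖, by simp [Submonoid.unitSphere, hn]⟩
  have e : ∀ z, c * z = rotation u (‖c‖ • z) := by
    intro z
    rw [rotation_apply, Complex.real_smul]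
    change c * z = (c / ‖c‖) * _
    have hn' : (‖c‖ : ℂ) ≠ 0 := by exact_mod_cast hn
    field_simp
  simp_rw [e]
  rw [Measure.integral_comp_smul volume (fun z => F (rotation u z)) ‖c‖]
  have := (rotation u).measurePreserving.integral_comp' (f := (rotation u).toMeasurableEquiv) F
  rw [show (∫ z, F (rotation u z)) = ∫ z, F z from this]
  simp

end SG
end

section
open MeasureTheory Filter Topology
namespace SG
variable {L W : PeriodPair} {N : ℕ} {c : ℂ} {ζ : Fin N → ℂ}

lemma ex_unique' {w w' x : ℂ} (hw : w ∈ W.lattice) (hw' : w' ∈ W.lattice)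
    (h : w + x ∈ fundDomain W.ω₁ W.ω₂) (h' : w' + x ∈ fundDomain W.ω₁ W.ω₂) : w = w' := by
  have := (ex_unique (L := W) x).unique (y₁ := ⟨w, hw⟩) (y₂ := ⟨w', hw'⟩) h h'
  exact congrArg Subtype.val this

lemma fd_base : IsAddFundamentalDomain L.lattice.toAddSubgroup (fundDomain L.ω₁ L.ω₂) volume :=
  fd_of _ fd_meas ex_unique

/-- translated fundamental domain -/
lemma fd_tr (a : ℂ) : IsAddFundamentalDomain L.lattice.toAddSubgroup
    ((fun z => z - a) ⁻¹' (fundDomain L.ω₁ L.ω₂)) volume := by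
  refine fd_of _ ((measurable_sub_const a) fd_meas) fun x => ?_
  have := ex_unique (L := L) (x - a)
  simpa only [Set.mem_preimage, add_sub_assoc] using this

lemma logPsi_int (hL : Good L) (a : ℂ) :
    IntegrableOn (fun z => Real.log (Psi L (z - a))) (fundDomain L.ω₁ L.ω₂) ∧
    ∫ z in fundDomain L.ω₁ L.ω₂, Real.log (Psi L (z - a)) =
      ∫ z in fundDomain L.ω₁ L.ω₂, Real.log (Psi L z) := by
  have h0 : IntegrableOn (fun z => Real.log (Psi L z)) (fundDomain L.ω₁ L.ω₂) :=
    (logPsi_loc.integrableOn_isCompact fd_bdd.isCompact_closure).mono_set subset_closure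
  have per : ∀ w ∈ L.lattice, ∀ z, Real.log (Psi L (z + w - a)) = Real.log (Psi L (z - a)) := by
    intro w hw z
    rw [add_sub_right_comm, hL.Psi_per w hw]
  have mp := measurePreserving_sub_right (volume : Measure ℂ) a
  have emb : MeasurableEmbedding (fun z : ℂ => z - a) := (MeasurableEquiv.subRight a).measurableEmbedding
  constructor
  · refine fd_intOn (fd_tr a) fd_base (fun z => Real.log (Psi L (z - a))) per ?_
    exact (mp.integrableOn_comp_preimage emb).2 h0
  · rw [fd_int fd_base (fd_tr a) (fun z => Real.log (Psi L (z - a))) per]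
    exact mp.setIntegral_preimage_emb emb (fun z => Real.log (Psi L z)) _

def EE (W : PeriodPair) (c : ℂ) (ζ : Fin N → ℂ) (j : Fin N) : Set ℂ :=
  (fun z => c * (z - ζ j)) ⁻¹' (fundDomain W.ω₁ W.ω₂)

lemma EE_meas (j : Fin N) : MeasurableSet (EE W c ζ j) :=
  ((measurable_sub_const (ζ j)).const_mul c) fd_meas

lemma Cov.fd_E (h : Cov L W N c ζ) :
    IsAddFundamentalDomain L.lattice.toAddSubgroup (⋃ j, EE W c ζ j) volume := by
  refine fd_of _ (MeasurableSet.iUnion EE_meas) fun x => ?_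
  obtain ⟨⟨w', hw'⟩, hx, -⟩ := ex_unique (L := W) (c * x)
  have hc := h.c0
  have ecy : c * (-(w' / c)) = - w' := by field_simp
  obtain ⟨j, hj, hj'⟩ := h.hrep (-(w' / c)) (by rw [ecy]; exact neg_mem hw')
  have key : ∀ (w : ℂ) (k : Fin N), w ∈ L.lattice → c * (w + x - ζ k) ∈ fundDomain W.ω₁ W.ω₂ →
      w = w' / c + ζ k := by
    intro w k hw hk
    have e : c * (w + x - ζ k) = (c * w - c * ζ k) + c * x := by ring
    rw [e] at hk
    have := ex_unique' (sub_mem (h.hsub w hw) (h.hmem k)) hw' hk hx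
    rw [← this]; field_simp; ring
  refine ⟨⟨w' / c + ζ j, ?_⟩, ?_, ?_⟩
  · have := neg_mem hj
    rwa [neg_sub, sub_neg_eq_add, add_comm] at this
  · refine Set.mem_iUnion.2 ⟨j, ?_⟩
    have : c * (w' / c + ζ j + x - ζ j) = w' + c * x := by field_simp; ring
    simpa only [EE, Set.mem_preimage, this] using hx
  · rintro ⟨w, hw⟩ hwx
    obtain ⟨k, hk⟩ := Set.mem_iUnion.1 hwx
    have e := key w k hw hk
    have : k = j := hj' k (by
      have e2 : -(w' / c) - ζ k = - w := by rw [e]; ring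
      change -(w' / c) - ζ k ∈ L.lattice
      rw [e2]; exact neg_mem hw)
    subst this
    exact Subtype.ext e

lemma Cov.EE_disj (h : Cov L W N c ζ) : Pairwise (Function.onFun Disjoint (EE W c ζ)) := by
  intro j k hjk
  refine Set.disjoint_left.2 fun x hj hk => hjk ?_
  have e : ∀ i, c * (x - ζ i) = (-(c * ζ i)) + c * x := fun i => by ring
  have hj2 : c * (x - ζ j) ∈ fundDomain W.ω₁ W.ω₂ := hj
  have hk2 : c * (x - ζ k) ∈ fundDomain W.ω₁ W.ω₂ := hk
  rw [e] at hj2 hk2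
  have := ex_unique' (neg_mem (h.hmem j)) (neg_mem (h.hmem k)) hj2 hk2
  have e3 : ζ j = ζ k := mul_left_cancel₀ h.c0 (neg_injective this)
  refine (h.hrep (ζ j) (h.hmem j)).unique ?_ ?_
  · simp
  · simp [e3]

lemma Cov.int_W (h : Cov L W N c ζ)
    (hi : IntegrableOn (fun z => Real.log (Psi W (c * z))) (fundDomain L.ω₁ L.ω₂)) :
    ∫ z in fundDomain L.ω₁ L.ω₂, Real.log (Psi W (c * z)) =
      ∫ z in fundDomain W.ω₁ W.ω₂, Real.log (Psi W z) := by
  have per : ∀ w ∈ L.lattice, ∀ z, Real.log (Psi W (c * (z + w))) = Real.log (Psi W (c * z)) := by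
    intro w hw z
    rw [mul_add, h.gW.Psi_per _ (h.hsub w hw)]
  have hiE := fd_intOn fd_base h.fd_E _ per hi
  rw [fd_int fd_base h.fd_E _ per, integral_iUnion_fintype EE_meas h.EE_disj
    (fun j => hiE.mono_set (Set.subset_iUnion _ j))]
  have : ∀ j, ∫ z in EE W c ζ j, Real.log (Psi W (c * z)) =
      (N : ℝ)⁻¹ * ∫ z in fundDomain W.ω₁ W.ω₂, Real.log (Psi W z) := by
    intro j
    rw [← integral_indicator (EE_meas j), ← integral_indicator fd_meas, ← h.hc,
      ← int_scale c h.c0, ← integral_sub_right_eq_self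
        (fun z => (fundDomain W.ω₁ W.ω₂).indicator (fun z => Real.log (Psi W z)) (c * z)) (ζ j)]
    refine integral_congr_ae (Eventually.of_forall fun z => ?_)
    by_cases hz : z ∈ EE W c ζ j
    · have hz' : c * (z - ζ j) ∈ fundDomain W.ω₁ W.ω₂ := hz
      simp only [Set.indicator_of_mem hz, Set.indicator_of_mem hz']
      rw [← h.gW.Psi_per _ (h.hmem j) (c * (z - ζ j)), ← mul_add, sub_add_cancel]
    · have hz' : c * (z - ζ j) ∉ fundDomain W.ω₁ W.ω₂ := hz
      simp only [Set.indicator_of_notMem hz, Set.indicator_of_notMem hz']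
  rw [Finset.sum_congr rfl fun j _ => this j]
  have : (N : ℝ) ≠ 0 := by have := h.N1; positivity
  simp; field_simp

lemma Cov.final (h : Cov L W N c ζ) (z : ℂ) (hz : c * z ∉ W.lattice) :
    ∑ j, Utorus L.ω₁ L.ω₂ z (ζ j) =
      Real.log ‖sigmaStar W.ω₁ W.ω₂ (c * z)‖ - (N : ℝ) * ‖z‖ ^ 2 - Aconst W.ω₁ W.ω₂ := by
  obtain ⟨C, hC⟩ := h.log_eq
  have hae : ∀ᵐ z : ℂ, c * z ∉ W.lattice := by
    have hcount : ((fun z => c * z) ⁻¹' (W.lattice : Set ℂ)).Countable :=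
      (lattice_countable W).preimage (mul_right_injective₀ h.c0)
    exact measure_eq_zero_iff_ae_notMem.1 (hcount.measure_zero volume)
  set D := fundDomain L.ω₁ L.ω₂ with hD
  have hI : IntegrableOn (fun z => ∑ j, Real.log (Psi L (z - ζ j))) D :=
    integrable_finsetSum _ fun j _ => (logPsi_int h.gL (ζ j)).1
  have hfin : volume D ≠ ⊤ := fd_bdd.measure_lt_top.ne
  have hcst : IntegrableOn (fun _ : ℂ => C) D := integrableOn_const hfin
  have heq : (fun z => (∑ j, Real.log (Psi L (z - ζ j))) - C) =ᵐ[volume.restrict D]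
      fun z => Real.log (Psi W (c * z)) := by
    filter_upwards [ae_restrict_of_ae hae] with z hz
    rw [hC z hz]; ring
  have hIW := (hI.sub hcst).congr heq
  have e1 := h.int_W hIW
  rw [← integral_congr_ae heq, integral_sub hI hcst,
    integral_finsetSum _ (fun j _ => (logPsi_int h.gL (ζ j)).1),
    Finset.sum_congr rfl fun j _ => (logPsi_int h.gL (ζ j)).2, setIntegral_const,
    h.gL.vol] at e1
  have AL := A_eq (L := L)
  have AW := A_eq (L := W)
  rw [← e1] at AW
  have hpi := Real.pi_ne_zero
  have hCe : C = N * Aconst L.ω₁ L.ω₂ - Aconst W.ω₁ W.ω₂ := by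
    rw [AW, AL]
    simp
    field_simp
    ring
  have e2 := hC z hz
  rw [log_Psi _ hz, norm_mul, mul_pow, h.hc,
    Finset.sum_congr rfl fun j _ => log_Psi _ (h.notMem z hz j)] at e2
  have : ∑ j, Utorus L.ω₁ L.ω₂ z (ζ j) = (∑ j, (Real.log ‖sigmaStar L.ω₁ L.ω₂ (z - ζ j)‖ -
      ‖z - ζ j‖ ^ 2)) - N * Aconst L.ω₁ L.ω₂ := by
    simp [Utorus, Finset.sum_sub_distrib]
  rw [this, e2, hCe]; ring

lemma indep_of (a b : ℂ) (h1 : a.im = 0) (h1' : 0 < a.re) (h2 : 0 < b.im) :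
    LinearIndependent ℝ ![a, b] := by
  rw [LinearIndependent.pair_iff]
  intro s t h
  have hi := congrArg Complex.im h
  have hr := congrArg Complex.re h
  simp [h1] at hi hr
  have ht : t = 0 := hi.resolve_right h2.ne'
  subst ht
  simp at hr
  exact ⟨hr.resolve_right h1'.ne', rfl⟩

lemma mem_ls {x : ℂ} : x ∈ latticeSet L.ω₁ L.ω₂ ↔ x ∈ L.lattice := by
  rw [PeriodPair.mem_lattice]
  constructor
  · rintro ⟨m, n, h⟩; exact ⟨m, n, h.symm⟩
  · rintro ⟨m, n, h⟩; exact ⟨m, n, h.symm⟩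

end SG
end

/-- the sum of translates of the unipolar Green function over a
complete set of representatives of `Λ_N/Λ` equals the unipolar Green function
of the renormalized superlattice `Λ'_N = √N·Λ_N` (whose generators are rotated
by the unimodular constant `u` so that the first one is positive real),
evaluated at `√N·z`. -/
theorem sum_green_eq_superlattice_green (ω₁ ω₂ : ℂ)
    (h1 : ω₁.im = 0) (h1' : 0 < ω₁.re) (h2 : 0 < ω₂.im)
    (harea : ω₁.re * ω₂.im = Real.pi / 2)
    (N : ℕ) (hN : 1 ≤ N)
    (ω₁' ω₂' : ℂ)
    (hω₁' : ω₁' = ((Nat.sqrt N : ℂ) * ω₁ + ω₂) / (N : ℂ))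
    (hω₂' : ω₂' = (-(((N - Nat.sqrt N ^ 2 : ℕ) : ℂ)) * ω₁ + (Nat.sqrt N : ℂ) * ω₂) / (N : ℂ))
    (ζ : Fin N → ℂ)
    (hζmem : ∀ j, ζ j ∈ latticeSet ω₁' ω₂')
    (hζrep : ∀ x ∈ latticeSet ω₁' ω₂', ∃! j : Fin N, x - ζ j ∈ latticeSet ω₁ ω₂)
    (u : ℂ) (hu : ‖u‖ = 1)
    (hrot : (u * ((Real.sqrt N : ℂ) * ω₁')).im = 0)
    (hrot' : 0 < (u * ((Real.sqrt N : ℂ) * ω₁')).re)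
    (z : ℂ) (hz : z ∉ latticeSet ω₁' ω₂') :
    ∑ j, Utorus ω₁ ω₂ z (ζ j) =
      Real.log ‖sigmaStar (u * ((Real.sqrt N : ℂ) * ω₁')) (u * ((Real.sqrt N : ℂ) * ω₂'))
          (u * ((Real.sqrt N : ℂ) * z))‖ -
        (N : ℝ) * ‖z‖ ^ 2 -
        Aconst (u * ((Real.sqrt N : ℂ) * ω₁')) (u * ((Real.sqrt N : ℂ) * ω₂')) := by
  have hNpos : (0 : ℝ) < N := by exact_mod_cast hN
  have hN0 : (N : ℂ) ≠ 0 := by exact_mod_cast hNpos.ne'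
  have hsq : Nat.sqrt N ^ 2 ≤ N := Nat.sqrt_le' N
  set s := Nat.sqrt N with hs
  rw [Nat.cast_sub hsq, Nat.cast_pow] at hω₂'
  -- the area of the rotated superlattice
  have area0 : ((starRingEnd ℂ) ω₁' * ω₂').im = (N : ℝ)⁻¹ * (Real.pi / 2) := by
    have e1 : (starRingEnd ℂ) ω₁' * ω₂' =
        ((((N : ℝ) ^ 2)⁻¹ : ℝ) : ℂ) * ((((s : ℝ) : ℂ) * (starRingEnd ℂ) ω₁ + (starRingEnd ℂ) ω₂) *
          (-(((N : ℝ) - (s : ℝ) ^ 2 : ℝ) : ℂ) * ω₁ + ((s : ℝ) : ℂ) * ω₂)) := by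
      rw [hω₁', hω₂']
      simp only [map_div₀, map_add, map_mul, map_natCast]
      push_cast
      field_simp
    rw [e1, Complex.im_ofReal_mul]
    have e2 : (((((s : ℝ) : ℂ) * (starRingEnd ℂ) ω₁ + (starRingEnd ℂ) ω₂) *
          (-(((N : ℝ) - (s : ℝ) ^ 2 : ℝ) : ℂ) * ω₁ + ((s : ℝ) : ℂ) * ω₂))).im =
          N * (ω₁.re * ω₂.im) := by
      simp only [Complex.mul_im, Complex.mul_re, Complex.add_im, Complex.add_re, Complex.neg_re,
        Complex.neg_im, Complex.ofReal_re, Complex.ofReal_im, Complex.conj_re, Complex.conj_im, h1]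
      ring
    rw [e2, harea]
    field_simp
  have sqN : ‖u * (Real.sqrt N : ℂ)‖ ^ 2 = N := by
    rw [norm_mul, hu, one_mul, Complex.norm_real, Real.norm_eq_abs, sq_abs,
      Real.sq_sqrt hNpos.le]
  set c := u * (Real.sqrt N : ℂ) with hc
  rw [← mul_assoc, ← hc] at hrot hrot'
  simp only [← mul_assoc]
  simp only [← hc]
  have areaW : (c * ω₁').re * (c * ω₂').im = Real.pi / 2 := by
    have e3 : ((starRingEnd ℂ) (c * ω₁') * (c * ω₂')).im = (c * ω₁').re * (c * ω₂').im := by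
      rw [Complex.mul_im, Complex.conj_re, Complex.conj_im, hrot]; ring
    have e4 : (starRingEnd ℂ) (c * ω₁') * (c * ω₂') =
        ((‖c‖ ^ 2 : ℝ) : ℂ) * ((starRingEnd ℂ) ω₁' * ω₂') := by
      rw [map_mul]
      have := Complex.conj_mul' c
      push_cast
      rw [← this]; ring
    rw [← e3, e4, Complex.im_ofReal_mul, sqN, area0]
    field_simp
  have him : 0 < (c * ω₂').im := by
    have : 0 < (c * ω₁').re * (c * ω₂').im := by rw [areaW]; positivity
    exact (pos_iff_pos_of_mul_pos this).1 hrot'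
  let L : PeriodPair := ⟨ω₁, ω₂, SG.indep_of _ _ h1 h1' h2⟩
  let W : PeriodPair := ⟨c * ω₁', c * ω₂', SG.indep_of _ _ hrot hrot' him⟩
  have gL : SG.Good L := ⟨h1, h1', h2, harea⟩
  have gW : SG.Good W := ⟨hrot, hrot', him, areaW⟩
  have hc0 : c ≠ 0 := by
    intro h; rw [h] at hrot'; simp at hrot'
  have hW : ∀ x, c * x ∈ W.lattice ↔ x ∈ latticeSet ω₁' ω₂' := by
    intro x
    rw [PeriodPair.mem_lattice]
    refine exists_congr fun m => exists_congr fun n => ?_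
    change m * (c * ω₁') + n * (c * ω₂') = c * x ↔ _
    rw [show (m : ℂ) * (c * ω₁') + n * (c * ω₂') = c * (m * ω₁' + n * ω₂') by ring,
      mul_right_inj' hc0, eq_comm]
  have cov : SG.Cov L W N c ζ := by
    refine ⟨gL, gW, hN, sqN, ?_, fun j => (hW _).2 (hζmem j), ?_⟩
    · intro w hw
      obtain ⟨m, n, rfl⟩ := PeriodPair.mem_lattice.1 hw
      rw [hW]
      refine ⟨m * s + n * (N - s * s), -m + n * s, ?_⟩
      change m * ω₁ + n * ω₂ = _
      rw [hω₁', hω₂']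
      push_cast
      field_simp
      ring
    · intro x hx
      obtain ⟨j, hj, hj'⟩ := hζrep x ((hW x).1 hx)
      exact ⟨j, SG.mem_ls.1 hj, fun k hk => hj' k (SG.mem_ls.2 hk)⟩
  exact cov.final z (fun h => hz ((hW z).1 h))
end

section
/- Let Λ = ω₁ℤ + ω₂ℤ with ω₁ > 0 real, Im ω₂ > 0, and ω₁·Im ω₂ = π/2. There exists a constant K > 1, depending only on Λ, with the following property: for every integer N ≥ 1, if ζ₁, …, ζ_N ∈ ℂ is a complete set of representatives of the cosets of Λ in the superlattice Λ_N generated by (⌊√N⌋ω₁ + ω₂)/N and (−(N−⌊√N⌋²)ω₁ + ⌊√N⌋ω₂)/N, then for every real β ≥ 0 one has 1 ≤ (2/π) ∫_D exp(β Σ_{j=1}^{N} U_{ℂ/Λ}(z, ζ_j)) dA(z) ≤ K^β, where D is a fundamental domain of Λ. -/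
open MeasureTheory

section
open MeasureTheory Filter Topology

noncomputable def ww (ω₁ ω₂ : ℂ) (p : ℤ × ℤ) : ℂ := (p.1 : ℂ) * ω₁ + (p.2 : ℂ) * ω₂

noncomputable def ef (x : ℂ) : ℂ := (1 - x) * Complex.exp (x + x ^ 2 / 2)

lemma ef_zero : ef 0 = 1 := by simp [ef]

lemma ef_bound {x : ℂ} (hx : ‖x‖ ≤ 1 / 2) : ‖ef x - 1‖ ≤ 2 * ‖x‖ ^ 3 := by
  set y := x + x ^ 2 / 2 with hy
  have hx0 := norm_nonneg x
  have hyx : ‖y‖ ≤ 5 / 4 * ‖x‖ := by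
    have : ‖y‖ ≤ ‖x‖ + ‖x‖ ^ 2 / 2 := by
      refine (norm_add_le _ _).trans ?_
      simp
    nlinarith
  have hy1 : ‖y‖ ≤ 1 := by linarith
  have hb := Complex.exp_bound hy1 (n := 3) (by norm_num)
  simp only [Finset.sum_range_succ, Finset.sum_range_zero] at hb
  norm_num [Nat.factorial] at hb
  have e1 : ef x - 1 = (1 - x) * (Complex.exp y - (1 + y + y ^ 2 / 2)) + (x ^ 4 / 8 - x * y ^ 2 / 2) := by
    simp only [ef, ← hy]
    have : (1 - x) * (1 + y + y ^ 2 / 2) = 1 + (x ^ 4 / 8 - x * y ^ 2 / 2) := by rw [hy]; ring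
    linear_combination this
  rw [e1]
  have h2 : ‖1 - x‖ ≤ 3 / 2 := by
    refine (norm_sub_le _ _).trans ?_
    simp; linarith
  have h3 : ‖x ^ 4 / 8 - x * y ^ 2 / 2‖ ≤ ‖x‖ ^ 4 / 8 + ‖x‖ * ‖y‖ ^ 2 / 2 := by
    refine (norm_sub_le _ _).trans ?_
    simp
  have h4 : ‖(1 - x) * (Complex.exp y - (1 + y + y ^ 2 / 2))‖ ≤ 3 / 2 * (‖y‖ ^ 3 * (2 / 9)) := by
    rw [norm_mul]; gcongr
  have h5 : ‖y‖ ^ 3 ≤ (5 / 4 * ‖x‖) ^ 3 := by gcongr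
  have h6 : ‖x‖ * ‖y‖ ^ 2 ≤ ‖x‖ * (5 / 4 * ‖x‖) ^ 2 := by gcongr
  have h7 : ‖x‖ ^ 4 ≤ ‖x‖ ^ 3 * (1 / 2) := by
    rw [pow_succ]; gcongr
  refine (norm_add_le _ _).trans ?_
  have : 0 ≤ ‖x‖ ^ 3 := by positivity
  nlinarith

section
variable {ω₁ ω₂ : ℂ}

lemma ww_neg (p : ℤ × ℤ) : ww ω₁ ω₂ (-p) = - ww ω₁ ω₂ p := by simp [ww]; ring

lemma tau_im (h1 : ω₁.im = 0) (h1' : 0 < ω₁.re) (h2 : 0 < ω₂.im) : 0 < (ω₂ / ω₁).im := by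
  have : ω₁ = (ω₁.re : ℂ) := by apply Complex.ext <;> simp [h1]
  rw [this, Complex.div_ofReal_im]; positivity

lemma om_ne (h1' : 0 < ω₁.re) : ω₁ ≠ 0 := by
  rintro rfl; simp at h1'

lemma ww_eq_zero (h1 : ω₁.im = 0) (h1' : 0 < ω₁.re) (h2 : 0 < ω₂.im) {p : ℤ × ℤ}
    (hp : ww ω₁ ω₂ p = 0) : p = 0 := by
  have hi := congrArg Complex.im hp
  have hr := congrArg Complex.re hp
  simp [ww, h1] at hi hr
  rcases hi with hi | hi
  · simp [hi] at hr
    rcases hr with hr | hr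
    · exact Prod.ext hr hi
    · exact absurd hr h1'.ne'
  · exact absurd hi h2.ne'

lemma summable_ww (h1 : ω₁.im = 0) (h1' : 0 < ω₁.re) (h2 : 0 < ω₂.im) :
    Summable (fun p : ℤ × ℤ => (‖ww ω₁ ω₂ p‖⁻¹) ^ 3) := by
  set τ : UpperHalfPlane := ⟨ω₂ / ω₁, tau_im h1 h1' h2⟩ with hτ
  have hs := EisensteinSeries.summable_one_div_norm_rpow (k := 3) (by norm_num)
  have hs2 := (hs.mul_left ((EisensteinSeries.r τ) ^ (-(3:ℝ))))
  have hs3 := (hs2.of_nonneg_of_le (fun _ => by positivity)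
    (fun x => EisensteinSeries.summand_bound τ (by norm_num : (0:ℝ) ≤ 3) x)).mul_left ((‖ω₁‖⁻¹) ^ 3)
  have hs4 := (((finTwoArrowEquiv ℤ).symm.trans (Equiv.refl _)).summable_iff.mpr hs3)
  have hs5 := (Equiv.prodComm ℤ ℤ).summable_iff.mpr hs4
  refine hs5.congr ?_
  rintro ⟨m, n⟩
  have hne : ω₁ ≠ 0 := om_ne h1'
  have : ww ω₁ ω₂ (m, n) = ω₁ * ((n : ℂ) * (ω₂ / ω₁) + m) := by
    simp [ww]; field_simp; ring
  rw [this]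
  simp [hτ, finTwoArrowEquiv, UpperHalfPlane.coe_mk]
  rw [mul_pow, inv_pow, inv_pow, mul_comm]

lemma finite_ww (h1 : ω₁.im = 0) (h1' : 0 < ω₁.re) (h2 : 0 < ω₂.im) (R : ℝ) (hR : 0 < R) :
    ∀ᶠ p in (cofinite : Filter (ℤ × ℤ)), p = 0 ∨ R ≤ ‖ww ω₁ ω₂ p‖ := by
  have := (summable_ww h1 h1' h2).tendsto_cofinite_zero
  have h := this.eventually (gt_mem_nhds (show (0:ℝ) < (R⁻¹) ^ 3 by positivity))
  filter_upwards [h] with p hp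
  by_cases hp0 : p = 0
  · exact Or.inl hp0
  right
  have hw : 0 < ‖ww ω₁ ω₂ p‖ := norm_pos_iff.mpr (fun h => hp0 (ww_eq_zero h1 h1' h2 h))
  have := lt_of_pow_lt_pow_left₀ 3 (by positivity) hp
  exact ((inv_lt_inv₀ hw hR).mp this).le

lemma ef_unif (h1 : ω₁.im = 0) (h1' : 0 < ω₁.re) (h2 : 0 < ω₂.im) (R : ℝ) (hR : 0 < R) :
    ∀ᶠ p in (cofinite : Filter (ℤ × ℤ)), ∀ z ∈ Metric.ball (0:ℂ) R,
      ‖ef (z / ww ω₁ ω₂ p) - 1‖ ≤ 2 * R ^ 3 * (‖ww ω₁ ω₂ p‖⁻¹) ^ 3 := by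
  filter_upwards [finite_ww h1 h1' h2 (2 * R) (by positivity)] with p hp z hz
  have hz : ‖z‖ < R := by simpa using hz
  rcases hp with rfl | hp
  · simp [ww, ef_zero]
  have hw : 0 < ‖ww ω₁ ω₂ p‖ := by linarith
  have hx : ‖z / ww ω₁ ω₂ p‖ ≤ 1 / 2 := by
    rw [norm_div, div_le_iff₀ hw]; linarith
  refine (ef_bound hx).trans ?_
  rw [norm_div, div_eq_mul_inv, mul_pow]
  rw [mul_assoc]
  gcongr

lemma ef_summable (h1 : ω₁.im = 0) (h1' : 0 < ω₁.re) (h2 : 0 < ω₂.im) (z : ℂ) :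
    Summable (fun p : ℤ × ℤ => ‖ef (z / ww ω₁ ω₂ p) - 1‖) := by
  have hs := (summable_ww h1 h1' h2).mul_left (2 * (‖z‖ + 1) ^ 3)
  refine summable_of_isBigO hs ?_
  refine Asymptotics.IsBigO.of_bound 1 ?_
  filter_upwards [ef_unif h1 h1' h2 (‖z‖ + 1) (by positivity)] with p hp
  have := hp z (by simp)
  rw [norm_norm, one_mul, Real.norm_of_nonneg (by positivity)]
  exact this

lemma ef_mult (h1 : ω₁.im = 0) (h1' : 0 < ω₁.re) (h2 : 0 < ω₂.im) (z : ℂ) :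
    Multipliable (fun p : ℤ × ℤ => ef (z / ww ω₁ ω₂ p)) := by
  have := multipliable_one_add_of_summable (ef_summable h1 h1' h2 z)
  simpa using this

lemma wSigma_eq (z : ℂ) : wSigma ω₁ ω₂ z = z * ∏' p : ℤ × ℤ, ef (z / ww ω₁ ω₂ p) := by
  unfold wSigma
  congr 1
  rw [← tprod_subtype_eq_of_mulSupport_subset (s := {p : ℤ × ℤ | p ≠ 0})]
  · refine tprod_congr (fun p => ?_)
    simp only [ef, ww]
    congr 2
    rw [div_pow, div_div, mul_comm (2:ℂ)]
  · intro p hp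
    rintro rfl
    simp [ww, ef_zero] at hp

lemma wSigma_diff (h1 : ω₁.im = 0) (h1' : 0 < ω₁.re) (h2 : 0 < ω₂.im) :
    Differentiable ℂ (wSigma ω₁ ω₂) := by
  have : wSigma ω₁ ω₂ = fun z => z * ∏' p : ℤ × ℤ, (1 + (ef (z / ww ω₁ ω₂ p) - 1)) := by
    ext z; rw [wSigma_eq]; simp
  rw [this]
  refine differentiable_id.mul ?_
  intro z
  set R := ‖z‖ + 1
  have hR : 0 < R := by positivity
  have hd : ∀ p : ℤ × ℤ, Differentiable ℂ (fun z => ef (z / ww ω₁ ω₂ p) - 1) := by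
    intro p; unfold ef; fun_prop
  have hu := Summable.hasProdLocallyUniformlyOn_one_add (K := Metric.ball (0:ℂ) R) Metric.isOpen_ball
    ((summable_ww h1 h1' h2).mul_left (2 * R ^ 3)) (ef_unif h1 h1' h2 R hR)
    (fun p => (hd p).continuous.continuousOn)
  have := hu.differentiableOn (Eventually.of_forall fun s => by
      have := Differentiable.fun_finsetProd (u := s) (fun i _ => (hd i).const_add 1)
      exact this.differentiableOn) Metric.isOpen_ball
  exact this.differentiableAt (Metric.isOpen_ball.mem_nhds (by simp [R]))

lemma wSigma_ne (h1 : ω₁.im = 0) (h1' : 0 < ω₁.re) (h2 : 0 < ω₂.im) {z : ℂ}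
    (hz : ∀ p, z ≠ ww ω₁ ω₂ p) : wSigma ω₁ ω₂ z ≠ 0 := by
  rw [wSigma_eq]
  refine mul_ne_zero ?_ ?_
  · have := hz 0; simpa [ww] using this
  have := tprod_one_add_ne_zero_of_summable (f := fun p : ℤ × ℤ => ef (z / ww ω₁ ω₂ p) - 1) ?_
    (ef_summable h1 h1' h2 z)
  · simpa using this
  · intro p
    simp only [add_sub_cancel, ef]
    refine mul_ne_zero ?_ (Complex.exp_ne_zero _)
    intro h
    have h' : z / ww ω₁ ω₂ p = 1 := (sub_eq_zero.mp h).symm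
    exact hz p (eq_of_div_eq_one h')

lemma wSigma_neg (z : ℂ) : wSigma ω₁ ω₂ (-z) = - wSigma ω₁ ω₂ z := by
  rw [wSigma_eq, wSigma_eq, ← (Equiv.neg (ℤ × ℤ)).tprod_eq]
  simp [ww_neg]

end

end

section
open MeasureTheory Filter Topology UpperHalfPlane

noncomputable def qf (x : ℂ) : ℂ := (1 - x ^ 2) * Complex.exp (x ^ 2)

lemma ef_mul_neg (x : ℂ) : ef x * ef (-x) = qf x := by
  unfold ef qf
  rw [mul_mul_mul_comm, ← Complex.exp_add]
  congr 1
  · ring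
  · congr 1; ring

noncomputable def PL (L : ℕ) (α : ℂ) : ℂ := α * ∏ j ∈ Finset.range L, (1 - α ^ 2 / ((j : ℂ) + 1) ^ 2)

lemma PL_tendsto (α : ℂ) : Tendsto (fun L => PL L α) atTop (𝓝 (Complex.sin (Real.pi * α) / Real.pi)) := by
  have h := (Complex.tendsto_euler_sin_prod α).div_const (Real.pi : ℂ)
  refine h.congr (fun n => ?_)
  have : (Real.pi : ℂ) ≠ 0 := by exact_mod_cast Real.pi_ne_zero
  unfold PL
  field_simp

lemma prod_Icc_succ' (f : ℤ → ℂ) (L : ℕ) : ∏ m ∈ Finset.Icc (-((L:ℤ) + 1)) ((L:ℤ) + 1), f m =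
    f ((L:ℤ) + 1) * f (-((L:ℤ) + 1)) * ∏ m ∈ Finset.Icc (-(L:ℤ)) L, f m := by
  have : Finset.Icc (-((L:ℤ) + 1)) ((L:ℤ) + 1) =
      insert ((L:ℤ) + 1) (insert (-((L:ℤ) + 1)) (Finset.Icc (-(L:ℤ)) L)) := by
    ext x; simp only [Finset.mem_Icc, Finset.mem_insert]; omega
  rw [this, Finset.prod_insert, Finset.prod_insert, mul_assoc]
  · simp only [Finset.mem_Icc]; omega
  · simp only [Finset.mem_Icc, Finset.mem_insert]; omega

lemma prod_Icc_lin (L : ℕ) (α : ℂ) : ∏ m ∈ Finset.Icc (-(L:ℤ)) L, (α + (m : ℂ)) =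
    PL L α * ∏ j ∈ Finset.range L, (-((j : ℂ) + 1) ^ 2) := by
  induction L with
  | zero => simp [PL]
  | succ L ih =>
    have := prod_Icc_succ' (fun m : ℤ => α + (m : ℂ)) L
    push_cast at this ⊢
    rw [this, ih]
    unfold PL
    rw [Finset.prod_range_succ, Finset.prod_range_succ]
    have : (L : ℂ) + 1 ≠ 0 := by exact_mod_cast Nat.succ_ne_zero L
    field_simp
    ring

lemma prod_Icc_ratio (L : ℕ) (α ξ : ℂ) (hα : ∀ m : ℤ, α + m ≠ 0) :
    ∏ m ∈ Finset.Icc (-(L:ℤ)) L, (1 - (ξ / (α + (m : ℂ))) ^ 2) =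
    PL L (α - ξ) * PL L (α + ξ) / PL L α ^ 2 := by
  have h1 : ∀ m ∈ Finset.Icc (-(L:ℤ)) L, (1 - (ξ / (α + (m : ℂ))) ^ 2) =
      (α - ξ + m) * (α + ξ + m) / (α + m) ^ 2 := by
    intro m _
    have := hα m
    field_simp
    ring
  rw [Finset.prod_congr rfl h1, Finset.prod_div_distrib, Finset.prod_mul_distrib, Finset.prod_pow,
    prod_Icc_lin, prod_Icc_lin, prod_Icc_lin]
  have : ∏ j ∈ Finset.range L, (-((j : ℂ) + 1) ^ 2) ≠ 0 := by
    rw [Finset.prod_ne_zero_iff]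
    intro j _
    have : (j : ℂ) + 1 ≠ 0 := by exact_mod_cast Nat.succ_ne_zero j
    simpa using this
  field_simp

lemma prod_Icc_zero (L : ℕ) (ξ : ℂ) :
    ξ ^ 2 * ∏ m ∈ Finset.Icc (-(L:ℤ)) L, (1 - (ξ / (m : ℂ)) ^ 2) = PL L ξ ^ 2 := by
  have : ∏ m ∈ Finset.Icc (-(L:ℤ)) L, (1 - (ξ / (m : ℂ)) ^ 2) =
    (∏ j ∈ Finset.range L, (1 - ξ ^ 2 / ((j : ℂ) + 1) ^ 2)) ^ 2 := by
    induction L with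
    | zero => simp
    | succ L ih =>
      have := prod_Icc_succ' (fun m : ℤ => (1 - (ξ / (m : ℂ)) ^ 2)) L
      push_cast at this ⊢
      rw [this, ih, Finset.prod_range_succ, div_neg, neg_sq, div_pow]
      ring
  rw [this, PL]; ring

noncomputable def sn (x : ℂ) : ℂ := Complex.sin (Real.pi * x)

lemma sn_neg (x : ℂ) : sn (-x) = - sn x := by simp [sn]

lemma sn_add_one (x : ℂ) : sn (x + 1) = - sn x := by
  simp [sn, mul_add, Complex.sin_add_pi]

lemma sn_ne {x : ℂ} (hx : x.im ≠ 0) : sn x ≠ 0 := by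
  unfold sn
  rw [Ne, Complex.sin_eq_zero_iff]
  rintro ⟨k, hk⟩
  have := congrArg Complex.im hk
  simp [Real.pi_ne_zero] at this
  exact hx this

/-- row products -/
lemma row_hasProd_aux {f : ℤ → ℂ} {a : ℂ} (hf : Multipliable f)
    (ha : Tendsto (fun L : ℕ => ∏ m ∈ Finset.Icc (-(L:ℤ)) L, f m) atTop (𝓝 a)) : HasProd f a := by
  have h := hf.hasProd
  have h2 : Tendsto (fun L : ℕ => ∏ m ∈ Finset.Icc (-(L:ℤ)) L, f m) atTop (𝓝 (∏' m, f m)) := by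
    exact h.comp (Finset.tendsto_Icc_neg)
  rw [← tendsto_nhds_unique h2 ha]; exact h

lemma sum_Icc_e2 (τ : ℍ) (n : ℤ) :
    Tendsto (fun L : ℕ => ∑ m ∈ Finset.Icc (-(L:ℤ)) L, (1 / ((n:ℂ) * τ + m)) ^ 2) atTop
      (𝓝 (EisensteinSeries.e2Summand n τ)) := by
  have := (EisensteinSeries.e2Summand_summable n τ).hasSum.comp (Finset.tendsto_Icc_neg)
  refine this.congr (fun L => ?_)
  refine Finset.sum_congr rfl (fun m _ => ?_)
  simp [EisensteinSeries.eisSummand]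

lemma prod_qf (s : Finset ℤ) (g : ℤ → ℂ) (ξ : ℂ) :
    ∏ m ∈ s, qf (ξ / g m) =
    (∏ m ∈ s, (1 - (ξ / g m) ^ 2)) * Complex.exp (ξ ^ 2 * ∑ m ∈ s, (1 / g m) ^ 2) := by
  unfold qf
  rw [Finset.prod_mul_distrib, ← Complex.exp_sum, Finset.mul_sum]
  congr 2
  refine Finset.sum_congr rfl (fun m _ => ?_)
  ring

lemma lin_ne (τ : ℍ) {n : ℤ} (hn : n ≠ 0) (m : ℤ) : (n : ℂ) * τ + m ≠ 0 := by
  intro h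
  have := congrArg Complex.im h
  simp [hn] at this
  exact τ.im_pos.ne' this

lemma row_tendsto (τ : ℍ) {n : ℤ} (hn : n ≠ 0) (ξ : ℂ) :
    Tendsto (fun L : ℕ => ∏ m ∈ Finset.Icc (-(L:ℤ)) L, qf (ξ / ((n:ℂ) * τ + m))) atTop
    (𝓝 (sn (n * τ - ξ) * sn (n * τ + ξ) / sn (n * τ) ^ 2 *
      Complex.exp (ξ ^ 2 * EisensteinSeries.e2Summand n τ))) := by
  simp_rw [prod_qf]
  refine Tendsto.mul ?_ ?_
  · simp_rw [fun L : ℕ => prod_Icc_ratio L (n * τ) ξ (lin_ne τ hn)]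
    have hs : sn (n * τ) ≠ 0 := sn_ne (by simp [hn]; exact τ.im_pos.ne')
    have hpi : (Real.pi : ℂ) ≠ 0 := by exact_mod_cast Real.pi_ne_zero
    have := ((PL_tendsto (n * τ - ξ)).mul (PL_tendsto (n * τ + ξ))).div
      ((PL_tendsto (n * τ)).pow 2) (by
        refine pow_ne_zero _ (div_ne_zero hs hpi))
    have e : sn (n * τ - ξ) * sn (n * τ + ξ) / sn (n * τ) ^ 2 =
      (Complex.sin (Real.pi * (n * τ - ξ)) / Real.pi * (Complex.sin (Real.pi * (n * τ + ξ)) / Real.pi)) /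
       (Complex.sin (Real.pi * (n * τ)) / Real.pi) ^ 2 := by
      simp only [sn] at hs ⊢
      field_simp
    rw [e]
    exact this
  · exact (Complex.continuous_exp.tendsto _).comp ((sum_Icc_e2 τ n).const_mul _)

lemma row0_tendsto (τ : ℍ) (ξ : ℂ) (hξ : ξ ≠ 0) :
    Tendsto (fun L : ℕ => ∏ m ∈ Finset.Icc (-(L:ℤ)) L, qf (ξ / (((0:ℤ):ℂ) * τ + m))) atTop
    (𝓝 ((sn ξ / Real.pi) ^ 2 / ξ ^ 2 *
      Complex.exp (ξ ^ 2 * EisensteinSeries.e2Summand 0 τ))) := by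
  simp_rw [prod_qf]
  refine Tendsto.mul ?_ ?_
  · have := ((PL_tendsto ξ).pow 2).div_const (ξ ^ 2)
    refine this.congr (fun L => ?_)
    rw [← prod_Icc_zero]
    field_simp
    simp
  · exact (Complex.continuous_exp.tendsto _).comp ((sum_Icc_e2 τ 0).const_mul _)

noncomputable def TM (τ : ℂ) (M : ℕ) (ξ : ℂ) : ℂ :=
  sn ξ * ∏ n ∈ Finset.range M,
    (sn (((n:ℂ) + 1) * τ - ξ) * sn (((n:ℂ) + 1) * τ + ξ) / sn (((n:ℂ) + 1) * τ) ^ 2)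

noncomputable def rowv (τ : ℍ) (ξ : ℂ) (n : ℤ) : ℂ :=
  (if n = 0 then (sn ξ / Real.pi) ^ 2 / ξ ^ 2 else sn (n * τ - ξ) * sn (n * τ + ξ) / sn (n * τ) ^ 2) *
      Complex.exp (ξ ^ 2 * EisensteinSeries.e2Summand n τ)

lemma rowv_prod (τ : ℍ) (ξ : ℂ) (hξ : ξ ≠ 0) (M : ℕ) :
    ∏ n ∈ Finset.Icc (-(M:ℤ)) M, rowv τ ξ n = (TM τ M ξ / (Real.pi * ξ)) ^ 2 *
      Complex.exp (ξ ^ 2 * ∑ n ∈ Finset.Icc (-(M:ℤ)) M, EisensteinSeries.e2Summand n τ) := by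
  unfold rowv
  rw [Finset.prod_mul_distrib, ← Complex.exp_sum, Finset.mul_sum]
  congr 1
  induction M with
  | zero => simp [TM]; field_simp
  | succ M ih =>
    have := prod_Icc_succ' (fun n : ℤ =>
      (if n = 0 then (sn ξ / Real.pi) ^ 2 / ξ ^ 2 else sn (n * τ - ξ) * sn (n * τ + ξ) / sn (n * τ) ^ 2)) M
    have e0 : ((M:ℤ) + 1 = 0) = False := by simp; omega
    have e1 : (-((M:ℤ) + 1) = 0) = False := by simp; omega
    push_cast at this ⊢
    rw [this, ih]
    simp only [e0, e1, if_false]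
    unfold TM
    rw [Finset.prod_range_succ]
    push_cast
    have e2 : -((M:ℂ) + 1) * (τ:ℂ) - ξ = -(((M:ℂ) + 1) * τ + ξ) := by ring
    have e3 : -((M:ℂ) + 1) * (τ:ℂ) + ξ = -(((M:ℂ) + 1) * τ - ξ) := by ring
    have e4 : -((M:ℂ) + 1) * (τ:ℂ) = -(((M:ℂ) + 1) * τ) := by ring
    rw [e2, e3, e4, sn_neg, sn_neg, sn_neg]
    have hpi : (Real.pi : ℂ) ≠ 0 := by exact_mod_cast Real.pi_ne_zero
    have hs : sn (((M:ℂ) + 1) * τ) ≠ 0 := sn_ne (by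
      have : (M:ℝ) + 1 ≠ 0 := by positivity
      simp [this]; exact τ.im_pos.ne')
    field_simp

lemma TM_one (τ : ℂ) (M : ℕ) (ξ : ℂ) : TM τ M (ξ + 1) ^ 2 = TM τ M ξ ^ 2 := by
  unfold TM
  have : ∀ a : ℂ, sn (a - (ξ + 1)) * sn (a + (ξ + 1)) = sn (a - ξ) * sn (a + ξ) := by
    intro a
    have h := sn_add_one (a - (ξ + 1))
    have h2 := sn_add_one (a + ξ)
    rw [show a - (ξ + 1) + 1 = a - ξ by ring] at h
    rw [show a + ξ + 1 = a + (ξ + 1) by ring] at h2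
    rw [h, h2]; ring
  simp_rw [this, sn_add_one]
  ring

lemma TM_tau (τ : ℂ) (M : ℕ) (ξ : ℂ) :
    TM τ M (ξ + τ) * sn (M * τ - ξ) = - TM τ M ξ * sn ((M + 1) * τ + ξ) := by
  induction M with
  | zero => simp [TM, sn_neg]; rw [add_comm ξ]; ring
  | succ M ih =>
    have hT : ∀ ξ, TM τ (M + 1) ξ = TM τ M ξ * (sn (((M:ℂ) + 1) * τ - ξ) * sn (((M:ℂ) + 1) * τ + ξ) / sn (((M:ℂ) + 1) * τ) ^ 2) := by
      intro ξ; unfold TM; rw [Finset.prod_range_succ]; ring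
    rw [hT, hT]
    push_cast
    rw [show ((M:ℂ) + 1) * τ - (ξ + τ) = M * τ - ξ by ring,
      show ((M:ℂ) + 1) * τ + (ξ + τ) = (M + 1 + 1) * τ + ξ by ring]
    linear_combination (sn (((M:ℂ) + 1 + 1) * τ + ξ) * sn (((M:ℂ) + 1) * τ - ξ) / sn (((M:ℂ) + 1) * τ) ^ 2) * ih

lemma sn_lim {τ : ℂ} (hτ : 0 < τ.im) (c : ℂ) :
    Tendsto (fun M : ℕ => sn (M * τ + c) * Complex.exp (Complex.I * Real.pi * (M * τ + c))) atTop
      (𝓝 (Complex.I / 2)) := by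
  have h : ∀ x : ℂ, sn x * Complex.exp (Complex.I * Real.pi * x) =
      Complex.I / 2 * (1 - Complex.exp (2 * Complex.I * Real.pi * x)) := by
    intro x
    unfold sn
    rw [Complex.sin, show 2 * Complex.I * Real.pi * x = Complex.I * Real.pi * x + Complex.I * Real.pi * x by ring,
      Complex.exp_add, show Real.pi * x * Complex.I = Complex.I * Real.pi * x by ring,
      show -(Real.pi * x) * Complex.I = - (Complex.I * Real.pi * x) by ring, Complex.exp_neg]
    have := Complex.exp_ne_zero (Complex.I * Real.pi * x)
    field_simp
  simp_rw [h]
  have h0 : Tendsto (fun M : ℕ => Complex.exp (2 * Complex.I * Real.pi * (M * τ + c))) atTop (𝓝 0) := by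
    have : ∀ M : ℕ, Complex.exp (2 * Complex.I * Real.pi * (M * τ + c)) =
        Complex.exp (2 * Complex.I * Real.pi * τ) ^ M * Complex.exp (2 * Complex.I * Real.pi * c) := by
      intro M
      rw [← Complex.exp_nat_mul, ← Complex.exp_add]; congr 1; ring
    simp_rw [this]
    have h1 := (tendsto_pow_atTop_nhds_zero_of_norm_lt_one (x := Complex.exp (2 * Complex.I * Real.pi * τ)) (by
      rw [Complex.norm_exp]
      simp
      positivity)).mul_const (Complex.exp (2 * Complex.I * Real.pi * c))
    simpa using h1
  simpa using (h0.const_sub 1).const_mul (Complex.I / 2)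

end

section
open MeasureTheory Filter Topology UpperHalfPlane

section
variable {ω₁ ω₂ : ℂ}

noncomputable def tauH (h1 : ω₁.im = 0) (h1' : 0 < ω₁.re) (h2 : 0 < ω₂.im) : ℍ := ⟨ω₂ / ω₁, tau_im h1 h1' h2⟩

lemma tauH_coe (h1 : ω₁.im = 0) (h1' : 0 < ω₁.re) (h2 : 0 < ω₂.im) :
    ((tauH h1 h1' h2 : ℍ) : ℂ) = ω₂ / ω₁ := rfl

lemma qf_hasProd (h1 : ω₁.im = 0) (h1' : 0 < ω₁.re) (h2 : 0 < ω₂.im) (z : ℂ) :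
    ∃ a, HasProd (fun p : ℤ × ℤ => qf (z / ww ω₁ ω₂ p)) a ∧ z ^ 2 * a = wSigma ω₁ ω₂ z ^ 2 := by
  have ha := (ef_mult h1 h1' h2 z).hasProd.mul (ef_mult h1 h1' h2 (-z)).hasProd
  refine ⟨(∏' b : ℤ × ℤ, ef (z / ww ω₁ ω₂ b)) * ∏' b : ℤ × ℤ, ef (-z / ww ω₁ ω₂ b), ?_, ?_⟩
  · have e : (fun p : ℤ × ℤ => qf (z / ww ω₁ ω₂ p)) = fun b => ef (z / ww ω₁ ω₂ b) * ef (-z / ww ω₁ ω₂ b) := by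
      ext p
      rw [neg_div, ef_mul_neg]
    rw [e]; exact ha
  · have e1 := wSigma_eq (ω₁ := ω₁) (ω₂ := ω₂) z
    have e2 := wSigma_eq (ω₁ := ω₁) (ω₂ := ω₂) (-z)
    rw [wSigma_neg] at e2
    have : wSigma ω₁ ω₂ z ^ 2 = - (wSigma ω₁ ω₂ z * - wSigma ω₁ ω₂ z) := by ring
    rw [this, e2, e1]; ring

lemma z_div_ww (h1' : 0 < ω₁.re) (z : ℂ) (m n : ℤ) :
    z / ww ω₁ ω₂ (m, n) = (z / ω₁) / (n * (ω₂ / ω₁) + m) := by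
  have h := om_ne h1'
  unfold ww
  rw [div_div]
  congr 1
  simp only
  field_simp
  ring

lemma TM_lim (h1 : ω₁.im = 0) (h1' : 0 < ω₁.re) (h2 : 0 < ω₂.im) : ∃ G : ℂ, ∀ z : ℂ,
    Tendsto (fun M => TM (ω₂ / ω₁) M (z / ω₁) ^ 2) atTop
      (𝓝 ((Real.pi / ω₁) ^ 2 * (wSigma ω₁ ω₂ z ^ 2 * Complex.exp (-(G * z ^ 2))))) := by
  set τ := tauH h1 h1' h2 with hτ
  obtain ⟨G0, hG⟩ := EisensteinSeries.summable_e2Summand_symmetricIcc τ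
  rw [HasSum, SummationFilter.symmetricIcc_eq_map_Icc_nat, tendsto_map'_iff] at hG
  have hω := om_ne h1'
  have hpi : (Real.pi : ℂ) ≠ 0 := by exact_mod_cast Real.pi_ne_zero
  refine ⟨G0 / ω₁ ^ 2, fun z => ?_⟩
  by_cases hz : z = 0
  · subst hz
    rw [wSigma_eq]
    simp [TM, sn]
  set ξ := z / ω₁ with hξ
  have hξ0 : ξ ≠ 0 := div_ne_zero hz hω
  obtain ⟨a, ha, hza⟩ := qf_hasProd h1 h1' h2 z
  have ha2 : HasProd (fun p : ℤ × ℤ => qf (z / ww ω₁ ω₂ (p.2, p.1))) a := by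
    exact (Equiv.prodComm ℤ ℤ).hasProd_iff.2 ha
  have hmul : ∀ n : ℤ, Multipliable (fun m : ℤ => qf (z / ww ω₁ ω₂ (m, n))) := by
    intro n
    have inj : Function.Injective (fun m : ℤ => (m, n)) := fun a b h => by simpa using h
    have e1 := multipliable_one_add_of_summable ((ef_summable h1 h1' h2 z).comp_injective inj)
    have e2 := multipliable_one_add_of_summable ((ef_summable h1 h1' h2 (-z)).comp_injective inj)
    refine (e1.mul e2).congr (fun m => ?_)
    rw [← ef_mul_neg, ← neg_div]
    ring
  have hrow : ∀ n : ℤ, HasProd (fun m : ℤ => qf (z / ww ω₁ ω₂ (m, n))) (rowv τ ξ n) := by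
    intro n
    refine row_hasProd_aux (hmul n) ?_
    simp_rw [z_div_ww h1' z]
    unfold rowv
    by_cases hn : n = 0
    · subst hn
      simp only [if_true]
      exact row0_tendsto τ ξ hξ0
    · simp only [hn, if_false]
      exact row_tendsto τ hn ξ
  have ht : Tendsto (fun M : ℕ => ∏ n ∈ Finset.Icc (-(M:ℤ)) M, rowv τ ξ n) atTop (𝓝 a) :=
    (ha2.prod_fiberwise hrow).comp Finset.tendsto_Icc_neg
  simp_rw [rowv_prod τ ξ hξ0] at ht
  have he : Tendsto (fun M : ℕ => Complex.exp (-(ξ ^ 2 * ∑ n ∈ Finset.Icc (-(M:ℤ)) M, EisensteinSeries.e2Summand n τ))) atTop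
      (𝓝 (Complex.exp (-(ξ ^ 2 * G0)))) :=
    (Complex.continuous_exp.tendsto _).comp ((hG.const_mul _).neg)
  have := (ht.mul he).const_mul ((Real.pi * ξ) ^ 2)
  have e : (Real.pi / ω₁) ^ 2 * (wSigma ω₁ ω₂ z ^ 2 * Complex.exp (-(G0 / ω₁ ^ 2 * z ^ 2))) =
     (Real.pi * ξ) ^ 2 * (a * Complex.exp (-(ξ ^ 2 * G0))) := by
    rw [← hza, hξ, show G0 / ω₁ ^ 2 * z ^ 2 = (z / ω₁) ^ 2 * G0 by ring]
    ring
  rw [e]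
  refine this.congr (fun M => ?_)
  rw [Complex.exp_neg]
  have := Complex.exp_ne_zero (ξ ^ 2 * ∑ n ∈ Finset.Icc (-(M:ℤ)) M, EisensteinSeries.e2Summand n τ)
  rw [mul_assoc, mul_inv_cancel₀ this]
  field_simp
  rfl

noncomputable def SS (ω₁ ω₂ G z : ℂ) : ℂ := wSigma ω₁ ω₂ z ^ 2 * Complex.exp (-(G * z ^ 2))

lemma SS_per (h1 : ω₁.im = 0) (h1' : 0 < ω₁.re) (h2 : 0 < ω₂.im) : ∃ G : ℂ,
    (∀ z, SS ω₁ ω₂ G (z + ω₁) = SS ω₁ ω₂ G z) ∧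
    (∀ z, SS ω₁ ω₂ G (z + ω₂) * Complex.exp (2 * Real.pi * Complex.I * (ω₂ + 2 * z) / ω₁) = SS ω₁ ω₂ G z) := by
  obtain ⟨G, hG⟩ := TM_lim h1 h1' h2
  have hω := om_ne h1'
  have hpi : (Real.pi : ℂ) ≠ 0 := by exact_mod_cast Real.pi_ne_zero
  have hpo : (Real.pi / ω₁ : ℂ) ^ 2 ≠ 0 := pow_ne_zero _ (div_ne_zero hpi hω)
  refine ⟨G, fun z => ?_, fun z => ?_⟩
  · have a1 := hG (z + ω₁)
    have a2 := hG z
    rw [add_div, div_self hω] at a1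
    simp_rw [TM_one] at a1
    exact mul_left_cancel₀ hpo (tendsto_nhds_unique a1 a2)
  · have a1 := hG (z + ω₂)
    have a2 := hG z
    rw [add_div] at a1
    set τ := ω₂ / ω₁ with hτ
    set ξ := z / ω₁ with hξ
    have l1 := (sn_lim (τ := τ) (tau_im h1 h1' h2) (-ξ)).pow 2
    have l2 := (sn_lim (τ := τ) (tau_im h1 h1' h2) (τ + ξ)).pow 2
    have m1 := a1.mul l1
    have m2 := a2.mul l2
    have key : ∀ M : ℕ, TM τ M (ξ + τ) ^ 2 * (sn (M * τ + -ξ) * Complex.exp (Complex.I * Real.pi * (M * τ + -ξ))) ^ 2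
       * Complex.exp (2 * Real.pi * Complex.I * (ω₂ + 2 * z) / ω₁) = TM τ M ξ ^ 2 * (sn (M * τ + (τ + ξ)) * Complex.exp (Complex.I * Real.pi * (M * τ + (τ + ξ)))) ^ 2 := by
      intro M
      have h := TM_tau τ M ξ
      have hx : Complex.exp (Complex.I * Real.pi * (M * τ + -ξ)) ^ 2 * Complex.exp (2 * Real.pi * Complex.I * (ω₂ + 2 * z) / ω₁) =
        Complex.exp (Complex.I * Real.pi * (M * τ + (τ + ξ))) ^ 2 := by
        rw [← Complex.exp_nat_mul, ← Complex.exp_nat_mul, ← Complex.exp_add]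
        congr 1
        rw [hτ, hξ]
        push_cast
        field_simp
        ring
      rw [mul_pow, mul_pow, ← hx, show (M:ℂ) * τ + -ξ = M * τ - ξ by ring, show (M:ℂ) * τ + (τ + ξ) = (M + 1) * τ + ξ by ring]
      have h' : (TM τ M (ξ + τ) * sn (M * τ - ξ)) ^ 2 = (- TM τ M ξ * sn ((M + 1) * τ + ξ)) ^ 2 := by rw [h]
      linear_combination (Complex.exp (Complex.I * Real.pi * (M * τ - ξ)) ^ 2 * Complex.exp (2 * Real.pi * Complex.I * (ω₂ + 2 * z) / ω₁)) * h'
    have m3 := m1.mul_const (Complex.exp (2 * Real.pi * Complex.I * (ω₂ + 2 * z) / ω₁))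
    have := tendsto_nhds_unique (m3.congr key) m2
    unfold SS
    have hI : (Complex.I / 2) ^ 2 ≠ 0 := by simp
    refine mul_left_cancel₀ hpo (mul_right_cancel₀ hI ?_)
    linear_combination this

end

end

section
open MeasureTheory Filter Topology

section
variable {ω₁ ω₂ : ℂ}

lemma bconst_eq (h1 : ω₁.im = 0) (h1' : 0 < ω₁.re) (h2 : 0 < ω₂.im) {G : ℂ}
    (hG : ∀ z, SS ω₁ ω₂ G (z + ω₁) = SS ω₁ ω₂ G z) : bconst ω₁ ω₂ = 1 - G / 2 := by
  have hω := om_ne h1'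
  have hs0 : wSigma ω₁ ω₂ (ω₁ / 2) ≠ 0 := by
    apply wSigma_ne h1 h1' h2
    rintro ⟨m, n⟩ h
    unfold ww at h
    simp only at h
    have hi := congrArg Complex.im h
    simp [h1] at hi
    have hn : n = 0 := by
      rcases hi with h | h
      · exact h
      · exact absurd h h2.ne'
    subst hn
    have : (1:ℂ) = 2 * m := by
      have : (ω₁) * 1 = ω₁ * (2 * m) := by linear_combination 2 * h
      exact mul_left_cancel₀ hω this
    have : (1:ℤ) = 2 * m := by exact_mod_cast this
    omega
  have hd := ((wSigma_diff h1 h1' h2) (ω₁ / 2)).hasDerivAt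
  have hS : HasDerivAt (SS ω₁ ω₂ G) ((2 * wSigma ω₁ ω₂ (ω₁ / 2) * deriv (wSigma ω₁ ω₂) (ω₁ / 2)) * Complex.exp (-(G * (ω₁ / 2) ^ 2))
      + wSigma ω₁ ω₂ (ω₁ / 2) ^ 2 * (Complex.exp (-(G * (ω₁ / 2) ^ 2)) * (-(G * (2 * (ω₁ / 2)))))) (ω₁ / 2) := by
    have a := hd.pow 2
    have b := (((hasDerivAt_pow 2 (ω₁ / 2)).const_mul G).neg).cexp
    have := a.mul b
    refine this.congr_deriv ?_
    simp
  set D := ((2 * wSigma ω₁ ω₂ (ω₁ / 2) * deriv (wSigma ω₁ ω₂) (ω₁ / 2)) * Complex.exp (-(G * (ω₁ / 2) ^ 2))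
      + wSigma ω₁ ω₂ (ω₁ / 2) ^ 2 * (Complex.exp (-(G * (ω₁ / 2) ^ 2)) * (-(G * (2 * (ω₁ / 2)))))) with hD
  have hsym : ∀ z, SS ω₁ ω₂ G (ω₁ - z) = SS ω₁ ω₂ G z := by
    intro z
    have e := hG (-z)
    rw [show -z + ω₁ = ω₁ - z by ring] at e
    rw [e]
    unfold SS
    rw [wSigma_neg]; simp
  have hS2 : HasDerivAt (fun z => SS ω₁ ω₂ G (ω₁ - z)) (-D) (ω₁ / 2) := by
    have h3 : HasDerivAt (SS ω₁ ω₂ G) D (ω₁ - ω₁ / 2) := by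
      rw [show ω₁ - ω₁ / 2 = ω₁ / 2 by ring]; exact hS
    exact h3.comp_const_sub ω₁ (ω₁ / 2)
  simp_rw [hsym] at hS2
  have hDD := hS.unique hS2
  have hD0 : D = 0 := by linear_combination hDD / 2
  have he := Complex.exp_ne_zero (-(G * (ω₁ / 2) ^ 2))
  have : deriv (wSigma ω₁ ω₂) (ω₁ / 2) = G * ω₁ / 2 * wSigma ω₁ ω₂ (ω₁ / 2) := by
    have h4 : (2 * wSigma ω₁ ω₂ (ω₁ / 2) * Complex.exp (-(G * (ω₁ / 2) ^ 2))) * deriv (wSigma ω₁ ω₂) (ω₁ / 2) =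
      (2 * wSigma ω₁ ω₂ (ω₁ / 2) * Complex.exp (-(G * (ω₁ / 2) ^ 2))) * (G * ω₁ / 2 * wSigma ω₁ ω₂ (ω₁ / 2)) := by
      linear_combination hD0
    exact mul_left_cancel₀ (mul_ne_zero (mul_ne_zero two_ne_zero hs0) he) h4
  unfold bconst lambda1 wZeta
  rw [this]
  field_simp

noncomputable def gg (ω₁ ω₂ : ℂ) (z : ℂ) : ℝ := ‖sigmaStar ω₁ ω₂ z‖ * Real.exp (-‖z‖ ^ 2)

lemma gg_nonneg (z : ℂ) : 0 ≤ gg ω₁ ω₂ z := by unfold gg; positivity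

lemma gg_sq {G : ℂ} (hb : bconst ω₁ ω₂ = 1 - G / 2) (z : ℂ) :
    gg ω₁ ω₂ z ^ 2 = Real.exp (-4 * z.im ^ 2) * ‖SS ω₁ ω₂ G z‖ := by
  have e : sigmaStar ω₁ ω₂ z ^ 2 = Complex.exp (2 * z ^ 2) * SS ω₁ ω₂ G z := by
    unfold sigmaStar SS
    rw [hb, mul_pow, ← Complex.exp_nat_mul,
      show Complex.exp (2 * z ^ 2) * (wSigma ω₁ ω₂ z ^ 2 * Complex.exp (-(G * z ^ 2))) =
        (Complex.exp (2 * z ^ 2) * Complex.exp (-(G * z ^ 2))) * wSigma ω₁ ω₂ z ^ 2 by ring, ← Complex.exp_add]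
    congr 2
    push_cast
    ring
  unfold gg
  rw [mul_pow, ← norm_pow, e, norm_mul, Complex.norm_exp, ← Real.exp_nat_mul,
    show ∀ a b c : ℝ, a * b * c = (a * c) * b by intros; ring, ← Real.exp_add]
  congr 2
  rw [← Complex.normSq_eq_norm_sq, Complex.normSq_apply]
  simp [pow_two]
  ring

lemma gg_per (h1 : ω₁.im = 0) (h1' : 0 < ω₁.re) (h2 : 0 < ω₂.im)
    (harea : ω₁.re * ω₂.im = Real.pi / 2) :
    (∀ z, gg ω₁ ω₂ (z + ω₁) = gg ω₁ ω₂ z) ∧ (∀ z, gg ω₁ ω₂ (z + ω₂) = gg ω₁ ω₂ z) := by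
  obtain ⟨G, hG1, hG2⟩ := SS_per h1 h1' h2
  have hb := bconst_eq h1 h1' h2 hG1
  refine ⟨fun z => ?_, fun z => ?_⟩
  · rw [← sq_eq_sq₀ (gg_nonneg _) (gg_nonneg _), gg_sq hb, gg_sq hb, hG1]
    simp [h1]
  · rw [← sq_eq_sq₀ (gg_nonneg _) (gg_nonneg _), gg_sq hb, gg_sq hb, ← hG2 z, norm_mul, Complex.norm_exp]
    have hre : (2 * Real.pi * Complex.I * (ω₂ + 2 * z) / ω₁).re = -4 * ω₂.im * (ω₂.im + 2 * z.im) := by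
      have : ω₁ = (ω₁.re : ℂ) := by apply Complex.ext <;> simp [h1]
      rw [this, Complex.div_ofReal_re]
      simp
      field_simp
      linear_combination (4 * ω₂.im + 8 * z.im) * harea
    rw [hre, mul_comm ‖_‖, ← mul_assoc, ← Real.exp_add]
    congr 2
    simp; ring

lemma gg_lat (h1 : ω₁.im = 0) (h1' : 0 < ω₁.re) (h2 : 0 < ω₂.im)
    (harea : ω₁.re * ω₂.im = Real.pi / 2) (z : ℂ) {w : ℂ} (hw : w ∈ latticeSet ω₁ ω₂) :
    gg ω₁ ω₂ (z + w) = gg ω₁ ω₂ z := by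
  obtain ⟨p1, p2⟩ := gg_per h1 h1' h2 harea
  obtain ⟨m, n, rfl⟩ := hw
  have q1 : Function.Periodic (gg ω₁ ω₂) ω₁ := p1
  have q2 : Function.Periodic (gg ω₁ ω₂) ω₂ := p2
  have := q2.int_mul n (z + m * ω₁)
  rw [← add_assoc, this]
  exact q1.int_mul m z

end

end

section
open MeasureTheory Filter Topology

lemma locInt_log_norm : LocallyIntegrable (fun z : ℂ => Real.log ‖z‖) := by
  have hm : Measurable (fun z : ℂ => Real.log ‖z‖) := Real.measurable_log.comp measurable_norm
  rw [locallyIntegrable_iff]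
  intro K hK
  obtain ⟨R, hR0, hR⟩ := hK.isBounded.exists_pos_norm_lt
  refine IntegrableOn.mono_set (t := Metric.ball 0 R) ?_ (fun x hx => mem_ball_zero_iff.mpr (hR x hx))
  refine integrableOn_ball_of_norm_le_rpow (C := 1 + R ^ 2) (α := 1) ?_ ?_ ?_ hm.aestronglyMeasurable
  · simp
  · simp
  · refine (ae_restrict_iff' measurableSet_ball).2 (Eventually.of_forall fun x hx => ?_)
    rw [mem_ball_zero_iff] at hx
    rcases eq_or_ne x 0 with rfl | h0
    · simp
    have hp : 0 < ‖x‖ := norm_pos_iff.2 h0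
    rw [Real.rpow_neg_one, ← div_eq_mul_inv, le_div_iff₀ hp, Real.norm_eq_abs]
    have l1 : Real.log ‖x‖ ≤ ‖x‖ := (Real.log_le_sub_one_of_pos hp).trans (by linarith)
    have l2 : -Real.log ‖x‖ ≤ ‖x‖⁻¹ := by
      rw [← Real.log_inv]
      exact (Real.log_le_sub_one_of_pos (by positivity)).trans (by linarith)
    have : |Real.log ‖x‖| ≤ ‖x‖ + ‖x‖⁻¹ := by
      rw [abs_le]
      have : 0 < ‖x‖⁻¹ := by positivity
      constructor <;> linarith
    calc _ ≤ (‖x‖ + ‖x‖⁻¹) * ‖x‖ := by gcongr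
      _ = ‖x‖ ^ 2 + 1 := by field_simp
      _ ≤ R ^ 2 + 1 := by gcongr
      _ = _ := by ring

lemma locInt_log {f : ℂ → ℂ} (hf : Differentiable ℂ f) (hz : volume {z | f z = 0} = 0) :
    LocallyIntegrable (fun z => Real.log ‖f z‖) := by
  intro a
  have han : AnalyticAt ℂ f a := hf.analyticAt a
  have hne : ¬ ∀ᶠ z in 𝓝 a, f z = 0 := by
    intro h
    obtain ⟨ε, hε, hb⟩ := Metric.eventually_nhds_iff_ball.1 h
    have : volume (Metric.ball a ε) ≤ volume {z | f z = 0} := measure_mono hb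
    rw [hz] at this
    exact (Metric.measure_ball_pos volume a hε).not_ge this
  obtain ⟨n, g, hg, hg0, he⟩ := han.exists_eventuallyEq_pow_smul_nonzero_iff.2 hne
  have h3 := (he.and (hg.eventually_analyticAt.and (hg.continuousAt.eventually_ne hg0)))
  obtain ⟨ε, hε, hb⟩ := Metric.nhds_basis_closedBall.eventually_iff.1 h3
  refine ⟨Metric.closedBall a ε, Metric.closedBall_mem_nhds a hε, ?_⟩
  have i1 : IntegrableOn (fun z => Real.log ‖z - a‖) (Metric.closedBall a ε) := by
    have := (locallyIntegrable_iff.1 locInt_log_norm) _ (isCompact_closedBall (0:ℂ) ε)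
    have hp := measurePreserving_sub_right (volume : Measure ℂ) a
    have h4 := (hp.integrableOn_comp_preimage (MeasurableEquiv.subRight a).measurableEmbedding).2 this
    have e : (fun x => x - a) ⁻¹' Metric.closedBall 0 ε = Metric.closedBall a ε := by
      ext x; simp [dist_eq_norm]
    rw [e] at h4
    exact h4
  have i2 : IntegrableOn (fun z => Real.log ‖g z‖) (Metric.closedBall a ε) := by
    refine ContinuousOn.integrableOn_compact (isCompact_closedBall a ε) ?_
    refine ContinuousOn.log ?_ ?_
    · exact fun z hz => ((hb hz).2.1.continuousAt.norm).continuousWithinAt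
    · exact fun z hz => norm_ne_zero_iff.2 (hb hz).2.2
  refine ((i1.const_mul (n:ℝ)).add i2).congr ?_
  have hae : ∀ᵐ z ∂(volume.restrict (Metric.closedBall a ε)), z ≠ a := by
    refine ae_restrict_of_ae ?_
    simp [ae_iff]
  filter_upwards [hae, ae_restrict_mem measurableSet_closedBall] with z hza hz
  have hb' := hb hz
  rw [hb'.1, norm_smul, norm_pow, Real.log_mul, Real.log_pow]
  · simp
  · exact pow_ne_zero _ (norm_ne_zero_iff.2 (sub_ne_zero.2 hza))
  · exact norm_ne_zero_iff.2 hb'.2.2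

lemma jensen_le {f : ℂ → ℂ} (hf : Differentiable ℂ f) (h0 : f 0 ≠ 0) :
    Real.log ‖f 0‖ ≤ Real.circleAverage (fun z => Real.log ‖f z‖) 0 1 := by
  have han : AnalyticOnNhd ℂ f (Metric.closedBall 0 |(1:ℝ)|) := fun z _ => hf.analyticAt z
  rw [han.circleAverage_log_norm one_ne_zero h0]
  have : 0 ≤ ∑ᶠ u, (MeromorphicOn.divisor f (Metric.closedBall 0 |(1:ℝ)|) u : ℝ) * Real.log (1 * ‖0 - u‖⁻¹) := by
    refine finsum_nonneg (fun u => ?_)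
    by_cases hu : u ∈ Metric.closedBall (0:ℂ) |(1:ℝ)|
    · refine mul_nonneg (mod_cast (MeromorphicOn.AnalyticOnNhd.divisor_nonneg han) u) ?_
      simp at hu
      simp
      exact Real.log_nonpos (norm_nonneg _) hu
    · rw [Function.locallyFinsuppWithin.apply_eq_zero_of_notMem _ hu]; simp
  linarith

lemma submean {h : ℂ → ℂ} (hh : Differentiable ℂ h) (h0 : h 0 ≠ 0) {r : ℝ}
    (hi : IntegrableOn (fun z => Real.log ‖h z‖) (Metric.ball 0 r)) :
    volume.real (Metric.ball (0:ℂ) r) * Real.log ‖h 0‖ ≤ ∫ z in Metric.ball 0 r, Real.log ‖h z‖ := by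
  set I := ∫ z in Metric.ball 0 r, Real.log ‖h z‖ with hI
  set F : ℝ → ℂ → ℝ := fun θ w => Real.log ‖h (circleMap 0 1 θ * w)‖ with hF
  have rot : ∀ θ : ℝ, ∀ u : ℂ → ℝ, IntegrableOn u (Metric.ball 0 r) →
      IntegrableOn (fun w => u (circleMap 0 1 θ * w)) (Metric.ball 0 r) ∧
      ∫ w in Metric.ball 0 r, u (circleMap 0 1 θ * w) = ∫ w in Metric.ball 0 r, u w := by
    intro θ u hu
    set L := rotation (Circle.exp θ) with hL
    have hp : MeasurePreserving L volume volume := L.measurePreserving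
    have hLe : ∀ w, L w = circleMap 0 1 θ * w := by
      intro w; simp [hL, rotation_apply, circleMap, Circle.coe_exp]
    have hpre : L ⁻¹' (Metric.ball 0 r) = Metric.ball 0 r := by
      ext w; simp [LinearIsometryEquiv.norm_map]
    have hemb : MeasurableEmbedding L := L.toHomeomorph.measurableEmbedding
    constructor
    · have := (hp.integrableOn_comp_preimage hemb).2 hu
      rw [hpre] at this
      simpa [Function.comp_def, hLe] using this
    · have := hp.setIntegral_preimage_emb hemb u (Metric.ball 0 r)
      rw [hpre] at this
      simpa [hLe] using this
  have hmeas : Measurable (Function.uncurry F) := by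
    refine Real.measurable_log.comp (measurable_norm.comp (hh.continuous.measurable.comp ?_))
    exact ((continuous_circleMap 0 1).comp continuous_fst |>.mul continuous_snd).measurable
  have hprod : Integrable (Function.uncurry F) ((volume.restrict (Set.Ioc 0 (2 * Real.pi))).prod (volume.restrict (Metric.ball 0 r))) := by
    rw [integrable_prod_iff hmeas.aestronglyMeasurable]
    refine ⟨Eventually.of_forall fun θ => (rot θ _ hi).1, ?_⟩
    have : ∀ θ, ∫ y in Metric.ball 0 r, ‖Function.uncurry F (θ, y)‖ = ∫ y in Metric.ball 0 r, ‖Real.log ‖h y‖‖ := by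
      intro θ
      exact (rot θ (fun w => ‖Real.log ‖h w‖‖) hi.norm).2
    simp_rw [this]
    exact integrable_const _
  have hsw := integral_integral_swap hprod
  have hL : ∫ θ in Set.Ioc 0 (2 * Real.pi), ∫ w in Metric.ball 0 r, F θ w = 2 * Real.pi * I := by
    have : ∀ θ, ∫ w in Metric.ball 0 r, F θ w = I := fun θ => (rot θ _ hi).2
    simp_rw [this]
    rw [integral_const]
    simp [Real.pi_pos.le]
  rw [hL] at hsw
  have hin : ∀ w, 2 * Real.pi * Real.log ‖h 0‖ ≤ ∫ θ in Set.Ioc 0 (2 * Real.pi), F θ w := by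
    intro w
    have hd : Differentiable ℂ (fun u => h (u * w)) := hh.comp (by fun_prop)
    have := jensen_le hd (by simpa using h0)
    rw [Real.circleAverage_def, intervalIntegral.integral_of_le (by positivity), smul_eq_mul, zero_mul] at this
    rw [le_inv_mul_iff₀ (by positivity)] at this
    exact this
  have hge : ∫ w in Metric.ball (0:ℂ) r, 2 * Real.pi * Real.log ‖h 0‖ ≤ ∫ w in Metric.ball 0 r, ∫ θ in Set.Ioc 0 (2 * Real.pi), F θ w := by
    refine integral_mono ?_ hprod.integral_prod_right hin
    exact integrableOn_const (by finiteness)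
  rw [← hsw, integral_const, smul_eq_mul, measureReal_restrict_apply_univ] at hge
  have : 0 < 2 * Real.pi := by positivity
  nlinarith

end

section
open MeasureTheory Filter Topology

/-! lattices and fundamental domains -/

def dt (a b : ℂ) : ℝ := a.re * b.im - a.im * b.re

noncomputable def cx (a b z : ℂ) : ℝ := (z.re * b.im - z.im * b.re) / dt a b
noncomputable def cy (a b z : ℂ) : ℝ := (a.re * z.im - a.im * z.re) / dt a b

section
variable {a b : ℂ}

lemma cx_mul (h : dt a b ≠ 0) (z : ℂ) : cx a b z * (a.re * b.im - a.im * b.re) = z.re * b.im - z.im * b.re :=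
  div_mul_cancel₀ _ h

lemma cy_mul (h : dt a b ≠ 0) (z : ℂ) : cy a b z * (a.re * b.im - a.im * b.re) = a.re * z.im - a.im * z.re :=
  div_mul_cancel₀ _ h

lemma cxy_eq (h : dt a b ≠ 0) (z : ℂ) : (cx a b z : ℂ) * a + (cy a b z : ℂ) * b = z := by
  have h' : a.re * b.im - a.im * b.re ≠ 0 := h
  have hx := cx_mul h z
  have hy := cy_mul h z
  apply Complex.ext
  · rw [Complex.add_re, Complex.re_ofReal_mul, Complex.re_ofReal_mul]
    refine mul_right_cancel₀ h' ?_
    linear_combination a.re * hx + b.re * hy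
  · rw [Complex.add_im, Complex.im_ofReal_mul, Complex.im_ofReal_mul]
    refine mul_right_cancel₀ h' ?_
    linear_combination a.im * hx + b.im * hy

lemma cx_lin (h : dt a b ≠ 0) (x y : ℝ) : cx a b (x * a + y * b) = x := by
  have h' : a.re * b.im - a.im * b.re ≠ 0 := h
  refine mul_right_cancel₀ h' ?_
  rw [cx_mul h]
  simp; ring

lemma cy_lin (h : dt a b ≠ 0) (x y : ℝ) : cy a b (x * a + y * b) = y := by
  have h' : a.re * b.im - a.im * b.re ≠ 0 := h
  refine mul_right_cancel₀ h' ?_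
  rw [cy_mul h]
  simp; ring

lemma cx_add (z w : ℂ) : cx a b (z + w) = cx a b z + cx a b w := by
  simp [cx]; ring
lemma cy_add (z w : ℂ) : cy a b (z + w) = cy a b z + cy a b w := by
  simp [cy]; ring

lemma mem_fund (h : dt a b ≠ 0) (z : ℂ) :
    z ∈ fundDomain a b ↔ cx a b z ∈ Set.Ico (0:ℝ) 1 ∧ cy a b z ∈ Set.Ico (0:ℝ) 1 := by
  constructor
  · rintro ⟨⟨x, y⟩, ⟨hx, hy⟩, rfl⟩
    simp only
    rw [cx_lin h, cy_lin h]
    exact ⟨hx, hy⟩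
  · rintro ⟨hx, hy⟩
    exact ⟨(cx a b z, cy a b z), ⟨hx, hy⟩, cxy_eq h z⟩

lemma cx_cont : Continuous (cx a b) := by unfold cx; fun_prop
lemma cy_cont : Continuous (cy a b) := by unfold cy; fun_prop

lemma meas_fund (h : dt a b ≠ 0) : MeasurableSet (fundDomain a b) := by
  have : fundDomain a b = cx a b ⁻¹' Set.Ico 0 1 ∩ cy a b ⁻¹' Set.Ico 0 1 := by
    ext z; exact mem_fund h z
  rw [this]
  exact (measurableSet_Ico.preimage cx_cont.measurable).inter (measurableSet_Ico.preimage cy_cont.measurable)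

lemma vol_fund (h : 0 < dt a b) : volume (fundDomain a b) = ENNReal.ofReal (dt a b) := by
  set T : ℂ →ₗ[ℝ] ℂ := Complex.reLm.smulRight a + Complex.imLm.smulRight b with hT
  have hTa : ∀ z, T z = (z.re : ℂ) * a + (z.im : ℂ) * b := by intro z; simp [hT]
  have hdet : LinearMap.det T = dt a b := by
    rw [← LinearMap.det_toMatrix Complex.basisOneI, Matrix.det_fin_two]
    simp [LinearMap.toMatrix_apply, hTa, dt]
    ring
  have himg : fundDomain a b = T '' (Set.Ico 0 1 ×ℂ Set.Ico 0 1) := by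
    ext z
    constructor
    · rintro ⟨⟨x, y⟩, ⟨hx, hy⟩, rfl⟩
      exact ⟨⟨x, y⟩, ⟨hx, hy⟩, by simp [hTa]⟩
    · rintro ⟨w, ⟨hx, hy⟩, rfl⟩
      exact ⟨(w.re, w.im), ⟨hx, hy⟩, by simp [hTa]⟩
  rw [himg, Measure.addHaar_image_linearMap, hdet, abs_of_pos h]
  have : volume (Set.Ico (0:ℝ) 1 ×ℂ Set.Ico (0:ℝ) 1) = 1 := by
    have := Complex.volume_preserving_equiv_real_prod.measure_preimage
      ((measurableSet_Ico (a := (0:ℝ)) (b := 1)).prod (measurableSet_Ico (a := (0:ℝ)) (b := 1))).nullMeasurableSet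
    have e : (Complex.measurableEquivRealProd ⁻¹' (Set.Ico (0:ℝ) 1 ×ˢ Set.Ico (0:ℝ) 1)) = Set.Ico (0:ℝ) 1 ×ℂ Set.Ico (0:ℝ) 1 := rfl
    rw [e] at this
    rw [this, Measure.volume_eq_prod, Measure.prod_prod]
    simp
  rw [this, mul_one]

def WLat (a b : ℂ) : AddSubgroup ℂ where
  carrier := latticeSet a b
  zero_mem' := ⟨0, 0, by simp⟩
  add_mem' := by
    rintro _ _ ⟨m, n, rfl⟩ ⟨m', n', rfl⟩
    exact ⟨m + m', n + n', by push_cast; ring⟩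
  neg_mem' := by
    rintro _ ⟨m, n, rfl⟩
    exact ⟨-m, -n, by push_cast; ring⟩

lemma mem_WLat {z : ℂ} : z ∈ WLat a b ↔ z ∈ latticeSet a b := Iff.rfl

instance : Countable (WLat a b) := by
  have : (latticeSet a b).Countable := by
    have e : latticeSet a b = Set.range (fun p : ℤ × ℤ => (p.1 : ℂ) * a + (p.2 : ℂ) * b) := by
      ext z; constructor
      · rintro ⟨m, n, rfl⟩; exact ⟨(m, n), rfl⟩
      · rintro ⟨⟨m, n⟩, rfl⟩; exact ⟨m, n, rfl⟩
    rw [e]; exact Set.countable_range _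
  exact this.to_subtype

lemma ico_uniq {x : ℝ} {m : ℤ} (h : x + m ∈ Set.Ico (0:ℝ) 1) : m = -⌊x⌋ := by
  have : ⌊x⌋ = -m := by
    rw [Int.floor_eq_iff]
    push_cast
    constructor <;> linarith [h.1, h.2]
  omega

lemma fund_exists (h : dt a b ≠ 0) (z : ℂ) : ∃ w ∈ WLat a b, z + w ∈ fundDomain a b := by
  refine ⟨((-⌊cx a b z⌋ : ℤ) : ℂ) * a + ((-⌊cy a b z⌋ : ℤ) : ℂ) * b, ⟨_, _, rfl⟩, ?_⟩
  rw [mem_fund h, cx_add, cy_add]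
  have e1 := cx_lin h (((-⌊cx a b z⌋ : ℤ) : ℝ)) (((-⌊cy a b z⌋ : ℤ) : ℝ))
  have e2 := cy_lin h (((-⌊cx a b z⌋ : ℤ) : ℝ)) (((-⌊cy a b z⌋ : ℤ) : ℝ))
  rw [Complex.ofReal_intCast, Complex.ofReal_intCast] at e1 e2
  rw [e1, e2]
  push_cast
  refine ⟨⟨?_, ?_⟩, ⟨?_, ?_⟩⟩ <;> first | linarith [Int.floor_le (cx a b z), Int.floor_le (cy a b z)] | linarith [Int.lt_floor_add_one (cx a b z), Int.lt_floor_add_one (cy a b z)]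

lemma fund_unique (h : dt a b ≠ 0) (z : ℂ) {w w' : ℂ} (hw : w ∈ WLat a b) (hw' : w' ∈ WLat a b)
    (hm : z + w ∈ fundDomain a b) (hm' : z + w' ∈ fundDomain a b) : w = w' := by
  obtain ⟨m, n, rfl⟩ := hw
  obtain ⟨m', n', rfl⟩ := hw'
  rw [mem_fund h, cx_add, cy_add] at hm hm'
  have e1 := cx_lin h (m:ℝ) (n:ℝ)
  have e2 := cy_lin h (m:ℝ) (n:ℝ)
  have e1' := cx_lin h (m':ℝ) (n':ℝ)
  have e2' := cy_lin h (m':ℝ) (n':ℝ)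
  rw [Complex.ofReal_intCast, Complex.ofReal_intCast] at e1 e2 e1' e2'
  rw [e1, e2] at hm
  rw [e1', e2'] at hm'
  rw [ico_uniq hm.1, ico_uniq hm.2, ico_uniq hm'.1, ico_uniq hm'.2]

/-- criterion for fundamental domain -/
lemma isFund {s : Set ℂ} (hs : MeasurableSet s) (hex : ∀ z, ∃ w ∈ WLat a b, z + w ∈ s)
    (hun : ∀ z, ∀ w ∈ WLat a b, ∀ w' ∈ WLat a b, z + w ∈ s → z + w' ∈ s → w = w') :
    IsAddFundamentalDomain (WLat a b) s volume := by
  refine IsAddFundamentalDomain.mk' hs.nullMeasurableSet (fun z => ?_)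
  obtain ⟨w, hw, hm⟩ := hex z
  refine ⟨⟨w, hw⟩, ?_, ?_⟩
  · show w + z ∈ s
    rwa [add_comm]
  · rintro ⟨w', hw'⟩ hm'
    have hm2 : w' + z ∈ s := hm'
    rw [add_comm] at hm2
    exact Subtype.ext (hun z w' hw' w hw hm2 hm)

lemma int_eq {s t : Set ℂ} (hs : IsAddFundamentalDomain (WLat a b) s volume)
    (ht : IsAddFundamentalDomain (WLat a b) t volume) {u : ℂ → ℝ}
    (hu : ∀ z, ∀ w ∈ WLat a b, u (z + w) = u z) : ∫ z in s, u z = ∫ z in t, u z := by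
  refine hs.setIntegral_eq ht (fun g x => ?_)
  have := hu x g.1 g.2
  rw [add_comm] at this
  exact this

lemma isFund_fund (h : dt a b ≠ 0) : IsAddFundamentalDomain (WLat a b) (fundDomain a b) volume :=
  isFund (meas_fund h) (fund_exists h) (fun z _ hw _ hw' => fund_unique h z hw hw')

lemma int_shift (h : dt a b ≠ 0) {u : ℂ → ℝ} (hu : ∀ z, ∀ w ∈ WLat a b, u (z + w) = u z) (c : ℂ) :
    ∫ z in fundDomain a b, u (z - c) = ∫ z in fundDomain a b, u z := by
  symm
  · have hp := measurePreserving_sub_right (volume : Measure ℂ) c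
    have hemb := (MeasurableEquiv.subRight c).measurableEmbedding
    have := hp.setIntegral_preimage_emb hemb u ((fun z => z + c) ⁻¹' fundDomain a b)
    have e : (fun x => x - c) ⁻¹' ((fun z => z + c) ⁻¹' fundDomain a b) = fundDomain a b := by
      ext x; simp
    rw [e] at this
    rw [this]
    refine int_eq (isFund_fund h) (isFund ((meas_fund h).preimage (measurable_add_const c)) ?_ ?_) hu
    · intro z
      obtain ⟨w, hw, hm⟩ := fund_exists h (z + c)
      refine ⟨w, hw, ?_⟩
      show z + w + c ∈ fundDomain a b
      rwa [add_right_comm]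
    · intro z w hw w' hw' hm hm'
      refine fund_unique h (z + c) hw hw' ?_ ?_
      · rw [add_right_comm]; exact hm
      · rw [add_right_comm]; exact hm'

lemma fund_norm {z : ℂ} (hz : z ∈ fundDomain a b) : ‖z‖ ≤ ‖a‖ + ‖b‖ := by
  obtain ⟨⟨x, y⟩, ⟨hx, hy⟩, rfl⟩ := hz
  refine (norm_add_le _ _).trans ?_
  rw [norm_mul, norm_mul, Complex.norm_real, Complex.norm_real]
  have h1 : ‖x‖ ≤ 1 := by rw [Real.norm_of_nonneg hx.1]; exact hx.2.le
  have h2 : ‖y‖ ≤ 1 := by rw [Real.norm_of_nonneg hy.1]; exact hy.2.le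
  have := norm_nonneg a
  have := norm_nonneg b
  simp only
  nlinarith

end

lemma locInt_shift {u : ℂ → ℝ} (hu : LocallyIntegrable u) (c : ℂ) :
    LocallyIntegrable (fun z => u (z - c)) := by
  rw [locallyIntegrable_iff] at hu ⊢
  intro K hK
  have hp := measurePreserving_sub_right (volume : Measure ℂ) c
  have hemb := (MeasurableEquiv.subRight c).measurableEmbedding
  have hc : IsCompact ((fun z => z + c) ⁻¹' K) := (Homeomorph.addRight c).isCompact_preimage.2 hK
  have := (hp.integrableOn_comp_preimage hemb).2 (hu _ hc)
  have e : (fun x => x - c) ⁻¹' ((fun z => z + c) ⁻¹' K) = K := by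
    ext x; simp
  rw [e] at this
  exact this

lemma locInt_bdd {u : ℂ → ℝ} (hu : LocallyIntegrable u) {s : Set ℂ} (hs : Bornology.IsBounded s) :
    IntegrableOn u s := by
  have := (locallyIntegrable_iff.1 hu) _ hs.isCompact_closure
  exact this.mono_set subset_closure

end

section
open MeasureTheory Filter Topology

lemma super_int {a b g1 g2 : ℂ} (h : dt a b ≠ 0) (hg : dt g1 g2 ≠ 0) (hle : WLat a b ≤ WLat g1 g2)
    {N : ℕ} (ζ : Fin N → ℂ) (hζ : ∀ j, ζ j ∈ WLat g1 g2)
    (hun : ∀ x ∈ WLat g1 g2, ∃! j : Fin N, x - ζ j ∈ WLat a b) {u : ℂ → ℝ}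
    (hu : ∀ z, ∀ w ∈ WLat a b, u (z + w) = u z) (hi : LocallyIntegrable u) (z0 : ℂ) :
    ∫ z in (fun z => z - z0) ⁻¹' fundDomain g1 g2, ∑ j, u (z - ζ j) = ∫ z in fundDomain a b, u z := by
  set P := fundDomain g1 g2 with hP
  set Q : Fin N → Set ℂ := fun j => (fun w => w + ζ j - z0) ⁻¹' P with hQ
  have hPm : MeasurableSet P := meas_fund hg
  have hQm : ∀ j, MeasurableSet (Q j) := fun j => hPm.preimage (by fun_prop)
  have hPb : Bornology.IsBounded P := by
    rw [isBounded_iff_forall_norm_le]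
    exact ⟨_, fun z hz => fund_norm hz⟩
  have hP0b : Bornology.IsBounded ((fun z => z - z0) ⁻¹' P) := by
    rw [isBounded_iff_forall_norm_le]
    refine ⟨‖g1‖ + ‖g2‖ + ‖z0‖, fun z hz => ?_⟩
    have := fund_norm (hz : z - z0 ∈ P)
    have h2 := norm_add_le (z - z0) z0
    simp at h2
    linarith
  have hdis : Pairwise (Function.onFun Disjoint Q) := by
    intro i j hij
    refine Set.disjoint_left.2 (fun w hw hw' => hij ?_)
    have hw1 : w + ζ i - z0 ∈ P := hw
    have hw2 : w + ζ j - z0 ∈ P := hw'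
    have e : ζ i = ζ j := by
      refine fund_unique hg (w - z0) (hζ i) (hζ j) ?_ ?_
      · rw [show w - z0 + ζ i = w + ζ i - z0 by ring]; exact hw1
      · rw [show w - z0 + ζ j = w + ζ j - z0 by ring]; exact hw2
    refine (hun (ζ i) (hζ i)).unique ?_ ?_
    · simp
    · rw [e]; simp
  have hF : IsAddFundamentalDomain (WLat a b) (⋃ j, Q j) volume := by
    refine isFund (MeasurableSet.iUnion hQm) ?_ ?_
    · intro z
      obtain ⟨l, hl, hm⟩ := fund_exists hg (z - z0)
      obtain ⟨j, hj, -⟩ := hun l hl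
      refine ⟨l - ζ j, hj, Set.mem_iUnion.2 ⟨j, ?_⟩⟩
      show z + (l - ζ j) + ζ j - z0 ∈ P
      rw [show z + (l - ζ j) + ζ j - z0 = z - z0 + l by ring]
      exact hm
    · intro z w hw w' hw' hm hm'
      obtain ⟨i, hi⟩ := Set.mem_iUnion.1 hm
      obtain ⟨j, hj⟩ := Set.mem_iUnion.1 hm'
      have hi' : z + w + ζ i - z0 ∈ P := hi
      have hj' : z + w' + ζ j - z0 ∈ P := hj
      have e : w + ζ i = w' + ζ j := by
        refine fund_unique hg (z - z0) (add_mem (hle hw) (hζ i)) (add_mem (hle hw') (hζ j)) ?_ ?_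
        · rw [show z - z0 + (w + ζ i) = z + w + ζ i - z0 by ring]; exact hi'
        · rw [show z - z0 + (w' + ζ j) = z + w' + ζ j - z0 by ring]; exact hj'
      have : i = j := by
        refine (hun (w + ζ i) (add_mem (hle hw) (hζ i))).unique ?_ ?_
        · simpa using hw
        · rw [e]; simpa using hw'
      subst this
      exact add_right_cancel e
  rw [int_eq (isFund_fund h) hF hu, integral_iUnion_fintype hQm hdis, integral_finsetSum]
  · refine Finset.sum_congr rfl (fun j _ => ?_)
    have hp := measurePreserving_sub_right (volume : Measure ℂ) (ζ j)
    have hemb := (MeasurableEquiv.subRight (ζ j)).measurableEmbedding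
    have := hp.setIntegral_preimage_emb hemb u (Q j)
    have e : (fun x => x - ζ j) ⁻¹' (Q j) = (fun z => z - z0) ⁻¹' P := by
      ext x; simp [hQ]
    rw [e] at this
    exact this
  · exact fun j _ => locInt_bdd (locInt_shift hi (ζ j)) hP0b
  · intro j
    refine locInt_bdd hi ?_
    rw [isBounded_iff_forall_norm_le]
    refine ⟨‖g1‖ + ‖g2‖ + ‖ζ j - z0‖, fun z hz => ?_⟩
    have := fund_norm (hz : z + ζ j - z0 ∈ P)
    have h2 := norm_sub_le (z + ζ j - z0) (ζ j - z0)
    rw [show z + ζ j - z0 - (ζ j - z0) = z by ring] at h2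
    linarith

section
variable {ω₁ ω₂ : ℂ}

lemma dt_om (h1 : ω₁.im = 0) (harea : ω₁.re * ω₂.im = Real.pi / 2) : dt ω₁ ω₂ = Real.pi / 2 := by
  simp [dt, h1, harea]

lemma sigmaStar_diff (h1 : ω₁.im = 0) (h1' : 0 < ω₁.re) (h2 : 0 < ω₂.im) :
    Differentiable ℂ (sigmaStar ω₁ ω₂) := by
  have := wSigma_diff h1 h1' h2
  unfold sigmaStar
  fun_prop

lemma sigmaStar_null (h1 : ω₁.im = 0) (h1' : 0 < ω₁.re) (h2 : 0 < ω₂.im) (c : ℂ) :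
    volume {z | sigmaStar ω₁ ω₂ (z - c) = 0} = 0 := by
  refine Set.Countable.measure_zero ?_ _
  refine (Set.countable_range (fun p : ℤ × ℤ => ww ω₁ ω₂ p + c)).mono ?_
  intro z hz
  by_contra hc
  have hz' : sigmaStar ω₁ ω₂ (z - c) = 0 := hz
  unfold sigmaStar at hz'
  refine (mul_ne_zero (Complex.exp_ne_zero _) (wSigma_ne h1 h1' h2 (fun p hp => hc ⟨p, ?_⟩))) hz'
  simp [← hp]

noncomputable def vv (ω₁ ω₂ : ℂ) (z : ℂ) : ℝ := Real.log (gg ω₁ ω₂ z) - Aconst ω₁ ω₂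

lemma vv_eq {z : ℂ} (hz : sigmaStar ω₁ ω₂ z ≠ 0) :
    vv ω₁ ω₂ z = Real.log ‖sigmaStar ω₁ ω₂ z‖ - ‖z‖ ^ 2 - Aconst ω₁ ω₂ := by
  unfold vv gg
  rw [Real.log_mul (norm_ne_zero_iff.2 hz) (Real.exp_ne_zero _), Real.log_exp]
  ring

lemma vv_ae (h1 : ω₁.im = 0) (h1' : 0 < ω₁.re) (h2 : 0 < ω₂.im) (c : ℂ) :
    ∀ᵐ z : ℂ, sigmaStar ω₁ ω₂ (z - c) ≠ 0 := by
  rw [ae_iff]; simpa using sigmaStar_null h1 h1' h2 c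

lemma locInt_ls (h1 : ω₁.im = 0) (h1' : 0 < ω₁.re) (h2 : 0 < ω₂.im) :
    LocallyIntegrable (fun z => Real.log ‖sigmaStar ω₁ ω₂ z‖ - ‖z‖ ^ 2) := by
  refine (locInt_log (sigmaStar_diff h1 h1' h2) ?_).sub ?_
  · simpa using sigmaStar_null h1 h1' h2 0
  · exact (by fun_prop : Continuous fun z : ℂ => ‖z‖ ^ 2).locallyIntegrable

lemma vv_ae' (h1 : ω₁.im = 0) (h1' : 0 < ω₁.re) (h2 : 0 < ω₂.im) :
    vv ω₁ ω₂ =ᵐ[volume] fun z => Real.log ‖sigmaStar ω₁ ω₂ z‖ - ‖z‖ ^ 2 - Aconst ω₁ ω₂ := by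
  filter_upwards [vv_ae h1 h1' h2 0] with z hz
  rw [sub_zero] at hz
  exact vv_eq hz

lemma vv_locInt (h1 : ω₁.im = 0) (h1' : 0 < ω₁.re) (h2 : 0 < ω₂.im) :
    LocallyIntegrable (vv ω₁ ω₂) := by
  have := (locInt_ls h1 h1' h2).sub (locallyIntegrable_const (Aconst ω₁ ω₂))
  rw [locallyIntegrable_iff] at this ⊢
  intro K hK
  refine (this K hK).congr (ae_restrict_of_ae ?_)
  exact (vv_ae' h1 h1' h2).symm

lemma vv_per (h1 : ω₁.im = 0) (h1' : 0 < ω₁.re) (h2 : 0 < ω₂.im)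
    (harea : ω₁.re * ω₂.im = Real.pi / 2) (z : ℂ) (w : ℂ) (hw : w ∈ WLat ω₁ ω₂) :
    vv ω₁ ω₂ (z + w) = vv ω₁ ω₂ z := by
  unfold vv
  rw [gg_lat h1 h1' h2 harea z hw]

lemma fund_bdd (a b : ℂ) : Bornology.IsBounded (fundDomain a b) := by
  rw [isBounded_iff_forall_norm_le]
  exact ⟨_, fun z hz => fund_norm hz⟩

lemma volr_fund {a b : ℂ} (h : 0 < dt a b) : volume.real (fundDomain a b) = dt a b := by
  rw [measureReal_def, vol_fund h, ENNReal.toReal_ofReal h.le]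

lemma vv_int (h1 : ω₁.im = 0) (h1' : 0 < ω₁.re) (h2 : 0 < ω₂.im)
    (harea : ω₁.re * ω₂.im = Real.pi / 2) : ∫ z in fundDomain ω₁ ω₂, vv ω₁ ω₂ z = 0 := by
  rw [integral_congr_ae (ae_restrict_of_ae (vv_ae' h1 h1' h2)), integral_sub, integral_const]
  · have hd : 0 < dt ω₁ ω₂ := by rw [dt_om h1 harea]; positivity
    rw [measureReal_restrict_apply_univ, volr_fund hd, dt_om h1 harea, smul_eq_mul]
    unfold Aconst
    have := Real.pi_pos
    field_simp
    ring
  · exact locInt_bdd (locInt_ls h1 h1' h2) (fund_bdd _ _)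
  · exact locInt_bdd (locallyIntegrable_const _) (fund_bdd _ _)

lemma vv_bdd (h1 : ω₁.im = 0) (h1' : 0 < ω₁.re) (h2 : 0 < ω₂.im)
    (harea : ω₁.re * ω₂.im = Real.pi / 2) : ∃ C, ∀ z, vv ω₁ ω₂ z ≤ C := by
  have hc : Continuous (gg ω₁ ω₂) := by
    have := (sigmaStar_diff h1 h1' h2).continuous
    unfold gg; fun_prop
  obtain ⟨B, hB⟩ := ((fund_bdd ω₁ ω₂).isCompact_closure).bddAbove_image hc.continuousOn
  have hd : dt ω₁ ω₂ ≠ 0 := by rw [dt_om h1 harea]; positivity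
  have hB' : ∀ z, gg ω₁ ω₂ z ≤ max B 1 := by
    intro z
    obtain ⟨w, hw, hm⟩ := fund_exists hd z
    rw [← gg_lat h1 h1' h2 harea z hw]
    exact (hB ⟨_, subset_closure hm, rfl⟩).trans (le_max_left _ _)
  refine ⟨Real.log (max B 1) - Aconst ω₁ ω₂, fun z => ?_⟩
  unfold vv
  have : Real.log (gg ω₁ ω₂ z) ≤ Real.log (max B 1) := by
    rcases (gg_nonneg (ω₁ := ω₁) (ω₂ := ω₂) z).eq_or_lt with h | h
    · rw [← h, Real.log_zero]; exact Real.log_nonneg (le_max_right _ _)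
    · exact Real.log_le_log h (hB' z)
  linarith

lemma vv_submean (h1 : ω₁.im = 0) (h1' : 0 < ω₁.re) (h2 : 0 < ω₂.im) {z0 : ℂ}
    (hz0 : sigmaStar ω₁ ω₂ z0 ≠ 0) {r : ℝ} (hr : 0 < r) :
    volume.real (Metric.ball (0:ℂ) r) * vv ω₁ ω₂ z0 ≤
      (∫ z in Metric.ball (0:ℂ) r, vv ω₁ ω₂ (z + z0)) + volume.real (Metric.ball (0:ℂ) r) * r ^ 2 := by
  set h : ℂ → ℂ := fun z => sigmaStar ω₁ ω₂ (z + z0) * Complex.exp (-2 * (starRingEnd ℂ) z0 * z - (‖z0‖ ^ 2 : ℝ)) with hh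
  have hd : Differentiable ℂ h := by
    have := sigmaStar_diff h1 h1' h2
    have h3 : Differentiable ℂ (fun z => sigmaStar ω₁ ω₂ (z + z0)) := this.comp (by fun_prop)
    exact h3.mul (by fun_prop)
  have key : ∀ z, sigmaStar ω₁ ω₂ (z + z0) ≠ 0 → Real.log ‖h z‖ = vv ω₁ ω₂ (z + z0) + Aconst ω₁ ω₂ + ‖z‖ ^ 2 := by
    intro z hz
    rw [vv_eq hz, hh]
    simp only
    rw [norm_mul, Complex.norm_exp, Real.log_mul (norm_ne_zero_iff.2 hz) (Real.exp_ne_zero _), Real.log_exp]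
    simp only [← Complex.normSq_eq_norm_sq, Complex.normSq_apply]
    simp
    ring
  have hae : ∀ᵐ z : ℂ, sigmaStar ω₁ ω₂ (z + z0) ≠ 0 := by
    simpa using vv_ae h1 h1' h2 (-z0)
  have hvi : IntegrableOn (fun z => vv ω₁ ω₂ (z + z0)) (Metric.ball 0 r) := by
    have := locInt_bdd (locInt_shift (vv_locInt h1 h1' h2) (-z0)) (Metric.isBounded_ball (x := (0:ℂ)) (r := r))
    simpa using this
  have hci : ∀ c : ℝ, IntegrableOn (fun _ : ℂ => c) (Metric.ball 0 r) := fun c =>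
    locInt_bdd (locallyIntegrable_const _) Metric.isBounded_ball
  have hsi : IntegrableOn (fun z : ℂ => ‖z‖ ^ 2) (Metric.ball 0 r) :=
    locInt_bdd (by fun_prop : Continuous fun z : ℂ => ‖z‖ ^ 2).locallyIntegrable Metric.isBounded_ball
  have hlog : (fun z => Real.log ‖h z‖) =ᵐ[volume.restrict (Metric.ball 0 r)]
      fun z => vv ω₁ ω₂ (z + z0) + Aconst ω₁ ω₂ + ‖z‖ ^ 2 := by
    refine ae_restrict_of_ae ?_
    filter_upwards [hae] with z hz using key z hz
  have hI : IntegrableOn (fun z => Real.log ‖h z‖) (Metric.ball 0 r) :=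
    ((hvi.add (hci _)).add hsi).congr hlog.symm
  have h0 : h 0 ≠ 0 := mul_ne_zero (by simpa using hz0) (Complex.exp_ne_zero _)
  have hs := submean hd h0 hI
  rw [key 0 (by simpa using hz0), integral_congr_ae hlog] at hs
  have e1 : ∫ z in Metric.ball (0:ℂ) r, (vv ω₁ ω₂ (z + z0) + Aconst ω₁ ω₂ + ‖z‖ ^ 2) ≤
     ∫ z in Metric.ball (0:ℂ) r, (vv ω₁ ω₂ (z + z0) + Aconst ω₁ ω₂ + r ^ 2) := by
    refine setIntegral_mono_on ((hvi.add (hci _)).add hsi) ((hvi.add (hci _)).add (hci _)) measurableSet_ball ?_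
    intro z hz
    have : ‖z‖ ≤ r := (mem_ball_zero_iff.1 hz).le
    gcongr
  have e2 : ∫ z in Metric.ball (0:ℂ) r, (vv ω₁ ω₂ (z + z0) + Aconst ω₁ ω₂ + r ^ 2) =
    (∫ z in Metric.ball (0:ℂ) r, vv ω₁ ω₂ (z + z0)) + volume.real (Metric.ball (0:ℂ) r) * Aconst ω₁ ω₂ + volume.real (Metric.ball (0:ℂ) r) * r ^ 2 := by
    have hva : IntegrableOn (fun z => vv ω₁ ω₂ (z + z0) + Aconst ω₁ ω₂) (Metric.ball 0 r) := hvi.add (hci _)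
    rw [integral_add hva (hci _), integral_add hvi (hci _)]
    simp
  rw [e2] at e1
  simp at hs
  simp only [ne_eq, zero_add, norm_zero] at *
  linarith

end

end

section
open MeasureTheory Filter Topology

lemma sup_step {F : ℂ → ℝ} (hF : LocallyIntegrable F) {G : ℂ → Prop} (hG : ∀ᵐ z : ℂ, G z)
    {M : ℝ} (hM : ∀ z, F z ≤ M) {r q c : ℝ} (hr : 0 < r) (hc : 0 < c) {P : Set ℂ} (hPm : MeasurableSet P)
    (hPB : P ⊆ Metric.ball 0 r)
    (hvol : volume.real P = c * volume.real (Metric.ball (0:ℂ) r))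
    (hsub : ∀ z0, G z0 → volume.real (Metric.ball (0:ℂ) r) * F z0 ≤
      (∫ z in Metric.ball (0:ℂ) r, F (z + z0)) + volume.real (Metric.ball (0:ℂ) r) * q)
    (hint : ∀ z0, ∫ z in P, F (z + z0) = 0) : ∀ z, G z → F z ≤ q / c := by
  set B := Metric.ball (0:ℂ) r
  have hBpos : 0 < volume.real B :=
    ENNReal.toReal_pos (Metric.measure_ball_pos _ _ hr).ne' measure_ball_lt_top.ne
  obtain ⟨zg, hzg⟩ := hG.exists
  set S := sSup (F '' {z | G z}) with hS
  have hbdd : BddAbove (F '' {z | G z}) := ⟨M, by rintro _ ⟨z, -, rfl⟩; exact hM z⟩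
  have hle : ∀ z, G z → F z ≤ S := fun z hz => le_csSup hbdd ⟨z, hz, rfl⟩
  have hFi : ∀ z0, IntegrableOn (fun z => F (z + z0)) B := by
    intro z0
    have := locInt_bdd (locInt_shift hF (-z0)) (Metric.isBounded_ball (x := (0:ℂ)) (r := r))
    simpa using this
  have hGs : ∀ z0, ∀ᵐ z : ℂ, G (z + z0) := fun z0 =>
    (measurePreserving_add_right (volume : Measure ℂ) z0).quasiMeasurePreserving.ae hG
  have hstep : ∀ z0, G z0 → F z0 ≤ q + S * (1 - c) := by
    intro z0 hz0
    have h1 := setIntegral_sdiff (μ := volume) hPm (hFi z0) hPB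
    rw [hint z0, sub_zero] at h1
    have hd : volume.real (B \ P) = volume.real B * (1 - c) := by
      rw [measureReal_sdiff hPB hPm measure_ball_lt_top.ne, hvol]; ring
    have h2 : ∫ z in B \ P, F (z + z0) ≤ ∫ z in B \ P, S := by
      refine integral_mono_ae ((hFi z0).mono_set Set.sdiff_subset) ?_ ?_
      · exact (locInt_bdd (locallyIntegrable_const _) (Metric.isBounded_ball.subset Set.sdiff_subset))
      · refine ae_restrict_of_ae ?_
        filter_upwards [hGs z0] with z hz using hle _ hz
    rw [setIntegral_const, hd, smul_eq_mul] at h2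
    have h3 := hsub z0 hz0
    rw [← h1] at h3
    have : volume.real B * F z0 ≤ volume.real B * (q + S * (1 - c)) := by nlinarith
    exact le_of_mul_le_mul_left this hBpos
  have hSle : S ≤ q + S * (1 - c) :=
    csSup_le ⟨_, zg, hzg, rfl⟩ (by rintro _ ⟨z, hz, rfl⟩; exact hstep z hz)
  intro z hz
  refine (hle z hz).trans ?_
  rw [le_div_iff₀ hc]; linarith

lemma F_bound {ω₁ ω₂ : ℂ} (h1 : ω₁.im = 0) (h1' : 0 < ω₁.re) (h2 : 0 < ω₂.im)
    (harea : ω₁.re * ω₂.im = Real.pi / 2) {N : ℕ} (hN : 1 ≤ N) {R : ℝ} (hR : R = 3 * ‖ω₁‖ + 2 * ‖ω₂‖ + 1)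
    {s k : ℕ} (hsk : s ^ 2 + k = N) (hk : k ≤ 2 * s)
    {g1 g2 : ℂ} (hg1 : g1 = ((s : ℂ) * ω₁ + ω₂) / (N : ℂ)) (hg2 : g2 = (-(k : ℂ) * ω₁ + (s : ℂ) * ω₂) / (N : ℂ))
    (ζ : Fin N → ℂ) (hζ : ∀ j, ζ j ∈ latticeSet g1 g2)
    (hun : ∀ x ∈ latticeSet g1 g2, ∃! j : Fin N, x - ζ j ∈ latticeSet ω₁ ω₂) :
    ∀ z, (∀ j, sigmaStar ω₁ ω₂ (z - ζ j) ≠ 0) → ∑ j, vv ω₁ ω₂ (z - ζ j) ≤ 2 * R ^ 4 := by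
  have hNr : (1:ℝ) ≤ N := by exact_mod_cast hN
  have hN0 : (N:ℝ) ≠ 0 := by positivity
  have hNc : (N:ℂ) ≠ 0 := by exact_mod_cast hN0
  have hskr : (s:ℝ) ^ 2 + k = N := by exact_mod_cast hsk
  have hskc : (s:ℂ) ^ 2 + k = N := by exact_mod_cast hsk
  have hkr : (k:ℝ) ≤ 2 * s := by exact_mod_cast hk
  have hR1 : 1 ≤ R := by rw [hR]; have := norm_nonneg ω₁; have := norm_nonneg ω₂; linarith
  have hdom := dt_om h1 harea
  have hd : dt ω₁ ω₂ ≠ 0 := by rw [hdom]; positivity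
  have hdg : dt g1 g2 = Real.pi / 2 / N := by
    have e1 : g1 = (((1 / N : ℝ)) : ℂ) * ((s : ℝ) * ω₁ + ω₂) := by
      rw [hg1]; push_cast; ring
    have e2 : g2 = (((1 / N : ℝ)) : ℂ) * (-(k : ℝ) * ω₁ + (s:ℝ) * ω₂) := by
      rw [hg2]; push_cast; ring
    rw [← hdom, e1, e2]
    unfold dt
    simp only [Complex.re_ofReal_mul, Complex.im_ofReal_mul, Complex.add_re, Complex.add_im, neg_mul, Complex.neg_re, Complex.neg_im]
    field_simp
    rw [← hskr]
    ring
  have hdgp : 0 < dt g1 g2 := by rw [hdg]; positivity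
  have hle : WLat ω₁ ω₂ ≤ WLat g1 g2 := by
    rintro _ ⟨m, n, rfl⟩
    refine ⟨m * s + n * k, -m + n * s, ?_⟩
    rw [hg1, hg2]
    field_simp
    push_cast
    rw [← hskc]
    ring
  set q := Real.sqrt N with hq
  have hqq : q ^ 2 = N := Real.sq_sqrt (by positivity)
  have hq1 : 1 ≤ q := by rw [hq]; exact Real.one_le_sqrt.2 hNr
  have hsq : (s:ℝ) ≤ q := by
    refine Real.le_sqrt_of_sq_le ?_
    have : (0:ℝ) ≤ k := by positivity
    linarith
  set r := R / q with hr
  have hrp : 0 < r := by positivity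
  have hgr : ‖g1‖ + ‖g2‖ < r := by
    have n1 : ‖g1‖ ≤ (s * ‖ω₁‖ + ‖ω₂‖) / N := by
      rw [hg1, norm_div, Complex.norm_natCast]
      gcongr
      refine (norm_add_le _ _).trans ?_
      simp
    have n2 : ‖g2‖ ≤ (k * ‖ω₁‖ + s * ‖ω₂‖) / N := by
      rw [hg2, norm_div, Complex.norm_natCast]
      gcongr
      refine (norm_add_le _ _).trans ?_
      simp
    have n3 : (s * ‖ω₁‖ + ‖ω₂‖) / N + (k * ‖ω₁‖ + s * ‖ω₂‖) / N < r := by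
      rw [← add_div, hr, ← hqq, div_lt_div_iff₀ (by positivity) (by positivity)]
      have a1 := norm_nonneg ω₁
      have a2 := norm_nonneg ω₂
      have : s * ‖ω₁‖ + ‖ω₂‖ + (k * ‖ω₁‖ + s * ‖ω₂‖) < R * q := by
        rw [hR]
        have b1 := mul_le_mul_of_nonneg_right hsq a1
        have b2 := mul_le_mul_of_nonneg_right hsq a2
        have b3 := mul_le_mul_of_nonneg_right hkr a1
        have b4 := mul_le_mul_of_nonneg_right hq1 a2
        nlinarith
      nlinarith
    linarith
  have hvB : volume.real (Metric.ball (0:ℂ) r) = Real.pi * r ^ 2 := by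
    rw [measureReal_def, Complex.volume_ball]
    simp [ENNReal.toReal_ofReal hrp.le]
    ring
  have hloc := vv_locInt h1 h1' h2
  have hFl : LocallyIntegrable (fun z => ∑ j, vv ω₁ ω₂ (z - ζ j)) := by
    rw [locallyIntegrable_iff]
    intro K hK
    exact integrable_finsetSum _ fun j _ => (locallyIntegrable_iff.1 (locInt_shift hloc (ζ j))) K hK
  obtain ⟨C, hC⟩ := vv_bdd h1 h1' h2 harea
  have key := sup_step (F := fun z => ∑ j, vv ω₁ ω₂ (z - ζ j))
    (G := fun z => ∀ j, sigmaStar ω₁ ω₂ (z - ζ j) ≠ 0) hFl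
    (ae_all_iff.2 fun j => vv_ae h1 h1' h2 (ζ j)) (M := ∑ j : Fin N, C)
    (fun z => Finset.sum_le_sum fun j _ => hC _) (r := r) (q := N * r ^ 2) (c := 1 / (2 * R ^ 2)) hrp (by positivity)
    (P := fundDomain g1 g2) (meas_fund hdgp.ne')
    (fun z hz => by rw [mem_ball_zero_iff]; exact (fund_norm hz).trans_lt hgr)
    (by
      rw [volr_fund hdgp, hdg, hvB, hr, div_pow, hqq]
      field_simp)
    (by
      intro z0 hz0
      have hI : ∀ j, IntegrableOn (fun z => vv ω₁ ω₂ (z + z0 - ζ j)) (Metric.ball 0 r) := by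
        intro j
        have := locInt_bdd (locInt_shift hloc (ζ j - z0)) (Metric.isBounded_ball (x := (0:ℂ)) (r := r))
        refine this.congr_fun (fun z _ => ?_) measurableSet_ball
        simp only
        congr 1; ring
      rw [integral_finsetSum _ (fun j _ => hI j), Finset.mul_sum]
      have : ∀ j, volume.real (Metric.ball (0:ℂ) r) * vv ω₁ ω₂ (z0 - ζ j) ≤
          (∫ z in Metric.ball (0:ℂ) r, vv ω₁ ω₂ (z + z0 - ζ j)) + volume.real (Metric.ball (0:ℂ) r) * r ^ 2 := by
        intro j
        have := vv_submean h1 h1' h2 (hz0 j) hrp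
        simpa only [add_sub_assoc] using this
      refine (Finset.sum_le_sum fun j _ => this j).trans ?_
      rw [Finset.sum_add_distrib]
      simp
      apply le_of_eq
      ring)
    (by
      intro z0
      have hs := super_int hd hdgp.ne' hle ζ hζ hun (vv_per h1 h1' h2 harea) hloc z0
      rw [vv_int h1 h1' h2 harea] at hs
      have hp := measurePreserving_sub_right (volume : Measure ℂ) z0
      have hemb := (MeasurableEquiv.subRight z0).measurableEmbedding
      have := hp.setIntegral_preimage_emb hemb (fun z => ∑ j, vv ω₁ ω₂ (z + z0 - ζ j)) (fundDomain g1 g2)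
      rw [← this, ← hs]
      simp only [sub_add_cancel])
  intro z hz
  refine (key z hz).trans (le_of_eq ?_)
  rw [hr, div_pow, hqq]
  field_simp


end

/-- uniform bounds for the exponential of the sum of the torus
Green function over a complete set of representatives of `Λ_N/Λ`. -/
theorem torus_lattice_points_bounds (ω₁ ω₂ : ℂ)
    (h1 : ω₁.im = 0) (h1' : 0 < ω₁.re) (h2 : 0 < ω₂.im)
    (harea : ω₁.re * ω₂.im = Real.pi / 2) :
    ∃ K : ℝ, 1 < K ∧
      ∀ N : ℕ, 1 ≤ N →
      ∀ ζ : Fin N → ℂ,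
        (∀ j, ζ j ∈ latticeSet (((Nat.sqrt N : ℂ) * ω₁ + ω₂) / (N : ℂ))
          ((-(((N - Nat.sqrt N ^ 2 : ℕ) : ℂ)) * ω₁ + (Nat.sqrt N : ℂ) * ω₂) / (N : ℂ))) →
        (∀ x ∈ latticeSet (((Nat.sqrt N : ℂ) * ω₁ + ω₂) / (N : ℂ))
            ((-(((N - Nat.sqrt N ^ 2 : ℕ) : ℂ)) * ω₁ + (Nat.sqrt N : ℂ) * ω₂) / (N : ℂ)),
          ∃! j : Fin N, x - ζ j ∈ latticeSet ω₁ ω₂) →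
      ∀ β : ℝ, 0 ≤ β →
        1 ≤ 2 / Real.pi *
            ∫ z in fundDomain ω₁ ω₂, Real.exp (β * ∑ j, Utorus ω₁ ω₂ z (ζ j)) ∧
        2 / Real.pi *
            ∫ z in fundDomain ω₁ ω₂, Real.exp (β * ∑ j, Utorus ω₁ ω₂ z (ζ j)) ≤
          K ^ β := by
  set R : ℝ := 3 * ‖ω₁‖ + 2 * ‖ω₂‖ + 1 with hR
  have hR1 : 1 ≤ R := by rw [hR]; have := norm_nonneg ω₁; have := norm_nonneg ω₂; linarith
  refine ⟨Real.exp (2 * R ^ 4), Real.one_lt_exp_iff.2 (by positivity), ?_⟩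
  intro N hN ζ hζ hun β hβ
  have hsk : Nat.sqrt N ^ 2 + (N - Nat.sqrt N ^ 2) = N := by
    have := Nat.sqrt_le' N
    omega
  have hk : N - Nat.sqrt N ^ 2 ≤ 2 * Nat.sqrt N := by
    have := Nat.sqrt_le_add N
    rw [pow_two]; omega
  have hFb := F_bound h1 h1' h2 harea hN hR hsk hk rfl rfl ζ hζ hun
  have hgood : ∀ᵐ z : ℂ, ∀ j, sigmaStar ω₁ ω₂ (z - ζ j) ≠ 0 :=
    ae_all_iff.2 fun j => vv_ae h1 h1' h2 (ζ j)
  set F : ℂ → ℝ := fun z => ∑ j, vv ω₁ ω₂ (z - ζ j) with hF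
  have hcongr : ∫ z in fundDomain ω₁ ω₂, Real.exp (β * ∑ j, Utorus ω₁ ω₂ z (ζ j)) =
      ∫ z in fundDomain ω₁ ω₂, Real.exp (β * F z) := by
    refine integral_congr_ae (ae_restrict_of_ae ?_)
    filter_upwards [hgood] with z hz
    simp only [hF, Utorus]
    congr 2
    exact Finset.sum_congr rfl fun j _ => (vv_eq (hz j)).symm
  rw [hcongr]
  have hdom := dt_om h1 harea
  have hdp : 0 < dt ω₁ ω₂ := by rw [hdom]; positivity
  have hvol : volume.real (fundDomain ω₁ ω₂) = Real.pi / 2 := by rw [volr_fund hdp, hdom]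
  have hloc := vv_locInt h1 h1' h2
  have hIj : ∀ j, IntegrableOn (fun z => vv ω₁ ω₂ (z - ζ j)) (fundDomain ω₁ ω₂) := fun j =>
    locInt_bdd (locInt_shift hloc (ζ j)) (fund_bdd _ _)
  have hFi : IntegrableOn F (fundDomain ω₁ ω₂) := integrable_finsetSum _ fun j _ => hIj j
  have hF0 : ∫ z in fundDomain ω₁ ω₂, F z = 0 := by
    rw [hF, integral_finsetSum _ (fun j _ => hIj j)]
    refine Finset.sum_eq_zero fun j _ => ?_
    rw [int_shift hdp.ne' (vv_per h1 h1' h2 harea), vv_int h1 h1' h2 harea]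
  have hci : ∀ c : ℝ, IntegrableOn (fun _ : ℂ => c) (fundDomain ω₁ ω₂) := fun c =>
    locInt_bdd (locallyIntegrable_const _) (fund_bdd _ _)
  have hup : ∀ᵐ z ∂(volume.restrict (fundDomain ω₁ ω₂)), Real.exp (β * F z) ≤ Real.exp (2 * R ^ 4) ^ β := by
    refine ae_restrict_of_ae ?_
    filter_upwards [hgood] with z hz
    rw [← Real.exp_mul, Real.exp_le_exp, mul_comm]
    exact mul_le_mul_of_nonneg_right (hFb z hz) hβ
  have hEi : IntegrableOn (fun z => Real.exp (β * F z)) (fundDomain ω₁ ω₂) := by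
    refine (hci (Real.exp (2 * R ^ 4) ^ β)).mono' ?_ ?_
    · exact Real.continuous_exp.comp_aestronglyMeasurable (hFi.aestronglyMeasurable.const_mul β)
    · filter_upwards [hup] with z hz
      rwa [Real.norm_of_nonneg (Real.exp_pos _).le]
  have hpi := Real.pi_pos
  constructor
  · have : ∫ z in fundDomain ω₁ ω₂, (β * F z + 1) ≤ ∫ z in fundDomain ω₁ ω₂, Real.exp (β * F z) :=
      integral_mono ((hFi.const_mul β).add (hci 1)) hEi fun z => Real.add_one_le_exp _
    rw [integral_add (hFi.const_mul β) (hci 1), integral_const_mul, hF0, setIntegral_const, hvol] at this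
    have h3 := mul_le_mul_of_nonneg_left this (by positivity : 0 ≤ 2 / Real.pi)
    refine le_trans (le_of_eq ?_) h3
    simp
  · have := integral_mono_ae hEi (hci (Real.exp (2 * R ^ 4) ^ β)) hup
    rw [setIntegral_const, hvol] at this
    have h3 := mul_le_mul_of_nonneg_left this (by positivity : 0 ≤ 2 / Real.pi)
    refine h3.trans (le_of_eq ?_)
    simp
    field_simp
end
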